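/- arXiv:1305.5440 — 3 statements merged into one kernel-verified Lean document; each statement's English description precedes it below -/
import Mathlib

section
/- For every finite set J with |J| ≥ 2 and every ε > 0, there exist c > 0 and η > 0 such that the following holds. Let Z, Z' be finite additive abelian groups and let φ_j : Z → Z' (j ∈ J) be group homomorphisms such that the set {φ_i(d) − φ_j(d) : i, j ∈ J, d ∈ Z} generates Z' as an abelian group. Let ν : Z' → ℝ_{≥0} be such that the induced weighted hypergraph (ν_e)_{e∈H} satisfies the H-linear forms condition within η. Suppose f_j : Z' → ℝ_{≥0} (j ∈ J) satisfy 0 ≤ f_j(x) ≤ ν(x) for all x ∈ Z' and j ∈ J, and E[∏_{j∈J} f_j(a + φ_j(d)) | a ∈ Z', d ∈ Z] ≤ c. Then there exist sets A_j ⊆ Z' (j ∈ J) such that ∏_{j∈J} 1_{A_j}(a + φ_j(d)) = 0 for all a ∈ Z' and d ∈ Z, and E[f_j(x)·1_{Z'∖A_j}(x) | x ∈ Z'] ≤ ε for all j ∈ J. -/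
/-!
The theorem is a removal lemma for simplices, relative to a pseudorandom weighted hypergraph, read
through the parametrisation `x ↦ (a, d) = (∑ φ_i (x_i), -∑ x_i)` of `Z' × Z` by `Z ^ J` (`RAR.par`).
In these coordinates `a + φ_j d = ∑_i (φ_i - φ_j) (x_i)` does not involve `x_j` (`RAR.form`), so
`f_j (a + φ_j d)` is a weight on the edge `J ∖ {j}`; the generation hypothesis makes the
parametrisation onto, hence measure preserving.

The relative removal lemma `RAR.rel_removal` is reduced to bounded functions by transference. The
linear forms condition and Gowers-Cauchy-Schwarz (`RAR.gcs`) make each `ν_e - 1` small in cut norm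
(`RAR.lin_cut`), so each `f_e ≤ ν_e` is close in cut norm to a function with values in `[0, 1]`
(`RAR.dense_model`, proved by an energy increment with a Huber function in place of the square).
Relative counting (`RAR.rel_count`) shows that the models have about as few simplices as the
original functions: the factors are made bounded one at a time, by passing to the average over one
coordinate of the product of the other factors and using Cauchy-Schwarz.

Removal for bounded functions (`RAR.dense_removal`) follows the hypergraph regularity method: every
system of colourings of tuples can be regularised at all levels (`RAR.regularisable`), colour
patterns that are regular and not sparse are counted correctly (`RAR.count_step`), and the removed
cells are the irregular or sparse ones. The sets removed are described by boundedly many colours of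
lower order tuples, so the cut norm bound transfers their small mass from the models back to the
original functions.

Finally, edge sets `E_j` have to be turned into sets `A_j ⊆ Z'` (`RAR.exists_sets`). The set `A_j`
consists of the `y` over whose fibre the complement of `E_j` has density less than `1 / |J|`.
A union bound over the fibre of `(a, d)` puts some `a + φ_j d` outside `A_j`, and Markov's
inequality bounds the mass of `f_j` outside `A_j` by `|J|` times its mass outside `E_j`.
-/

open Finset

/-- The average (expectation with respect to the uniform measure) of `f` over `α`. -/
noncomputable def avg {α : Type*} [Fintype α] (f : α → ℝ) : ℝ :=
  (∑ x, f x) / (Fintype.card α)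

variable {J : Type} [Fintype J] [DecidableEq J] {V : J → Type}

/-- Restriction (projection) of a full tuple `x ∈ V_J` to the coordinates in `e`. -/
def restr (e : Finset J) (x : (j : J) → V j) : (i : ↥e) → V i := fun i => x i.1

/-- Projection of a tuple indexed by `e` to the coordinates in the face `e.erase j`. -/
def faceProj {e : Finset J} (j : J) (x : (i : ↥e) → V i) :
    (i : ↥(e.erase j)) → V i :=
  fun i => x ⟨i.1, Finset.mem_of_mem_erase i.2⟩

/-- The product `∏_{f ∈ ∂e} 1_{B_f}(x_f)` of the indicators of the sets `B_f ⊆ V_f`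
over the faces `f = e.erase j`, `j ∈ e`, of `e`. -/
noncomputable def faceInd (e : Finset J)
    (B : (j : J) → Set ((i : ↥(e.erase j)) → V i)) (x : (i : ↥e) → V i) : ℝ :=
  ∏ j ∈ e, Set.indicator (B j) (fun _ => (1 : ℝ)) (faceProj j x)

/-- `(g, g')` is an `ε`-discrepancy pair on the edge `e`: for all choices of
`B_f ⊆ V_f` (`f ∈ ∂e`), `|E[(g(x_e) - g'(x_e)) ∏_{f ∈ ∂e} 1_{B_f}(x_f)]| ≤ ε`. -/
noncomputable def EdgeDiscrepancy [∀ j, Fintype (V j)] (e : Finset J)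
    (g g' : ((i : ↥e) → V i) → ℝ) (ε : ℝ) : Prop :=
  ∀ B : (j : J) → Set ((i : ↥(e.erase j)) → V i),
    |avg (fun x : (i : ↥e) → V i => (g x - g' x) * faceInd e B x)| ≤ ε

/-- `g` is upper `η`-regular on the edge `e`: for all choices of `B_f ⊆ V_f`
(`f ∈ ∂e`), `E[(g(x_e) - 1) ∏_{f ∈ ∂e} 1_{B_f}(x_f)] ≤ η`. -/
noncomputable def EdgeUpperRegular [∀ j, Fintype (V j)] (e : Finset J)
    (g : ((i : ↥e) → V i) → ℝ) (η : ℝ) : Prop :=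
  ∀ B : (j : J) → Set ((i : ↥(e.erase j)) → V i),
    avg (fun x : (i : ↥e) → V i => (g x - 1) * faceInd e B x) ≤ η

/-- `E ⊆ V_e` is the set of `r`-cliques of some `(r-1)`-uniform hypergraph: there are
sets `B_f ⊆ V_f` for the faces `f ∈ ∂e` with `1_E(x_e) = ∏_{f ∈ ∂e} 1_{B_f}(x_f)`. -/
def IsCliqueSet (e : Finset J) (E : Set ((i : ↥e) → V i)) : Prop :=
  ∃ B : (j : J) → Set ((i : ↥(e.erase j)) → V i),
    ∀ x, x ∈ E ↔ ∀ j ∈ e, faceProj j x ∈ B j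

/-- `E ⊆ V_e` has complexity at most `T`: it can be partitioned into `T` (possibly
empty) clique sets. -/
def ComplexityLE (e : Finset J) (E : Set ((i : ↥e) → V i)) (T : ℕ) : Prop :=
  ∃ P : Fin T → Set ((i : ↥e) → V i),
    (∀ i, IsCliqueSet e (P i)) ∧
    (∀ i₁ i₂, i₁ ≠ i₂ → P i₁ ∩ P i₂ = ∅) ∧
    (⋃ i, P i) = E

/-- The weighted hypergraph `ν` satisfies the `H`-linear forms condition within `η`:
for every choice of exponents `n (e, ω) ∈ {0,1}` (`e ∈ H`, `ω ∈ {0,1}^e`),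
`|E[∏_{e ∈ H} ∏_{ω ∈ {0,1}^e} ν_e(x_e^{(ω)})^{n_{e,ω}} | x⁰, x¹ ∈ V_J] - 1| ≤ η`. -/
noncomputable def HLinearForms [∀ j, Fintype (V j)] (H : Finset (Finset J))
    (ν : (e : Finset J) → ((i : ↥e) → V i) → ℝ) (η : ℝ) : Prop :=
  ∀ n : (e : Finset J) → (↥e → Bool) → Bool,
    |avg (fun x : ((j : J) → V j) × ((j : J) → V j) =>
      ∏ e ∈ H, ∏ ω : ↥e → Bool,
        if n e ω then ν e (fun i => if ω i then x.2 i.1 else x.1 i.1) else 1) - 1| ≤ η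

/-- The weighted hypergraph on the hypergraph system `(J, (Z)_{j ∈ J}, |J| - 1, H)`
induced by `ν : Z' → ℝ` and homomorphisms `φ_j : Z →+ Z'`: on an edge
`e = J ∖ {j}` it is given by `ν_e(x) = ν(∑_{i ∈ e} (φ_i(x_i) - φ_j(x_i)))`. -/
noncomputable def inducedNu {J : Type} [Fintype J] [DecidableEq J] {Z Z' : Type}
    [AddCommGroup Z] [AddCommGroup Z'] (φ : J → Z →+ Z') (ν : Z' → ℝ) :
    (e : Finset J) → ((i : ↥e) → Z) → ℝ :=
  fun e x =>
    ν ((∑ i : ↥e, φ i.1 (x i)) - ∑ j ∈ Finset.univ \ e, φ j (∑ i : ↥e, x i))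

set_option linter.unusedSectionVars false

namespace RAR

open scoped BigOperators

/-! ### Averages, indicators and conditional expectations -/

/-- The indicator of a proposition, as a real number. -/
noncomputable def ind (p : Prop) : ℝ := by
  classical exact if p then 1 else 0

lemma ind_true {p : Prop} (h : p) : ind p = 1 := by simp [ind, h]

lemma ind_false {p : Prop} (h : ¬ p) : ind p = 0 := by simp [ind, h]

lemma ind_nonneg (p : Prop) : 0 ≤ ind p := by unfold ind; split_ifs <;> norm_num

lemma ind_le_one (p : Prop) : ind p ≤ 1 := by unfold ind; split_ifs <;> norm_num

lemma ind_and (p q : Prop) : ind (p ∧ q) = ind p * ind q := by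
  unfold ind; by_cases hp : p <;> by_cases hq : q <;> simp [hp, hq]

lemma ind_mono {p q : Prop} (h : p → q) : ind p ≤ ind q := by
  by_cases hp : p
  · rw [ind_true hp, ind_true (h hp)]
  · rw [ind_false hp]; exact ind_nonneg q

lemma ind_congr {p q : Prop} (h : p ↔ q) : ind p = ind q := by rw [propext h]

lemma ind_not (p : Prop) : ind (¬ p) = 1 - ind p := by
  unfold ind; by_cases hp : p <;> simp [hp]

lemma prod_ind {ι : Type*} (S : Finset ι) (P : ι → Prop) :
    ∏ t ∈ S, ind (P t) = ind (∀ t ∈ S, P t) := by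
  classical
  induction S using Finset.induction_on with
  | empty => simp [ind]
  | insert a S ha ih =>
    rw [Finset.prod_insert ha, ih, ← ind_and]
    exact ind_congr (by simp)

lemma ind_exists_le {ι : Type*} (S : Finset ι) (P : ι → Prop) :
    ind (∃ t ∈ S, P t) ≤ ∑ t ∈ S, ind (P t) := by
  by_cases h : ∃ t ∈ S, P t
  · obtain ⟨t, ht, hp⟩ := h
    rw [ind_true ⟨t, ht, hp⟩, ← ind_true hp]
    exact Finset.single_le_sum (f := fun t => ind (P t)) (fun _ _ => ind_nonneg _) ht
  · rw [ind_false h]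
    exact Finset.sum_nonneg fun _ _ => ind_nonneg _

lemma avg_eq {X : Type*} [Fintype X] (f : X → ℝ) : avg f = 𝔼 x, f x := by
  rw [avg, Fintype.expect_eq_sum_div_card]

section general

variable {X Y γ : Type*} [Fintype X] [Fintype Y]

lemma ex_mono {f g : X → ℝ} (h : ∀ x, f x ≤ g x) : 𝔼 x, f x ≤ 𝔼 x, g x :=
  Finset.expect_le_expect fun x _ => h x

lemma ex_nonneg {f : X → ℝ} (h : ∀ x, 0 ≤ f x) : 0 ≤ 𝔼 x, f x :=
  Finset.expect_nonneg fun x _ => h x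

lemma ex_congr {f g : X → ℝ} (h : ∀ x, f x = g x) : 𝔼 x, f x = 𝔼 x, g x :=
  Finset.expect_congr rfl fun x _ => h x

lemma ex_le_one [Nonempty X] {f : X → ℝ} (h : ∀ x, f x ≤ 1) : 𝔼 x, f x ≤ 1 :=
  Finset.expect_le Finset.univ_nonempty fun x _ => h x

lemma ex_add (f g : X → ℝ) : 𝔼 x, (f x + g x) = 𝔼 x, f x + 𝔼 x, g x :=
  Finset.expect_add_distrib _ _ _

lemma ex_sub (f g : X → ℝ) : 𝔼 x, (f x - g x) = 𝔼 x, f x - 𝔼 x, g x :=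
  Finset.expect_sub_distrib _ _ _

lemma ex_mul_left (a : ℝ) (f : X → ℝ) : 𝔼 x, a * f x = a * 𝔼 x, f x :=
  (Finset.mul_expect _ _ _).symm

lemma ex_mul_right (a : ℝ) (f : X → ℝ) : 𝔼 x, f x * a = (𝔼 x, f x) * a :=
  (Finset.expect_mul _ _ _).symm

lemma ex_sum {ι : Type*} (S : Finset ι) (f : ι → X → ℝ) :
    𝔼 x, ∑ i ∈ S, f i x = ∑ i ∈ S, 𝔼 x, f i x :=
  Finset.expect_sum_comm _ _ _

lemma ex_comm (f : X → Y → ℝ) : 𝔼 x, 𝔼 y, f x y = 𝔼 y, 𝔼 x, f x y :=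
  Finset.expect_comm _ _ _

lemma ex_abs (f : X → ℝ) : |𝔼 x, f x| ≤ 𝔼 x, |f x| := Finset.abs_expect_le _ _

lemma ex_prod (f : X × Y → ℝ) : 𝔼 p, f p = 𝔼 x, 𝔼 y, f (x, y) :=
  Finset.expect_product _ _ _

lemma ex_cs (f g : X → ℝ) : (𝔼 x, f x * g x) ^ 2 ≤ (𝔼 x, f x ^ 2) * 𝔼 x, g x ^ 2 :=
  Finset.expect_mul_sq_le_sq_mul_sq _ _ _

/-- Cauchy-Schwarz with a nonnegative weight. -/
lemma ex_cs_weight (w f : X → ℝ) (hw : ∀ x, 0 ≤ w x) :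
    (𝔼 x, w x * f x) ^ 2 ≤ (𝔼 x, w x) * 𝔼 x, w x * f x ^ 2 := by
  have h := ex_cs (fun x => Real.sqrt (w x)) (fun x => Real.sqrt (w x) * f x)
  have e1 : ∀ x, Real.sqrt (w x) * (Real.sqrt (w x) * f x) = w x * f x := fun x => by
    rw [← mul_assoc, Real.mul_self_sqrt (hw x)]
  have e2 : ∀ x, Real.sqrt (w x) ^ 2 = w x := fun x => Real.sq_sqrt (hw x)
  have e3 : ∀ x, (Real.sqrt (w x) * f x) ^ 2 = w x * f x ^ 2 := fun x => by
    rw [mul_pow, e2]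
  simpa only [e1, e2, e3] using h

lemma ex_abs_sq_le [Nonempty X] (f : X → ℝ) : (𝔼 x, |f x|) ^ 2 ≤ 𝔼 x, f x ^ 2 := by
  have h := ex_cs (fun _ : X => (1 : ℝ)) (fun x => |f x|)
  simpa [Fintype.expect_const] using h

/-- Conditional expectation of `f` on the finite partition of `X` into the level sets
of `C`. -/
noncomputable def ce (C : X → γ) (f : X → ℝ) (x : X) : ℝ :=
  (𝔼 y, f y * ind (C y = C x)) / 𝔼 y, ind (C y = C x)

lemma cell_pos (C : X → γ) (x : X) : 0 < 𝔼 y, ind (C y = C x) := by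
  refine Finset.expect_pos' (fun _ _ => ind_nonneg _) ⟨x, Finset.mem_univ _, ?_⟩
  rw [ind_true rfl]; norm_num

lemma ce_congr (C : X → γ) (f : X → ℝ) {x y : X} (h : C x = C y) : ce C f x = ce C f y := by
  simp only [ce, h]

lemma ce_nonneg (C : X → γ) {f : X → ℝ} (hf : ∀ x, 0 ≤ f x) (x : X) : 0 ≤ ce C f x :=
  div_nonneg (ex_nonneg fun y => mul_nonneg (hf y) (ind_nonneg _)) (cell_pos C x).le

lemma ce_le_one (C : X → γ) {f : X → ℝ} (hf : ∀ x, f x ≤ 1) (x : X) : ce C f x ≤ 1 := by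
  rw [ce, div_le_one (cell_pos C x)]
  exact ex_mono fun y => mul_le_of_le_one_left (ind_nonneg _) (hf y)

/-- The defining property of conditional expectation: it can be removed against functions
that are constant on cells. -/
lemma ce_mul (C : X → γ) (f g : X → ℝ) (hg : ∀ x y, C x = C y → g x = g y) :
    𝔼 x, ce C f x * g x = 𝔼 x, f x * g x := by
  have h1 : ∀ x, ce C f x * g x
      = 𝔼 y, f y * g y / (𝔼 z, ind (C z = C y)) * ind (C x = C y) := by
    intro x
    rw [ce, div_mul_eq_mul_div, ← ex_mul_right, Finset.expect_div]
    refine ex_congr fun y => ?_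
    by_cases h : C y = C x
    · rw [ind_true h, ind_true h.symm, hg x y h.symm, h]; ring
    · rw [ind_false h, ind_false (fun h' => h h'.symm)]; ring
  rw [ex_congr h1, ex_comm]
  refine ex_congr fun y => ?_
  rw [ex_mul_left, div_mul_cancel₀ _ (cell_pos C y).ne']

lemma ce_ex (C : X → γ) (f : X → ℝ) : 𝔼 x, ce C f x = 𝔼 x, f x := by
  simpa using ce_mul C f (fun _ => 1) (fun _ _ _ => rfl)

/-- Pythagoras for a refinement `C'` of the partition `C`. -/
lemma ce_pyth {γ' : Type*} (C : X → γ) (C' : X → γ') (f : X → ℝ)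
    (h : ∀ x y, C' x = C' y → C x = C y) :
    𝔼 x, (ce C' f x - ce C f x) ^ 2 = 𝔼 x, ce C' f x ^ 2 - 𝔼 x, ce C f x ^ 2 := by
  have h1 : 𝔼 x, ce C' f x * ce C f x = 𝔼 x, f x * ce C f x :=
    ce_mul C' f (ce C f) fun x y hxy => ce_congr C f (h x y hxy)
  have h2 : 𝔼 x, ce C f x * ce C f x = 𝔼 x, f x * ce C f x :=
    ce_mul C f (ce C f) fun x y hxy => ce_congr C f hxy
  have h3 : ∀ x, (ce C' f x - ce C f x) ^ 2
      = ce C' f x ^ 2 - 2 * (ce C' f x * ce C f x) + ce C f x * ce C f x := fun x => by ring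
  have h4 : ∀ x, ce C f x ^ 2 = ce C f x * ce C f x := fun x => by ring
  rw [ex_congr h3, ex_congr h4, ex_add, ex_sub, ex_mul_left, h1, h2]; ring

end general

/-! ### Functions of some of the coordinates -/

section coords

variable {J α β : Type*}

/-- `f` depends only on the coordinates in `s`. -/
def Dep (f : (J → α) → β) (s : Finset J) : Prop :=
  ∀ x y, (∀ i ∈ s, x i = y i) → f x = f y

lemma Dep.mono {f : (J → α) → β} {s t : Finset J} (h : Dep f s) (hst : s ⊆ t) : Dep f t :=
  fun x y hxy => h x y fun i hi => hxy i (hst hi)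

lemma Dep.comp {δ : Type*} {f : (J → α) → β} {s : Finset J} (h : Dep f s) (g : β → δ) :
    Dep (fun x => g (f x)) s := fun x y hxy => congrArg g (h x y hxy)

lemma Dep.forall {ι : Type*} {S : Finset ι} {P : ι → (J → α) → Prop} {s : Finset J}
    (h : ∀ t ∈ S, Dep (P t) s) : Dep (fun x => ∀ t ∈ S, P t x) s := fun x y hxy =>
  propext <| forall₂_congr fun t ht => by rw [h t ht x y hxy]

variable [DecidableEq J]

/-- `f` does not depend on the coordinate `j`. -/
def Indep (j : J) (f : (J → α) → β) : Prop :=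
  ∀ x v, f (Function.update x j v) = f x

lemma Dep.indep {f : (J → α) → β} {s : Finset J} (h : Dep f s) {j : J} (hj : j ∉ s) :
    Indep j f := fun x v => h _ _ fun i hi => by
  rw [Function.update_of_ne]; rintro rfl; exact hj hi

lemma Indep.comp {δ : Type*} {f : (J → α) → β} {j : J} (h : Indep j f) (g : β → δ) :
    Indep j (fun x => g (f x)) := fun x v => congrArg g (h x v)

lemma Indep.dep [Fintype J] {f : (J → α) → β} {j : J} (h : Indep j f) :
    Dep f (univ.erase j) := fun x y hxy => by
  have : y = Function.update x j (y j) := by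
    ext i
    by_cases hi : i = j
    · subst hi; simp
    · rw [Function.update_of_ne hi, hxy i (by simp [hi])]
  rw [this, h]

variable [Fintype J] [Fintype α]

/-- Averaging over one coordinate first. -/
lemma ex_update (j : J) (f : (J → α) → ℝ) :
    𝔼 x, f x = 𝔼 x : J → α, 𝔼 v, f (Function.update x j v) := by
  rcases isEmpty_or_nonempty α with hα | hα
  · have : IsEmpty (J → α) := ⟨fun x => hα.elim (x j)⟩
    simp
  have h1 : 𝔼 p : (J → α) × α, f (Function.update p.1 j p.2) = 𝔼 p : (J → α) × α, f p.1 := by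
    refine Fintype.expect_bijective (fun p : (J → α) × α => (Function.update p.1 j p.2, p.1 j))
      ?_ _ _ (fun p => rfl)
    refine Function.Involutive.bijective fun p => ?_
    simp
  rw [ex_prod, ex_prod] at h1
  rw [h1]
  simp

/-- Averaging over the coordinates in `D` first. -/
lemma ex_piecewise (D : Finset J) (f : (J → α) → ℝ) :
    𝔼 x, f x = 𝔼 z : J → α, 𝔼 y : J → α, f (D.piecewise y z) := by
  rcases isEmpty_or_nonempty (J → α) with hα | hα
  · simp
  have h1 : 𝔼 p : (J → α) × (J → α), f (D.piecewise p.2 p.1)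
      = 𝔼 p : (J → α) × (J → α), f p.1 := by
    refine Fintype.expect_bijective
      (fun p : (J → α) × (J → α) => (D.piecewise p.2 p.1, D.piecewise p.1 p.2))
      ?_ _ _ (fun p => rfl)
    refine Function.Involutive.bijective fun p => ?_
    ext i <;> by_cases hi : i ∈ D <;> simp [hi]
  rw [ex_prod, ex_prod] at h1
  rw [h1]
  simp

/-- `u` has cut norm at most `τ` on the edge `D`: its correlation with every product of
indicators of sets `B i`, `i ∈ D`, where `B i` depends on the face `D.erase i` only, is at
most `τ`. -/
def Cut (D : Finset J) (u : (J → α) → ℝ) (τ : ℝ) : Prop :=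
  ∀ B : J → (J → α) → Prop, (∀ i ∈ D, Dep (B i) (D.erase i)) →
    |𝔼 x, u x * ind (∀ i ∈ D, B i x)| ≤ τ

/-- The sets in the definition of the cut norm may depend on coordinates outside `D`. -/
lemma Cut.indep [Nonempty α] {D : Finset J} {u : (J → α) → ℝ} {τ : ℝ} (hu : Cut D u τ)
    (hd : Dep u D) (B : J → (J → α) → Prop) (hB : ∀ i ∈ D, Indep i (B i)) :
    |𝔼 x, u x * ind (∀ i ∈ D, B i x)| ≤ τ := by
  rw [ex_piecewise D]
  refine (ex_abs _).trans (Finset.expect_le Finset.univ_nonempty fun z _ => ?_)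
  have := hu (fun i y => B i (D.piecewise y z)) (fun i hi x y hxy => by
    refine (hB i hi).dep _ _ fun l hl => ?_
    by_cases hlD : l ∈ D
    · simp only [Finset.piecewise_eq_of_mem _ _ _ hlD]
      exact hxy l (Finset.mem_erase.2 ⟨(Finset.mem_erase.1 hl).1, hlD⟩)
    · simp only [Finset.piecewise_eq_of_notMem _ _ _ hlD])
  convert this using 4 with y
  congr 1
  exact hd _ _ fun i hi => Finset.piecewise_eq_of_mem _ _ _ hi

/-- Correlation with a conjunction of events, each of which ignores some coordinate of
`D`. -/
lemma Cut.family [Nonempty α] {D : Finset J} {u : (J → α) → ℝ} {τ : ℝ} (hu : Cut D u τ)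
    (hd : Dep u D) {ι : Type*} (S : Finset ι) (P : ι → (J → α) → Prop)
    (hP : ∀ m ∈ S, ∃ i ∈ D, Indep i (P m)) :
    |𝔼 x, u x * ind (∀ m ∈ S, P m x)| ≤ τ := by
  choose i hiD hi using hP
  have := hu.indep hd (fun l x => ∀ m (hm : m ∈ S), i m hm = l → P m x) (fun l _ x v => by
    refine propext (forall₂_congr fun m hm => forall_congr' fun h => ?_)
    subst h
    rw [hi m hm])
  have e : ∀ x, ind (∀ m ∈ S, P m x)
      = ind (∀ l ∈ D, ∀ m (hm : m ∈ S), i m hm = l → P m x) := fun x =>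
    ind_congr ⟨fun h l _ m hm _ => h m hm, fun h m hm => h (i m hm) (hiD m hm) m hm rfl⟩
  rw [ex_congr (fun x => by rw [e x])]
  exact this

end coords

end RAR

namespace RAR

open scoped BigOperators

/-! ### Regularity partitions for bounded functions -/

section regularity

variable {J : Type} [Fintype J] [DecidableEq J] {α : Type} [Fintype α]

/-- `b` is a family of colourings with `M` colours: `b t` colours the `t`-tuples, encoded as
a function of the full tuple that depends on the coordinates in `t` only. -/
structure IsCol (b : Finset J → (J → α) → ℕ) (M : ℕ) : Prop where
  dep : ∀ t, Dep (b t) t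
  lt : ∀ t x, b t x < M

/-- The tuple of the colours of the faces `D.erase i`, `i ∈ D`, of an edge `D`. -/
def fc (b : Finset J → (J → α) → ℕ) (D : Finset J) (x : J → α) (i : J) : ℕ :=
  if i ∈ D then b (D.erase i) x else 0

lemma fc_eq {b : Finset J → (J → α) → ℕ} {D : Finset J} {x y : J → α} :
    fc b D x = fc b D y ↔ ∀ i ∈ D, b (D.erase i) x = b (D.erase i) y := by
  constructor
  · intro h i hi
    simpa [fc, hi] using congrFun h i
  · intro h
    ext i
    by_cases hi : i ∈ D
    · simpa [fc, hi] using h i hi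
    · simp [fc, hi]

/-- The total energy of the functions `f i` relative to the face colourings of `D i`. -/
noncomputable def energy {ι : Type*} [Fintype ι] (D : ι → Finset J) (f : ι → (J → α) → ℝ)
    (b : Finset J → (J → α) → ℕ) : ℝ :=
  ∑ i, 𝔼 x, ce (fc b (D i)) (f i) x ^ 2

lemma energy_le {ι : Type*} [Fintype ι] [Nonempty α] (D : ι → Finset J)
    (f : ι → (J → α) → ℝ) (hf : ∀ i x, 0 ≤ f i x ∧ f i x ≤ 1) (b : Finset J → (J → α) → ℕ) :
    energy D f b ≤ Fintype.card ι := by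
  have : energy D f b ≤ ∑ _i : ι, (1 : ℝ) := Finset.sum_le_sum fun i _ =>
    ex_le_one fun x => pow_le_one₀ (ce_nonneg _ (fun y => (hf i y).1) x)
      (ce_le_one _ (fun y => (hf i y).2) x)
  simpa using this

lemma energy_nonneg {ι : Type*} [Fintype ι] (D : ι → Finset J)
    (f : ι → (J → α) → ℝ) (b : Finset J → (J → α) → ℕ) :
    0 ≤ energy D f b :=
  Finset.sum_nonneg fun _ _ => ex_nonneg fun _ => sq_nonneg _

/-- `b'` refines `b`. -/
def Refines (b' b : Finset J → (J → α) → ℕ) : Prop :=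
  ∀ t x y, b' t x = b' t y → b t x = b t y

lemma Refines.fc {b' b : Finset J → (J → α) → ℕ} (h : Refines b' b) (D : Finset J)
    (x y : J → α) (hxy : fc b' D x = fc b' D y) : fc b D x = fc b D y :=
  fc_eq.2 fun i hi => h _ _ _ (fc_eq.1 hxy i hi)

lemma energy_sub {ι : Type*} [Fintype ι] (D : ι → Finset J) (f : ι → (J → α) → ℝ)
    {b' b : Finset J → (J → α) → ℕ} (h : Refines b' b) :
    energy D f b' - energy D f b
      = ∑ i, 𝔼 x, (ce (fc b' (D i)) (f i) x - ce (fc b (D i)) (f i) x) ^ 2 := by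
  rw [energy, energy, ← Finset.sum_sub_distrib]
  exact Finset.sum_congr rfl fun i _ => (ce_pyth _ _ _ (h.fc (D i))).symm

lemma energy_single {ι : Type*} [Fintype ι] (D : ι → Finset J) (f : ι → (J → α) → ℝ)
    {b' b : Finset J → (J → α) → ℕ} (h : Refines b' b) (i : ι) :
    𝔼 x, (ce (fc b' (D i)) (f i) x - ce (fc b (D i)) (f i) x) ^ 2
      ≤ energy D f b' - energy D f b := by
  rw [energy_sub D f h]
  exact Finset.single_le_sum
    (f := fun i => 𝔼 x, (ce (fc b' (D i)) (f i) x - ce (fc b (D i)) (f i) x) ^ 2)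
    (fun i _ => ex_nonneg fun x => sq_nonneg _) (Finset.mem_univ i)

/-- The refinement of a colouring by the sets `B i` on the faces `D.erase i` of `D`. -/
noncomputable def refine (b : Finset J → (J → α) → ℕ) (D : Finset J) (B : J → (J → α) → Prop)
    (t : Finset J) (x : J → α) : ℕ := by
  classical exact 2 * b t x + if ∃ i ∈ D, t = D.erase i ∧ B i x then 1 else 0

lemma erase_inj {D : Finset J} {i j : J} (hi : i ∈ D) (h : D.erase i = D.erase j) : i = j := by
  by_contra hne
  have : i ∈ D.erase j := Finset.mem_erase.2 ⟨hne, hi⟩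
  rw [← h] at this
  simp at this

lemma refine_col {b : Finset J → (J → α) → ℕ} {M : ℕ} (hb : IsCol b M) {D : Finset J}
    {B : J → (J → α) → Prop} (hB : ∀ i ∈ D, Dep (B i) (D.erase i)) :
    IsCol (refine b D B) (M * 2) where
  dep t x y hxy := by
    have h1 : (∃ i ∈ D, t = D.erase i ∧ B i x) ↔ (∃ i ∈ D, t = D.erase i ∧ B i y) := by
      refine exists_congr fun i => and_congr_right fun hi => and_congr_right fun ht => ?_
      subst ht
      rw [hB i hi x y hxy]
    simp only [refine, hb.dep t x y hxy]
    classical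
    by_cases h : ∃ i ∈ D, t = D.erase i ∧ B i x
    · rw [if_pos h, if_pos (h1.1 h)]
    · rw [if_neg h, if_neg fun h' => h (h1.2 h')]
  lt t x := by
    have := hb.lt t x
    unfold refine
    split_ifs <;> omega

lemma refine_refines (b : Finset J → (J → α) → ℕ) (D : Finset J)
    (B : J → (J → α) → Prop) : Refines (refine b D B) b := by
  intro t x y h
  unfold refine at h
  split_ifs at h <;> omega

lemma refine_sets (b : Finset J → (J → α) → ℕ) (D : Finset J)
    (B : J → (J → α) → Prop) (x y : J → α) (h : fc (refine b D B) D x = fc (refine b D B) D y) :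
    (∀ i ∈ D, B i x) ↔ (∀ i ∈ D, B i y) := by
  have h1 := fc_eq.1 h
  refine forall₂_congr fun i hi => ?_
  have h2 := h1 i hi
  have h3 : ∀ z, (∃ l ∈ D, D.erase i = D.erase l ∧ B l z) ↔ B i z := fun z =>
    ⟨fun ⟨l, _, hl, hB⟩ => by rwa [erase_inj hi hl], fun hB => ⟨i, hi, rfl, hB⟩⟩
  unfold refine at h2
  split_ifs at h2 with hx hy hy <;> rw [h3] at hx hy
  · exact iff_of_true hx hy
  · omega
  · omega
  · exact iff_of_false hx hy

/-- Energy increment: a failure of the cut norm bound yields a refinement of larger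
energy. -/
lemma energy_incr {ι : Type*} [Fintype ι] [Nonempty α] (D : ι → Finset J)
    (f : ι → (J → α) → ℝ) {b : Finset J → (J → α) → ℕ} {M : ℕ} (hb : IsCol b M) {τ : ℝ}
    (hτ : 0 < τ) (i : ι) (hc : ¬ Cut (D i) (fun x => f i x - ce (fc b (D i)) (f i) x) τ) :
    ∃ b', IsCol b' (M * 2) ∧ Refines b' b ∧ energy D f b + τ ^ 2 ≤ energy D f b' := by
  unfold Cut at hc
  push Not at hc
  obtain ⟨B, hB, hlt⟩ := hc
  have href := refine_refines b (D i) B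
  refine ⟨refine b (D i) B, refine_col hb hB, href, ?_⟩
  set b' := refine b (D i) B
  have e1 : 𝔼 x, (f i x - ce (fc b (D i)) (f i) x) * ind (∀ l ∈ D i, B l x)
      = 𝔼 x, (ce (fc b' (D i)) (f i) x - ce (fc b (D i)) (f i) x)
          * ind (∀ l ∈ D i, B l x) := by
    have := ce_mul (fc b' (D i)) (f i) (fun x => ind (∀ l ∈ D i, B l x))
      (fun x y h => ind_congr (refine_sets b (D i) B x y h))
    simp only [sub_mul, ex_sub, this]
  rw [e1] at hlt
  have h2 := ex_cs (fun x => ce (fc b' (D i)) (f i) x - ce (fc b (D i)) (f i) x)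
    (fun x => ind (∀ l ∈ D i, B l x))
  have h3 : 𝔼 x : J → α, ind (∀ l ∈ D i, B l x) ^ 2 ≤ 1 :=
    ex_le_one fun x => pow_le_one₀ (ind_nonneg _) (ind_le_one _)
  have h4 := energy_single D f href i
  have h5 : τ ^ 2 ≤ (𝔼 x, (ce (fc b' (D i)) (f i) x - ce (fc b (D i)) (f i) x)
          * ind (∀ l ∈ D i, B l x)) ^ 2 := by
    rw [← sq_abs (𝔼 x, _)]
    exact pow_le_pow_left₀ hτ.le hlt.le 2
  have h6 : 0 ≤ 𝔼 x, (ce (fc b' (D i)) (f i) x - ce (fc b (D i)) (f i) x) ^ 2 :=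
    ex_nonneg fun x => sq_nonneg _
  nlinarith

/-- Weak regularity: a colouring has a refinement of bounded complexity relative to which
every `f i` has small cut norm deviation. -/
lemma weak_reg {ι : Type*} [Fintype ι] [Nonempty α] (D : ι → Finset J)
    (f : ι → (J → α) → ℝ) (hf : ∀ i x, 0 ≤ f i x ∧ f i x ≤ 1) {τ : ℝ} (hτ : 0 < τ) (n : ℕ) :
    ∀ (b : Finset J → (J → α) → ℕ) (M : ℕ), IsCol b M →
      Fintype.card ι - n * τ ^ 2 ≤ energy D f b →
      ∃ b', IsCol b' (M * 2 ^ n) ∧ Refines b' b ∧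
        ∀ i, Cut (D i) (fun x => f i x - ce (fc b' (D i)) (f i) x) τ := by
  induction n with
  | zero =>
    intro b M hb he
    refine ⟨b, by simpa using hb, fun _ _ _ h => h, fun i => ?_⟩
    by_contra hc
    obtain ⟨b', -, -, h⟩ := energy_incr D f hb hτ i hc
    have := energy_le D f hf b'
    have : 0 < τ ^ 2 := by positivity
    simp at he
    linarith
  | succ n ih =>
    intro b M hb he
    by_cases hall : ∀ i, Cut (D i) (fun x => f i x - ce (fc b (D i)) (f i) x) τ
    · refine ⟨b, ⟨hb.dep, fun t x => (hb.lt t x).trans_le ?_⟩, fun _ _ _ h => h, hall⟩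
      exact Nat.le_mul_of_pos_right _ (by positivity)
    · push Not at hall
      obtain ⟨i, hc⟩ := hall
      obtain ⟨b', hb', hr, h⟩ := energy_incr D f hb hτ i hc
      obtain ⟨b'', hb'', hr', h'⟩ := ih b' _ hb' (by push_cast at he; linarith)
      refine ⟨b'', ?_, fun t x y hxy => hr t x y (hr' t x y hxy), h'⟩
      rwa [pow_succ', ← mul_assoc]

/-- Strong regularity: a coarse colouring `b` and a fine colouring `b'` that are close in
energy, where the cut norm deviation relative to `b'` is as small as one wishes in terms of
the number of colours of `b`. -/
lemma strong_reg (ι : Type) [Fintype ι] {κ : ℝ} (hκ : 0 < κ) (F : ℕ → ℝ) (hF : ∀ m, 0 < F m)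
    (n : ℕ) : ∀ M : ℕ, ∃ N : ℕ, ∀ (α : Type) [Fintype α] [Nonempty α] (D : ι → Finset J)
      (f : ι → (J → α) → ℝ), (∀ i x, 0 ≤ f i x ∧ f i x ≤ 1) →
      ∀ b : Finset J → (J → α) → ℕ, IsCol b M →
      Fintype.card ι - n * κ ≤ energy D f b →
      ∃ M₁ ≤ N, ∃ b₁ b₂ : Finset J → (J → α) → ℕ, IsCol b₁ M₁ ∧ (∀ t, Dep (b₂ t) t) ∧
        Refines b₂ b₁ ∧
        (∀ i, 𝔼 x, (ce (fc b₂ (D i)) (f i) x - ce (fc b₁ (D i)) (f i) x) ^ 2 ≤ κ) ∧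
        (∀ i, Cut (D i) (fun x => f i x - ce (fc b₂ (D i)) (f i) x) (F M₁)) := by
  have key : ∀ (M : ℕ) (α : Type) [Fintype α] [Nonempty α] (D : ι → Finset J)
      (f : ι → (J → α) → ℝ), (∀ i x, 0 ≤ f i x ∧ f i x ≤ 1) →
      ∀ b : Finset J → (J → α) → ℕ, IsCol b M →
      ∃ b₂, IsCol b₂ (M * 2 ^ ⌈(Fintype.card ι : ℝ) / F M ^ 2⌉₊) ∧ Refines b₂ b ∧
        ∀ i, Cut (D i) (fun x => f i x - ce (fc b₂ (D i)) (f i) x) (F M) := by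
    intro M α _ _ D f hf b hb
    refine weak_reg D f hf (hF M) _ b M hb ?_
    have h1 : (Fintype.card ι : ℝ) / F M ^ 2 ≤ ⌈(Fintype.card ι : ℝ) / F M ^ 2⌉₊ := Nat.le_ceil _
    rw [div_le_iff₀ (by have := hF M; positivity)] at h1
    have := energy_nonneg D f b
    linarith
  induction n with
  | zero =>
    intro M
    refine ⟨M, fun α _ _ D f hf b hb he => ?_⟩
    obtain ⟨b₂, hb₂, hr, hc⟩ := key M α D f hf b hb
    refine ⟨M, le_rfl, b, b₂, hb, hb₂.dep, hr, fun i => ?_, hc⟩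
    have h1 := energy_single D f hr i
    have h2 := energy_le D f hf b₂
    simp at he
    linarith
  | succ n ih =>
    intro M
    obtain ⟨N, hN⟩ := ih (M * 2 ^ ⌈(Fintype.card ι : ℝ) / F M ^ 2⌉₊)
    refine ⟨max M N, fun α _ _ D f hf b hb he => ?_⟩
    obtain ⟨b₂, hb₂, hr, hc⟩ := key M α D f hf b hb
    by_cases hclose : energy D f b₂ ≤ energy D f b + κ
    · refine ⟨M, le_max_left _ _, b, b₂, hb, hb₂.dep, hr, fun i => ?_, hc⟩
      have h1 := energy_single D f hr i
      linarith
    · obtain ⟨M₁, hM₁, rest⟩ := hN α D f hf b₂ hb₂ (by push_cast at he; linarith)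
      exact ⟨M₁, hM₁.trans (le_max_right _ _), rest⟩

end regularity

end RAR

namespace RAR

open scoped BigOperators

/-! ### Counting in regular colourings -/

section counting

variable {J : Type} [Fintype J] [DecidableEq J] {α : Type} [Fintype α]

/-- The index sets of size at most `d`. -/
def lev (d : ℕ) : Finset (Finset J) := univ.filter (fun t => t.card ≤ d)

lemma mem_lev {d : ℕ} {t : Finset J} : t ∈ lev d ↔ t.card ≤ d := by simp [lev]

/-- The event that the colours `B t x`, `t ∈ T`, are the prescribed ones `β t`. -/
def Cel (B : Finset J → (J → α) → ℕ) (β : Finset J → ℕ) (T : Finset (Finset J)) (x : J → α) :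
    Prop := ∀ t ∈ T, B t x = β t

lemma Cel.mono {B : Finset J → (J → α) → ℕ} {β : Finset J → ℕ} {T T' : Finset (Finset J)}
    {x : J → α} (h : Cel B β T x) (hT : T' ⊆ T) : Cel B β T' x := fun t ht => h t (hT ht)

lemma cel_union {B : Finset J → (J → α) → ℕ} {β : Finset J → ℕ} {T T' : Finset (Finset J)}
    {x : J → α} : Cel B β (T ∪ T') x ↔ Cel B β T x ∧ Cel B β T' x := by
  simp only [Cel, Finset.mem_union, or_imp, forall_and]

lemma Cel.dep {B : Finset J → (J → α) → ℕ} (hB : ∀ t, Dep (B t) t) (β : Finset J → ℕ)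
    {T : Finset (Finset J)} {s : Finset J} (hT : ∀ t ∈ T, t ⊆ s) : Dep (Cel B β T) s :=
  Dep.forall fun t ht => ((hB t).mono (hT t ht)).comp (fun v => v = β t)

/-- The colour pattern `β` on the index sets of size at most `d` is counted correctly, up to a
relative error `ε`, by densities `p t` whose product is at least `δ`. More generally, the
constraints from index sets that are not contained in `s` are independent of every event `A`
that depends on the coordinates in `s` only. -/
def Count (d : ℕ) (ε δ : ℝ) (b : Finset J → (J → α) → ℕ) (β : Finset J → ℕ) : Prop :=
  (∀ x, b ∅ x = β ∅) ∧ ∃ p : Finset J → ℝ, (∀ t, 0 < p t ∧ p t ≤ 1) ∧ p ∅ = 1 ∧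
    δ ≤ ∏ t ∈ lev d, p t ∧
    ∀ (s : Finset J) (A : (J → α) → Prop), Dep A s →
      |𝔼 x, ind (A x ∧ Cel b β (lev d) x)
        - (∏ t ∈ (lev d).filter (fun t => ¬ t ⊆ s), p t)
          * 𝔼 x, ind (A x ∧ Cel b β ((lev d).filter (fun t => t ⊆ s)) x)|
      ≤ ε * ∏ t ∈ lev d, p t

lemma Count.congr {d : ℕ} {ε δ : ℝ} {b b' : Finset J → (J → α) → ℕ} {β : Finset J → ℕ}
    (h : Count d ε δ b β) (hb : ∀ t, t.card ≤ d → b' t = b t) : Count d ε δ b' β := by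
  have e1 : ∀ x, Cel b' β (lev d) x ↔ Cel b β (lev d) x := fun x =>
    forall₂_congr fun t ht => by rw [hb t (mem_lev.1 ht)]
  have e2 : ∀ s x, Cel b' β ((lev d).filter (fun t => t ⊆ s)) x
      ↔ Cel b β ((lev d).filter (fun t => t ⊆ s)) x := fun s x =>
    forall₂_congr fun t ht => by rw [hb t (mem_lev.1 (Finset.mem_filter.1 ht).1)]
  unfold Count at *
  simp only [e1, e2]
  rw [hb ∅ (by simp)]
  exact h

lemma abs_count {d : ℕ} {ε : ℝ} [Nonempty α] {b : Finset J → (J → α) → ℕ} {β : Finset J → ℕ}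
    {p : Finset J → ℝ} (hp : p ∅ = 1) (h0 : ∀ x, b ∅ x = β ∅)
    (h : ∀ (s : Finset J) (A : (J → α) → Prop), Dep A s →
      |𝔼 x, ind (A x ∧ Cel b β (lev d) x)
        - (∏ t ∈ (lev d).filter (fun t => ¬ t ⊆ s), p t)
          * 𝔼 x, ind (A x ∧ Cel b β ((lev d).filter (fun t => t ⊆ s)) x)|
      ≤ ε * ∏ t ∈ lev d, p t) :
    |𝔼 x, ind (Cel b β (lev d) x) - ∏ t ∈ lev d, p t| ≤ ε * ∏ t ∈ lev d, p t := by
  have h1 := h ∅ (fun _ => True) (fun _ _ _ => rfl)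
  have e1 : ∏ t ∈ (lev d).filter (fun t => ¬ t ⊆ ∅), p t = ∏ t ∈ lev d, p t := by
    refine Finset.prod_filter_of_ne fun t _ hne hsub => hne ?_
    rw [Finset.subset_empty.1 hsub, hp]
  have e2 : ∀ x, ind (True ∧ Cel b β ((lev d).filter (fun t => t ⊆ ∅)) x) = 1 := by
    refine fun x => ind_true ⟨trivial, fun t ht => ?_⟩
    rw [Finset.subset_empty.1 (Finset.mem_filter.1 ht).2, h0]
  rw [e1, ex_congr e2] at h1
  simpa using h1

/-- The counting estimate at level `d` extends to level `d + 1` when, for every `D` of size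
`d + 1`, the indicator of the colour class `β D` is, on the cell of the pattern `β`, the sum of
a constant `q D`, a function `h D` that is mostly small, and a function `u D` of small cut
norm. -/
lemma count_step [Nonempty α] {d : ℕ} {ε ε' δ' ρ τ l n0 : ℝ} {B : Finset J → (J → α) → ℕ}
    {β : Finset J → ℕ} (hB : ∀ t, Dep (B t) t) (hcount : Count d ε' δ' B β)
    (q : Finset J → ℝ) (u h : Finset J → (J → α) → ℝ)
    (hn0 : n0 = 2 ^ Fintype.card J)
    (hl0 : 0 < l) (hl1 : l ≤ 1) (hε : 0 < ε) (hε'0 : 0 ≤ ε') (hε' : ε' ≤ 1) (hρ : 0 ≤ ρ)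
    (hτ0 : 0 ≤ τ)
    (hnum1 : n0 * (5 * ρ + ε') + ε' ≤ ε * l ^ (2 ^ Fintype.card J) / 2)
    (hnum2 : n0 * τ ≤ ε * l ^ (2 ^ Fintype.card J) * δ' / 2)
    (hq : ∀ D : Finset J, D.card = d + 1 → l ≤ q D ∧ q D ≤ 1)
    (hdec : ∀ D : Finset J, D.card = d + 1 → ∀ x, Cel B β (lev d) x →
      ind (B D x = β D) = u D x + h D x + q D)
    (hu : ∀ D : Finset J, D.card = d + 1 → Cut D (u D) τ)
    (hud : ∀ D : Finset J, D.card = d + 1 → Dep (u D) D)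
    (hhd : ∀ D : Finset J, D.card = d + 1 → Dep (h D) D)
    (hh1 : ∀ D : Finset J, D.card = d + 1 → ∀ x, |h D x| ≤ 1)
    (hW : ∀ D : Finset J, D.card = d + 1 →
      𝔼 x, ind (ρ < |h D x| ∧ Cel B β ((lev d).filter (fun t => t ⊆ D)) x)
        ≤ ρ * 𝔼 x, ind (Cel B β ((lev d).filter (fun t => t ⊆ D)) x)) :
    Count (d + 1) ε (l ^ (2 ^ Fintype.card J) * δ') B β := by
  obtain ⟨h0, p, hp, hp0, hpδ, hA⟩ := hcount
  set P := ∏ t ∈ lev d, p t with hPdef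
  have hPpos : 0 < P := Finset.prod_pos fun t _ => (hp t).1
  have hcnt := abs_count hp0 h0 hA
  rw [← hPdef] at hcnt
  set S : Finset (Finset J) := univ.filter (fun t => t.card = d + 1) with hS
  have hSmem : ∀ {t}, t ∈ S ↔ t.card = d + 1 := by intro t; simp [hS]
  have hlev : lev (d + 1) = lev d ∪ S := by
    ext t; rw [Finset.mem_union, mem_lev, mem_lev, hSmem]; omega
  have hdisj : Disjoint (lev d) S := by
    rw [Finset.disjoint_left]; intro t ht ht'
    rw [mem_lev] at ht; rw [hSmem] at ht'; omega
  have hn0' : ∀ R : Finset (Finset J), (R.card : ℝ) ≤ n0 := by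
    intro R
    rw [hn0]
    have := Finset.card_le_univ R
    rw [Fintype.card_finset] at this
    exact_mod_cast this
  -- the contribution of the mostly small parts
  have hmid : ∀ D, D.card = d + 1 →
      𝔼 x, |h D x| * ind (Cel B β (lev d) x) ≤ (5 * ρ + ε') * P := by
    intro D hD
    have hWd : Dep (fun x => ρ < |h D x|) D := (hhd D hD).comp (fun v => ρ < |v|)
    have a1 := hA D (fun x => ρ < |h D x|) hWd
    have a2 := hA D (fun _ => True) (fun _ _ _ => rfl)
    simp only [true_and] at a2
    have a3 := hW D hD
    set Q := ∏ t ∈ (lev d).filter (fun t => ¬ t ⊆ D), p t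
    have hQ : 0 ≤ Q := Finset.prod_nonneg fun t _ => (hp t).1.le
    have a4 := mul_le_mul_of_nonneg_left a3 hQ
    have hpt : ∀ x, |h D x| * ind (Cel B β (lev d) x) ≤ ρ * ind (Cel B β (lev d) x)
        + ind (ρ < |h D x| ∧ Cel B β (lev d) x) := by
      intro x
      by_cases hc : Cel B β (lev d) x
      · by_cases hw : ρ < |h D x|
        · rw [ind_true hc, ind_true ⟨hw, hc⟩]; have := hh1 D hD x; linarith
        · rw [ind_true hc, ind_false (fun h => hw h.1)]; linarith
      · rw [ind_false hc, ind_false (fun h => hc h.2)]; simp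
    have a5 := ex_mono hpt
    rw [ex_add, ex_mul_left] at a5
    have b1 := (abs_le.1 a1).2
    have b2 := (abs_le.1 a2).1
    have b3 := (abs_le.1 hcnt).2
    set E1 := 𝔼 x, ind (Cel B β (lev d) x)
    set E2 := 𝔼 x, ind (Cel B β ((lev d).filter (fun t => t ⊆ D)) x)
    have c1 : Q * E2 ≤ (1 + 2 * ε') * P := by linarith
    have c2 : ρ * E1 ≤ ρ * ((1 + ε') * P) := mul_le_mul_of_nonneg_left (by linarith) hρ
    have c3 : ρ * (Q * E2) ≤ ρ * ((1 + 2 * ε') * P) := mul_le_mul_of_nonneg_left c1 hρ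
    have c4 : ρ * ε' * P ≤ ρ * 1 * P := by gcongr
    nlinarith
  -- replacing the colour classes outside `s` by their densities, one at a time
  have htel : ∀ (s : Finset J) (A : (J → α) → Prop), Dep A s → ∀ R : Finset (Finset J),
      (∀ D ∈ R, D.card = d + 1 ∧ ¬ D ⊆ s) →
      |𝔼 x, ind (A x ∧ Cel B β ((lev d ∪ S.filter (fun t => t ⊆ s)) ∪ R) x)
        - (∏ D ∈ R, q D) * 𝔼 x, ind (A x ∧ Cel B β (lev d ∪ S.filter (fun t => t ⊆ s)) x)|
      ≤ R.card * (τ + (5 * ρ + ε') * P) := by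
    intro s A hAs R
    set T0 := lev d ∪ S.filter (fun t => t ⊆ s)
    induction R using Finset.induction_on with
    | empty => intro _; simp
    | insert D R hDR ih =>
      intro hR
      have ih' := ih fun D' hD' => hR D' (Finset.mem_insert_of_mem hD')
      obtain ⟨hD, hDs⟩ := hR D (Finset.mem_insert_self D R)
      have hT : ∀ x, ind (A x ∧ Cel B β (T0 ∪ insert D R) x)
          = u D x * ind (A x ∧ Cel B β (T0 ∪ R) x)
            + h D x * ind (A x ∧ Cel B β (T0 ∪ R) x)
            + q D * ind (A x ∧ Cel B β (T0 ∪ R) x) := by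
        intro x
        have e1 : ind (A x ∧ Cel B β (T0 ∪ insert D R) x)
            = ind (B D x = β D) * ind (A x ∧ Cel B β (T0 ∪ R) x) := by
          rw [← ind_and]
          apply ind_congr
          simp only [Cel, Finset.mem_union, Finset.mem_insert]
          constructor
          · exact fun ⟨ha, hc⟩ => ⟨hc D (Or.inr (Or.inl rfl)), ha, fun t ht =>
              hc t (ht.imp id Or.inr)⟩
          · rintro ⟨hc, ha, hc'⟩
            refine ⟨ha, fun t ht => ?_⟩
            rcases ht with ht | rfl | ht
            · exact hc' t (Or.inl ht)
            · exact hc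
            · exact hc' t (Or.inr ht)
        by_cases hc : A x ∧ Cel B β (T0 ∪ R) x
        · rw [e1, hdec D hD x (hc.2.mono ?_)]
          · ring
          · exact Finset.subset_union_left.trans Finset.subset_union_left
        · rw [e1, ind_false hc]; ring
      rw [ex_congr hT, ex_add, ex_add, ex_mul_left]
      have hunif : |𝔼 x, u D x * ind (A x ∧ Cel B β (T0 ∪ R) x)| ≤ τ := by
        have := (hu D hD).family (hud D hD) (Finset.insertNone (T0 ∪ R))
          (fun o x => o.elim (A x) (fun t => B t x = β t)) (fun o ho => by
            cases o with
            | none =>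
              obtain ⟨i, hi, his⟩ := Finset.not_subset.1 hDs
              exact ⟨i, hi, hAs.indep his⟩
            | some t =>
              rw [Finset.some_mem_insertNone] at ho
              have hDt : ¬ D ⊆ t := by
                intro hsub
                rcases Finset.mem_union.1 ho with ht | ht
                · rcases Finset.mem_union.1 ht with ht | ht
                  · have := Finset.card_le_card hsub
                    rw [mem_lev] at ht; omega
                  · have ht' := Finset.mem_filter.1 ht
                    exact hDs (hsub.trans ht'.2)
                · have h1 := (hR t (Finset.mem_insert_of_mem ht)).1
                  have : D = t := Finset.eq_of_subset_of_card_le hsub (by omega)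
                  exact hDR (this ▸ ht)
              obtain ⟨i, hi, hit⟩ := Finset.not_subset.1 hDt
              exact ⟨i, hi, (((hB t).indep hit).comp (fun v => v = β t) :)⟩)
        have e : ∀ x, ind (A x ∧ Cel B β (T0 ∪ R) x)
            = ind (∀ o ∈ Finset.insertNone (T0 ∪ R),
                (o : Option (Finset J)).elim (A x) (fun t => B t x = β t)) := by
          intro x
          apply ind_congr
          constructor
          · rintro ⟨ha, hc⟩ (_ | t) ho
            · exact ha
            · exact hc t (Finset.some_mem_insertNone.1 ho)
          · exact fun hh => ⟨hh none (by simp), fun t ht =>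
              hh (some t) (Finset.some_mem_insertNone.2 ht)⟩
        rw [ex_congr (fun x => by rw [e x])]
        exact this
      have hmid' : |𝔼 x, h D x * ind (A x ∧ Cel B β (T0 ∪ R) x)| ≤ (5 * ρ + ε') * P := by
        refine (ex_abs _).trans ((ex_mono fun x => ?_).trans (hmid D hD))
        rw [abs_mul, abs_of_nonneg (ind_nonneg _)]
        refine mul_le_mul_of_nonneg_left (ind_mono fun hc => hc.2.mono ?_) (abs_nonneg _)
        exact Finset.subset_union_left.trans Finset.subset_union_left
      rw [Finset.prod_insert hDR, Finset.card_insert_of_notMem hDR]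
      have hqD := hq D hD
      have hE : 0 ≤ τ + (5 * ρ + ε') * P := by positivity
      have hlast : |q D * (𝔼 x, ind (A x ∧ Cel B β (T0 ∪ R) x)
          - (∏ D ∈ R, q D) * 𝔼 x, ind (A x ∧ Cel B β T0 x))|
          ≤ R.card * (τ + (5 * ρ + ε') * P) := by
        rw [abs_mul, abs_of_nonneg (hl0.le.trans hqD.1)]
        exact (mul_le_of_le_one_left (abs_nonneg _) hqD.2).trans ih'
      rw [abs_le] at hunif hmid' hlast ⊢
      push_cast
      constructor <;> nlinarith
  have hqpos : ∀ D ∈ S, 0 < q D := fun D hD => hl0.trans_le (hq D (hSmem.1 hD)).1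
  set p' : Finset J → ℝ := fun t => if t.card ≤ d then p t else if t.card = d + 1 then q t else 1
    with hp'
  have hp'1 : ∀ t, t.card ≤ d → p' t = p t := fun t ht => by simp [hp', ht]
  have hp'2 : ∀ t, t ∈ S → p' t = q t := fun t ht => by simp [hp', hSmem.1 ht]
  have hprod : ∏ t ∈ lev (d + 1), p' t = P * ∏ D ∈ S, q D := by
    rw [hlev, Finset.prod_union hdisj, hPdef]
    congr 1
    · exact Finset.prod_congr rfl fun t ht => hp'1 t (mem_lev.1 ht)
    · exact Finset.prod_congr rfl hp'2
  have hqS : l ^ (2 ^ Fintype.card J) ≤ ∏ D ∈ S, q D := by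
    have h1 : l ^ S.card ≤ ∏ D ∈ S, q D := by
      rw [← Finset.prod_const]
      exact Finset.prod_le_prod (fun _ _ => hl0.le) fun D hD => (hq D (hSmem.1 hD)).1
    refine le_trans (pow_le_pow_of_le_one hl0.le hl1 ?_) h1
    have := Finset.card_le_univ S
    rwa [Fintype.card_finset] at this
  have hlpos : 0 < l ^ (2 ^ Fintype.card J) := by positivity
  refine ⟨h0, p', ?_, by rw [hp'1 ∅ (by simp), hp0], ?_, ?_⟩
  · intro t
    simp only [hp']
    split_ifs with h1 h2
    · exact hp t
    · exact ⟨hl0.trans_le (hq t h2).1, (hq t h2).2⟩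
    · norm_num
  · rw [hprod, mul_comm]
    exact mul_le_mul hpδ hqS hlpos.le hPpos.le
  · intro s A hAs
    set S₁ := S.filter (fun t => ¬ t ⊆ s) with hS₁
    set S₂ := S.filter (fun t => t ⊆ s) with hS₂
    have hsplit : lev (d + 1) = (lev d ∪ S₂) ∪ S₁ := by
      rw [hlev, Finset.union_assoc, hS₁, hS₂, Finset.filter_union_filter_not_eq]
    have t1 := htel s A hAs S₁ (fun D hD =>
      ⟨hSmem.1 (Finset.mem_filter.1 hD).1, (Finset.mem_filter.1 hD).2⟩)
    rw [← hsplit] at t1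
    have t2 := hA s (fun x => A x ∧ Cel B β S₂ x) (fun x y hxy => by
      show (A x ∧ Cel B β S₂ x) = (A y ∧ Cel B β S₂ y)
      rw [hAs x y hxy, Cel.dep hB β (fun t ht => (Finset.mem_filter.1 ht).2) x y hxy])
    have e1 : ∀ x, ind ((A x ∧ Cel B β S₂ x) ∧ Cel B β (lev d) x)
        = ind (A x ∧ Cel B β (lev d ∪ S₂) x) := fun x => ind_congr (by
      rw [cel_union]; tauto)
    have e2 : ∀ x, ind ((A x ∧ Cel B β S₂ x) ∧ Cel B β ((lev d).filter (fun t => t ⊆ s)) x)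
        = ind (A x ∧ Cel B β ((lev (d + 1)).filter (fun t => t ⊆ s)) x) := fun x =>
      ind_congr (by
        rw [hlev, Finset.filter_union, cel_union]; tauto)
    rw [ex_congr e1, ex_congr e2] at t2
    have e3 : ∏ t ∈ (lev (d + 1)).filter (fun t => ¬ t ⊆ s), p' t
        = (∏ t ∈ (lev d).filter (fun t => ¬ t ⊆ s), p t) * ∏ D ∈ S₁, q D := by
      rw [hlev, Finset.filter_union,
        Finset.prod_union (Finset.disjoint_filter_filter hdisj)]
      congr 1
      · exact Finset.prod_congr rfl fun t ht => hp'1 t (mem_lev.1 (Finset.mem_filter.1 ht).1)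
      · exact Finset.prod_congr rfl fun t ht => hp'2 t (Finset.mem_filter.1 ht).1
    rw [e3, hprod]
    have hq1 : 0 ≤ ∏ D ∈ S₁, q D := Finset.prod_nonneg fun D hD =>
      (hqpos D (Finset.mem_filter.1 hD).1).le
    have hq2 : ∏ D ∈ S₁, q D ≤ 1 := Finset.prod_le_one
      (fun D hD => (hqpos D (Finset.mem_filter.1 hD).1).le)
      (fun D hD => (hq D (hSmem.1 (Finset.mem_filter.1 hD).1)).2)
    set Q1 := ∏ D ∈ S₁, q D
    set E1 := 𝔼 x, ind (A x ∧ Cel B β (lev d ∪ S₂) x)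
    set E0 := 𝔼 x, ind (A x ∧ Cel B β (lev (d + 1)) x)
    set E2 := 𝔼 x, ind (A x ∧ Cel B β ((lev (d + 1)).filter (fun t => t ⊆ s)) x)
    set P1 := ∏ t ∈ (lev d).filter (fun t => ¬ t ⊆ s), p t
    have t3 : |Q1 * (E1 - P1 * E2)| ≤ ε' * P := by
      rw [abs_mul, abs_of_nonneg hq1]
      exact (mul_le_of_le_one_left (abs_nonneg _) hq2).trans t2
    have hcard : (S₁.card : ℝ) * (τ + (5 * ρ + ε') * P) ≤ n0 * (τ + (5 * ρ + ε') * P) :=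
      mul_le_mul_of_nonneg_right (hn0' _) (by positivity)
    have f1 : ε * l ^ (2 ^ Fintype.card J) * δ' / 2 ≤ ε * l ^ (2 ^ Fintype.card J) / 2 * P := by
      have := mul_le_mul_of_nonneg_left hpδ (by positivity : 0 ≤ ε * l ^ (2 ^ Fintype.card J) / 2)
      linarith
    have f2 := mul_le_mul_of_nonneg_right hnum1 hPpos.le
    have f3 : ε * l ^ (2 ^ Fintype.card J) * P ≤ ε * (P * ∏ D ∈ S, q D) := by
      have := mul_le_mul_of_nonneg_left hqS (by positivity : 0 ≤ ε * P)
      linarith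
    rw [abs_le] at t1 t3 ⊢
    constructor <;> nlinarith

end counting

end RAR

namespace RAR

open scoped BigOperators

/-! ### Regularisation at all levels -/

section levels

lemma low_density {X γ : Type*} [Fintype X] [Nonempty X] (C : X → γ) (c : X → ℕ) (M : ℕ)
    (hc : ∀ x, c x < M) {l : ℝ} (hl : 0 ≤ l) :
    𝔼 x, ind (ce C (fun y => ind (c y = c x)) x < l) ≤ M * l := by
  have h1 : ∀ x, ind (ce C (fun y => ind (c y = c x)) x < l)
      ≤ ∑ a ∈ Finset.range M, ind (c x = a) * ind (ce C (fun y => ind (c y = a)) x < l) := by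
    intro x
    refine le_trans ?_ (Finset.single_le_sum
      (f := fun a => ind (c x = a) * ind (ce C (fun y => ind (c y = a)) x < l))
      (fun a _ => mul_nonneg (ind_nonneg _) (ind_nonneg _)) (Finset.mem_range.2 (hc x)))
    simp [ind_true]
  refine (ex_mono h1).trans ?_
  rw [ex_sum]
  have h2 : ∀ a ∈ Finset.range M,
      𝔼 x, ind (c x = a) * ind (ce C (fun y => ind (c y = a)) x < l) ≤ l := by
    intro a _
    rw [← ce_mul C (fun y => ind (c y = a)) (fun x => ind (ce C (fun y => ind (c y = a)) x < l))
      (fun x y h => by rw [ce_congr C _ h])]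
    refine Finset.expect_le Finset.univ_nonempty fun x _ => ?_
    by_cases h : ce C (fun y => ind (c y = a)) x < l
    · rw [ind_true h, mul_one]; exact h.le
    · rw [ind_false h, mul_zero]; exact hl
  refine (Finset.sum_le_sum h2).trans ?_
  simp

lemma markov_ce {X γ : Type*} [Fintype X] (C : X → γ) (W : X → Prop) {ρ : ℝ} (hρ : 0 < ρ) :
    𝔼 x, ind (ρ * 𝔼 y, ind (C y = C x) < 𝔼 y, ind (W y ∧ C y = C x)) ≤ (𝔼 x, ind (W x)) / ρ := by
  rw [le_div_iff₀ hρ, ← ce_ex C (fun x => ind (W x)), ← ex_mul_right]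
  refine ex_mono fun x => ?_
  by_cases h : ρ * 𝔼 y, ind (C y = C x) < 𝔼 y, ind (W y ∧ C y = C x)
  · rw [ind_true h, one_mul, ce, le_div_iff₀ (cell_pos C x)]
    simpa only [ind_and] using h.le
  · rw [ind_false h, zero_mul]
    exact ce_nonneg _ (fun _ => ind_nonneg _) _

lemma markov_sq {X : Type*} [Fintype X] (h : X → ℝ) {ρ : ℝ} (hρ : 0 < ρ) :
    𝔼 x, ind (ρ < |h x|) ≤ (𝔼 x, h x ^ 2) / ρ ^ 2 := by
  rw [le_div_iff₀ (by positivity), ← ex_mul_right]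
  refine ex_mono fun x => ?_
  by_cases hx : ρ < |h x|
  · rw [ind_true hx, one_mul, ← sq_abs (h x)]
    exact pow_le_pow_left₀ hρ.le hx.le 2
  · rw [ind_false hx, zero_mul]; positivity

lemma exists_pos_lb (δ : ℕ → ℝ) (hδ : ∀ m, 0 < δ m) (N : ℕ) :
    ∃ δ₀ : ℝ, 0 < δ₀ ∧ ∀ m ≤ N, δ₀ ≤ δ m := by
  induction N with
  | zero => exact ⟨δ 0, hδ 0, fun m hm => by rw [Nat.le_zero.1 hm]⟩
  | succ N ih =>
    obtain ⟨δ₀, h0, h⟩ := ih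
    refine ⟨min δ₀ (δ (N + 1)), lt_min h0 (hδ _), fun m hm => ?_⟩
    rcases Nat.le_succ_iff.1 hm with hm | rfl
    · exact (min_le_left _ _).trans (h m hm)
    · exact min_le_right _ _

lemma exists_ub (f : ℕ → ℕ) (N : ℕ) : ∃ K, ∀ m ≤ N, f m ≤ K :=
  ⟨(Finset.range (N + 1)).sup f, fun _ hm => Finset.le_sup (Finset.mem_range.2 (by omega))⟩

variable {J : Type} [Fintype J] [DecidableEq J]

/-- Every colouring `c` can be completed, keeping the colours of the `d`-element index sets, to a
colouring `b` of bounded complexity such that outside an event of small probability (the failure of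
`Good`) all the patterns that occur on index sets of size at most `d` are counted correctly. The
predicate `Good t` depends on the colours of the subsets of `t` only. -/
def Regularisable (J : Type) [Fintype J] [DecidableEq J] (d : ℕ) : Prop :=
  ∀ (M : ℕ) (ε : ℝ), 0 < ε → ∃ (M' : ℕ) (δ : ℝ), 0 < δ ∧
    ∀ (α : Type) [Fintype α] [Nonempty α] (c : Finset J → (J → α) → ℕ), IsCol c M →
    ∃ b : Finset J → (J → α) → ℕ, IsCol b M' ∧ (∀ t, t.card = d → b t = c t) ∧
    ∃ Good : Finset J → (Finset J → ℕ) → Prop,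
      (∀ t β β', (∀ u ⊆ t, β u = β' u) → (Good t β ↔ Good t β')) ∧
      (∀ t, 𝔼 x, ind (¬ Good t (fun u => b u x)) ≤ ε) ∧
      ∀ β, (∀ t, t.card ≤ d → Good t β) → Count d ε δ b β

lemma regularisable_zero : Regularisable J 0 := by
  intro M ε hε
  refine ⟨M, 1, one_pos, fun α _ _ c hc => ⟨c, hc, fun _ _ => rfl,
    fun t β => t = ∅ → ∀ x, c ∅ x = β ∅, ?_, ?_, ?_⟩⟩
  · rintro t β β' h
    refine forall_congr' fun ht => ?_
    rw [h ∅ (Finset.empty_subset t)]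
  · intro t
    have h1 : ∀ x, ind (¬ (t = ∅ → ∀ y, c ∅ y = c ∅ x)) = 0 := fun x => ind_false (by
      rw [not_not]
      exact fun _ y => hc.dep ∅ y x (by simp))
    rw [ex_congr h1]
    simpa using hε.le
  · intro β hβ
    refine ⟨hβ ∅ (by simp) rfl, fun _ => 1, by simp, rfl, by simp, fun s A _ => ?_⟩
    have e1 : (lev 0 : Finset (Finset J)).filter (fun t => t ⊆ s) = lev 0 :=
      Finset.filter_true_of_mem fun t ht => by
        have := mem_lev.1 ht
        simp at this
        simp [this]
    rw [e1]
    simp [hε.le]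

lemma fc_dep {α : Type} [Fintype α] {b : Finset J → (J → α) → ℕ} (hb : ∀ t, Dep (b t) t)
    (D : Finset J) : Dep (fc b D) D := fun x y hxy =>
  fc_eq.2 fun _ _ => hb _ x y fun l hl => hxy l (Finset.mem_of_mem_erase hl)

lemma ce_fc_dep {α : Type} [Fintype α] {b : Finset J → (J → α) → ℕ} (hb : ∀ t, Dep (b t) t)
    (D : Finset J) (f : (J → α) → ℝ) : Dep (ce (fc b D) f) D := fun x y hxy =>
  ce_congr _ _ (fc_dep hb D x y hxy)

/-- The density of the colour class `β D` of `c` in the cell of the face colours `β` of `b`. -/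
noncomputable def dens {α : Type} [Fintype α] (c b : Finset J → (J → α) → ℕ) (D : Finset J)
    (β : Finset J → ℕ) : ℝ :=
  (𝔼 x, ind (c D x = β D) * ind (∀ i ∈ D, b (D.erase i) x = β (D.erase i)))
    / 𝔼 x, ind (∀ i ∈ D, b (D.erase i) x = β (D.erase i))

lemma ce_eq_dens {α : Type} [Fintype α] (c b : Finset J → (J → α) → ℕ) (D : Finset J)
    (β : Finset J → ℕ) (x : J → α) (hx : ∀ i ∈ D, b (D.erase i) x = β (D.erase i)) :
    ce (fc b D) (fun y => ind (c D y = β D)) x = dens c b D β := by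
  have e : ∀ y, ind (fc b D y = fc b D x)
      = ind (∀ i ∈ D, b (D.erase i) y = β (D.erase i)) := fun y => ind_congr (by
    rw [fc_eq]
    exact forall₂_congr fun i hi => by rw [hx i hi])
  simp only [ce, dens, e]

lemma dens_congr {α : Type} [Fintype α] (c b : Finset J → (J → α) → ℕ) (D : Finset J)
    (β β' : Finset J → ℕ) (h : ∀ u ⊆ D, β u = β' u) : dens c b D β = dens c b D β' := by
  have e : ∀ y, ind (∀ i ∈ D, b (D.erase i) y = β (D.erase i))
      = ind (∀ i ∈ D, b (D.erase i) y = β' (D.erase i)) := fun y => ind_congr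
    (forall₂_congr fun i _ => by rw [h _ (Finset.erase_subset i D)])
  simp only [dens, e, h D subset_rfl]

lemma dens_le_one {α : Type} [Fintype α] (c b : Finset J → (J → α) → ℕ) (D : Finset J)
    (β : Finset J → ℕ) : dens c b D β ≤ 1 :=
  div_le_one_of_le₀ (ex_mono fun _ => mul_le_of_le_one_left (ind_nonneg _) (ind_le_one _))
    (ex_nonneg fun _ => ind_nonneg _)

lemma dens_lt {α : Type} [Fintype α] {c b : Finset J → (J → α) → ℕ} {D : Finset J}
    {β : Finset J → ℕ} {M : ℕ} (hc : IsCol c M) (h : 0 < dens c b D β) : β D < M := by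
  by_contra hM
  have : ∀ x, ind (c D x = β D) * ind (∀ i ∈ D, b (D.erase i) x = β (D.erase i)) = 0 := fun x => by
    rw [ind_false, zero_mul]
    intro h; have := hc.lt D x; omega
  rw [dens, ex_congr this] at h
  simp at h

lemma regularisable_succ {d : ℕ} (ih : Regularisable J d) : Regularisable J (d + 1) := by
  intro M ε hε
  set K : ℕ := 2 ^ Fintype.card J with hK
  set n0 : ℝ := (2 : ℝ) ^ Fintype.card J with hn0
  have hn0pos : 1 ≤ n0 := one_le_pow₀ (by norm_num)
  have hM1 : (0 : ℝ) < 2 * (M + 1) := by positivity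
  set l : ℝ := min 1 (ε / (2 * (M + 1))) with hl
  have hl0 : 0 < l := lt_min one_pos (by positivity)
  have hl1 : l ≤ 1 := min_le_left _ _
  have hlM : M * l ≤ ε / 2 := by
    have h1 : l ≤ ε / (2 * (M + 1)) := min_le_right _ _
    rw [le_div_iff₀ hM1] at h1
    nlinarith
  set θ : ℝ := ε * l ^ K / 2 with hθ
  have hθ0 : 0 < θ := by positivity
  set ρ : ℝ := θ / (20 * n0) with hρdef
  have hρ : 0 < ρ := by positivity
  have hρn : n0 * (5 * ρ) = θ / 4 := by rw [hρdef]; field_simp; norm_num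
  set ε' : ℝ := min (min 1 ε) (θ / (4 * n0)) with hε'
  have hε'0 : 0 < ε' := lt_min (lt_min one_pos hε) (by positivity)
  have hε'1 : ε' ≤ 1 := (min_le_left _ _).trans (min_le_left _ _)
  have hε'ε : ε' ≤ ε := (min_le_left _ _).trans (min_le_right _ _)
  have hε'n : n0 * ε' ≤ θ / 4 := by
    have : ε' ≤ θ / (4 * n0) := min_le_right _ _
    rw [le_div_iff₀ (by positivity)] at this
    linarith
  have hnum1 : n0 * (5 * ρ + ε') + ε' ≤ θ := by
    have : ε' ≤ n0 * ε' := le_mul_of_one_le_left hε'0.le hn0pos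
    nlinarith
  set κ : ℝ := ε * ρ ^ 3 / (2 * (M + 1)) with hκdef
  have hκ : 0 < κ := by positivity
  have hκM : M * (κ / ρ ^ 2 / ρ) ≤ ε / 2 := by
    have : κ / ρ ^ 2 / ρ = ε / (2 * (M + 1)) := by rw [hκdef]; field_simp
    rw [this, mul_div_assoc', div_le_div_iff₀ hM1 two_pos]
    nlinarith
  have ih' := fun m => ih m ε' hε'0
  choose M' δ' hδ' hT using ih'
  set F : ℕ → ℝ := fun m => θ * δ' m / n0 with hF
  have hFpos : ∀ m, 0 < F m := fun m => by have := hδ' m; positivity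
  obtain ⟨N, hN⟩ := strong_reg (J := J) (Finset J × Fin M) hκ F hFpos
    ⌈(Fintype.card (Finset J × Fin M) : ℝ) / κ⌉₊ 1
  obtain ⟨δ₀, hδ₀, hδ₀N⟩ := exists_pos_lb δ' hδ' N
  obtain ⟨M₂, hM₂⟩ := exists_ub M' N
  refine ⟨max M M₂, l ^ K * δ₀, by positivity, fun α _ _ c hc => ?_⟩
  obtain ⟨M₁, hM₁, b₁, b₂, hb₁, hb₂, hr, hclose, hcut⟩ := hN α Prod.fst
    (fun i x => ind (c i.1 x = i.2)) (fun i x => ⟨ind_nonneg _, ind_le_one _⟩)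
    (fun _ _ => 0) ⟨fun _ _ _ _ => rfl, fun _ _ => one_pos⟩ (by
      have h1 := Nat.le_ceil ((Fintype.card (Finset J × Fin M) : ℝ) / κ)
      rw [div_le_iff₀ hκ] at h1
      exact (sub_nonpos.2 h1).trans (energy_nonneg _ _ _))
  obtain ⟨b, hb, hbc, Good, hloc, hgood, hcnt⟩ := hT M₁ α b₁ hb₁
  -- the new colouring: `c` on the new level, the old completion below
  set B : Finset J → (J → α) → ℕ := fun t => if t.card = d + 1 then c t else b t with hBdef
  have hB1 : ∀ t, t.card = d + 1 → B t = c t := fun t ht => by simp [hBdef, ht]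
  have hB2 : ∀ t, t.card ≤ d → B t = b t := fun t ht => by
    have : t.card ≠ d + 1 := by omega
    simp [hBdef, this]
  have hBface : ∀ D : Finset J, D.card = d + 1 → ∀ i ∈ D, B (D.erase i) = b₁ (D.erase i) := by
    intro D hD i hi
    have h1 : (D.erase i).card = d := by rw [Finset.card_erase_of_mem hi]; omega
    rw [hB2 _ h1.le, hbc _ h1]
  have hBcol : IsCol B (max M M₂) := by
    constructor
    · intro t
      by_cases ht : t.card = d + 1
      · rw [hB1 t ht]; exact hc.dep t
      · simp only [hBdef, ht, if_false]; exact hb.dep t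
    · intro t x
      by_cases ht : t.card = d + 1
      · rw [hB1 t ht]; exact (hc.lt t x).trans_le (le_max_left _ _)
      · simp only [hBdef, ht, if_false]
        exact (hb.lt t x).trans_le ((hM₂ M₁ hM₁).trans (le_max_right _ _))
  set h : ℕ → Finset J → (J → α) → ℝ := fun a D x =>
    ce (fc b₂ D) (fun y => ind (c D y = a)) x - ce (fc b₁ D) (fun y => ind (c D y = a)) x with hh
  set Wc : Finset J → (Finset J → ℕ) → Prop := fun D β =>
    𝔼 x, ind (ρ < |h (β D) D x| ∧ Cel B β ((lev d).filter (fun t => t ⊆ D)) x)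
        ≤ ρ * 𝔼 x, ind (Cel B β ((lev d).filter (fun t => t ⊆ D)) x) with hWc
  set Good' : Finset J → (Finset J → ℕ) → Prop := fun t β =>
    (t.card ≤ d → Good t β) ∧ (t.card = d + 1 → l ≤ dens c b₁ t β ∧ Wc t β) with hGood'
  refine ⟨B, hBcol, hB1, Good', ?_, ?_, ?_⟩
  · intro t β β' hββ'
    refine and_congr (imp_congr_right fun _ => hloc t β β' hββ') (imp_congr_right fun _ => ?_)
    have e : ∀ x, Cel B β ((lev d).filter (fun u => u ⊆ t)) x
        ↔ Cel B β' ((lev d).filter (fun u => u ⊆ t)) x := fun x =>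
      forall₂_congr fun u hu => by rw [hββ' u (Finset.mem_filter.1 hu).2]
    rw [dens_congr c b₁ t β β' hββ']
    simp only [hWc, e, hββ' t subset_rfl]
  · intro t
    by_cases ht : t.card ≤ d
    · have e : ∀ x, ind (¬ Good' t (fun u => B u x)) = ind (¬ Good t (fun u => b u x)) := by
        intro x
        refine ind_congr (not_congr ?_)
        have h1 : Good t (fun u => B u x) ↔ Good t (fun u => b u x) :=
          hloc _ _ _ fun u hu => by rw [hB2 u ((Finset.card_le_card hu).trans ht)]
        have h2 : t.card ≠ d + 1 := by omega
        simp only [hGood', ht, h2, forall_true_left, false_imp_iff, and_true, h1]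
      rw [ex_congr e]
      exact (hgood t).trans hε'ε
    by_cases ht' : t.card = d + 1
    swap
    · have e : ∀ x, ind (¬ Good' t (fun u => B u x)) = 0 := fun x => ind_false (by
        simp only [hGood', ht, ht', false_imp_iff, and_self, not_true, not_false_eq_true])
      rw [ex_congr e]
      simpa using hε.le
    -- the probability that `Good'` fails on the new level
    set T := (lev d).filter (fun u => u ⊆ t) with hTdef
    set C : (J → α) → T → ℕ := fun x u => B u x with hC
    have hCeq : ∀ x y, C y = C x ↔ Cel B (fun u => B u x) T y := by
      intro x y
      constructor
      · exact fun hxy u hu => congrFun hxy ⟨u, hu⟩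
      · exact fun hxy => funext fun u => hxy u.1 u.2
    have e : ∀ x, ind (¬ Good' t (fun u => B u x))
        ≤ ind (ce (fc b₁ t) (fun y => ind (c t y = c t x)) x < l)
          + ∑ a ∈ Finset.range M, ind (ρ * 𝔼 y, ind (C y = C x)
              < 𝔼 y, ind (ρ < |h a t y| ∧ C y = C x)) := by
      intro x
      have hce : ce (fc b₁ t) (fun y => ind (c t y = c t x)) x
          = dens c b₁ t (fun u => B u x) := by
        have := ce_eq_dens c b₁ t (fun u => B u x) x (fun i hi => by
          show _ = B (t.erase i) x
          rw [hBface t ht' i hi])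
        rw [← this]
        simp only [hB1 t ht']
      have hsum := Finset.single_le_sum (f := fun a => ind (ρ * 𝔼 y, ind (C y = C x)
              < 𝔼 y, ind (ρ < |h a t y| ∧ C y = C x))) (fun a _ => ind_nonneg _)
              (Finset.mem_range.2 (hc.lt t x))
      by_cases h1 : l ≤ dens c b₁ t (fun u => B u x)
      · refine le_trans ?_ (le_add_of_nonneg_left (ind_nonneg _))
        refine le_trans (ind_mono fun hbad => ?_) hsum
        by_contra hcon
        refine hbad ⟨fun h' => absurd h' ht, fun _ => ⟨h1, ?_⟩⟩
        rw [not_lt] at hcon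
        simp only [hCeq] at hcon
        simpa only [hWc, hB1 t ht'] using hcon
      · rw [hce, ind_true (not_le.1 h1)]
        have := Finset.sum_nonneg (s := Finset.range M) (f := fun a =>
          ind (ρ * 𝔼 y, ind (C y = C x) < 𝔼 y, ind (ρ < |h a t y| ∧ C y = C x)))
          (fun a _ => ind_nonneg _)
        have h2 := ind_le_one (¬ Good' t (fun u => B u x))
        linarith
    refine (ex_mono e).trans ?_
    rw [ex_add, ex_sum]
    have p1 := low_density (fc b₁ t) (c t) M (hc.lt t) hl0.le
    have p2 : ∀ a ∈ Finset.range M, 𝔼 x, ind (ρ * 𝔼 y, ind (C y = C x)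
              < 𝔼 y, ind (ρ < |h a t y| ∧ C y = C x)) ≤ κ / ρ ^ 2 / ρ := by
      intro a ha
      refine (markov_ce C (fun y => ρ < |h a t y|) hρ).trans ?_
      gcongr
      refine (markov_sq (h a t) hρ).trans ?_
      gcongr
      exact hclose (t, ⟨a, Finset.mem_range.1 ha⟩)
    have p3 := Finset.sum_le_sum p2
    simp only [Finset.sum_const, Finset.card_range, nsmul_eq_mul] at p3
    linarith
  · intro β hβ
    have hcount : Count d ε' (δ' M₁) B β := (hcnt β fun t ht =>
      (hβ t (by omega)).1 ht).congr hB2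
    have hG : ∀ D : Finset J, D.card = d + 1 → l ≤ dens c b₁ D β ∧ Wc D β := fun D hD =>
      (hβ D hD.le).2 hD
    have hlt : ∀ D : Finset J, D.card = d + 1 → β D < M := fun D hD =>
      dens_lt hc (hl0.trans_le (hG D hD).1)
    have hcutD : ∀ D : Finset J, D.card = d + 1 → Cut D
        (fun x => ind (c D x = β D) - ce (fc b₂ D) (fun y => ind (c D y = β D)) x) (F M₁) :=
      fun D hD => hcut (D, ⟨β D, hlt D hD⟩)
    have hFn : n0 * F M₁ = θ * δ' M₁ := by
      have : n0 ≠ 0 := by positivity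
      simp only [hF]; field_simp
    have hres := count_step (l := l) (n0 := n0) hBcol.dep hcount (fun D => dens c b₁ D β)
      (fun D x => ind (c D x = β D) - ce (fc b₂ D) (fun y => ind (c D y = β D)) x)
      (fun D => h (β D) D) hn0 hl0 hl1 hε hε'0.le hε'1 hρ.le (hFpos M₁).le hnum1
      (le_of_eq (hFn.trans (by rw [hθ]; ring)))
      (fun D hD => ⟨(hG D hD).1, dens_le_one _ _ _ _⟩) ?_ hcutD ?_ ?_ ?_ (fun D hD => (hG D hD).2)
    · obtain ⟨r0, p, r1, r2, r3, r4⟩ := hres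
      refine ⟨r0, p, r1, r2, le_trans ?_ r3, r4⟩
      exact mul_le_mul_of_nonneg_left (hδ₀N M₁ hM₁) (by positivity)
    · intro D hD x hx
      rw [hB1 D hD]
      simp only [hh]
      rw [ce_eq_dens c b₁ D β x fun i hi => ?_]
      · ring
      · rw [← hBface D hD i hi]
        refine hx _ (mem_lev.2 ?_)
        rw [Finset.card_erase_of_mem hi]; omega
    · intro D hD x y hxy
      simp only [hc.dep D x y hxy, ce_fc_dep hb₂ D _ x y hxy]
    · intro D hD x y hxy
      simp only [hh, ce_fc_dep hb₁.dep D _ x y hxy, ce_fc_dep hb₂ D _ x y hxy]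
    · intro D hD x
      have a1 := ce_nonneg (fc b₂ D) (f := fun y => ind (c D y = β D)) (fun _ => ind_nonneg _) x
      have a2 := ce_le_one (fc b₂ D) (f := fun y => ind (c D y = β D)) (fun _ => ind_le_one _) x
      have a3 := ce_nonneg (fc b₁ D) (f := fun y => ind (c D y = β D)) (fun _ => ind_nonneg _) x
      have a4 := ce_le_one (fc b₁ D) (f := fun y => ind (c D y = β D)) (fun _ => ind_le_one _) x
      rw [abs_le]
      constructor <;> simp only [hh] <;> linarith

lemma regularisable (d : ℕ) : Regularisable J d := by
  induction d with
  | zero => exact regularisable_zero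
  | succ d ih => exact regularisable_succ ih

end levels

end RAR

namespace RAR

open scoped BigOperators

/-! ### Removal for bounded functions -/

section dense

variable {J : Type} [Fintype J] [DecidableEq J]

/-- Removal lemma for `[0, 1]`-valued functions. The sets that are kept are unions of cells of a
colouring of bounded complexity: `Ev j` is a condition on the colours of the proper subsets of
`univ.erase j`. -/
lemma dense_removal (hJ : 1 ≤ Fintype.card J) {ε : ℝ} (hε : 0 < ε) :
    ∃ (c : ℝ) (M : ℕ), 0 < c ∧ ∀ (α : Type) [Fintype α] [Nonempty α] (g : J → (J → α) → ℝ),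
      (∀ j x, 0 ≤ g j x ∧ g j x ≤ 1) → (∀ j, Indep j (g j)) → 𝔼 x, ∏ j, g j x ≤ c →
      ∃ b : Finset J → (J → α) → ℕ, IsCol b M ∧ ∃ Ev : J → (Finset J → ℕ) → Prop,
        (∀ j β β', (∀ u, u ⊂ univ.erase j → β u = β' u) → (Ev j β ↔ Ev j β')) ∧
        (∀ x, ∃ j, ¬ Ev j (fun u => b u x)) ∧
        ∀ j, 𝔼 x, g j x * ind (¬ Ev j (fun u => b u x)) ≤ ε := by
  classical
  set k := Fintype.card J with hk
  set n0 : ℝ := (2 : ℝ) ^ k with hn0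
  have hn0pos : 1 ≤ n0 := one_le_pow₀ (by norm_num)
  set ε₁ : ℝ := min (1 / 2) (ε / (2 * n0)) with hε₁
  have hε₁0 : 0 < ε₁ := lt_min (by norm_num) (by positivity)
  have hε₁n : n0 * ε₁ ≤ ε / 2 := by
    have : ε₁ ≤ ε / (2 * n0) := min_le_right _ _
    rw [le_div_iff₀ (by positivity)] at this
    linarith
  obtain ⟨M, δ, hδ, hT⟩ := regularisable (J := J) (k - 1) 2 ε₁ hε₁0
  set θ : ℝ := ε / 2 with hθ
  have hθ0 : 0 < θ := by positivity
  refine ⟨θ ^ k * δ / 4, M, by positivity, fun α _ _ g hg hgi hsmall => ?_⟩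
  have hecard : ∀ j : J, (univ.erase j : Finset J).card = k - 1 := fun j => by
    rw [Finset.card_erase_of_mem (Finset.mem_univ j), Finset.card_univ]
  have heinj : ∀ i j : J, (univ.erase i : Finset J) = univ.erase j → i = j := fun i j h =>
    erase_inj (Finset.mem_univ i) h
  set c : Finset J → (J → α) → ℕ := fun t x =>
    if ∃ j, t = univ.erase j ∧ θ ≤ g j x then 1 else 0 with hc
  have hcol : IsCol c 2 := by
    constructor
    · intro t x y hxy
      have : (∃ j, t = univ.erase j ∧ θ ≤ g j x) ↔ (∃ j, t = univ.erase j ∧ θ ≤ g j y) := by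
        refine exists_congr fun j => and_congr_right fun ht => ?_
        subst ht
        rw [(hgi j).dep x y hxy]
      simp only [hc, this]
    · intro t x
      simp only [hc]
      split_ifs <;> norm_num
  have hc1 : ∀ j x, c (univ.erase j) x = 1 ↔ θ ≤ g j x := by
    intro j x
    simp only [hc]
    constructor
    · intro h
      by_contra hcon
      rw [if_neg] at h
      · norm_num at h
      · rintro ⟨i, hi, hi'⟩
        rw [← heinj _ _ hi] at hi'
        exact hcon hi'
    · exact fun h => if_pos ⟨j, rfl, h⟩
  obtain ⟨b, hb, hbc, Good, hloc, hgood, hcnt⟩ := hT α c hcol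
  have hbe : ∀ j x, b (univ.erase j) x = 1 ↔ θ ≤ g j x := fun j x => by
    rw [hbc _ (hecard j), hc1]
  refine ⟨b, hb, fun j β => ∀ t ⊆ univ.erase j, Good t (Function.update β (univ.erase j) 1),
    ?_, ?_, ?_⟩
  · intro j β β' h
    refine forall₂_congr fun t ht => hloc _ _ _ fun u hu => ?_
    by_cases hue : u = univ.erase j
    · subst hue; simp
    · rw [Function.update_of_ne hue, Function.update_of_ne hue]
      exact h u ((hu.trans ht).ssubset_of_ne hue)
  · intro x
    by_contra hcon
    push Not at hcon
    set β : Finset J → ℕ := fun u => if ∃ j, u = univ.erase j then 1 else b u x with hβ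
    have hGood : ∀ t, t.card ≤ k - 1 → Good t β := by
      intro t ht
      have hne : t ≠ univ := by
        rintro rfl
        rw [Finset.card_univ] at ht; omega
      obtain ⟨j, hj⟩ : ∃ j, j ∉ t := by
        by_contra hall
        push Not at hall
        exact hne (Finset.eq_univ_iff_forall.2 hall)
      have hsub : t ⊆ univ.erase j := fun i hi => by
        rw [Finset.mem_erase]; exact ⟨fun h => hj (h ▸ hi), Finset.mem_univ i⟩
      refine (hloc _ _ _ fun u hu => ?_).1 (hcon j t hsub)
      by_cases hue : u = univ.erase j
      · subst hue
        have : ∃ i : J, (univ.erase j : Finset J) = univ.erase i := ⟨j, rfl⟩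
        simp only [hβ, this, if_true, Function.update_self]
      · rw [Function.update_of_ne hue]
        have : ¬ ∃ i : J, u = univ.erase i := by
          rintro ⟨i, rfl⟩
          refine hue (Finset.eq_of_subset_of_card_le (hu.trans hsub) ?_)
          rw [hecard, hecard]
        simp only [hβ, this, if_false]
    obtain ⟨h0, p, hp, hp0, hpδ, hA⟩ := hcnt β hGood
    have h1 := (abs_le.1 (abs_count hp0 h0 hA)).1
    have h2 : ∀ y, θ ^ k * ind (Cel b β (lev (k - 1)) y) ≤ ∏ j, g j y := by
      intro y
      by_cases hy : Cel b β (lev (k - 1)) y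
      · rw [ind_true hy, mul_one, hk, ← Finset.card_univ, ← Finset.prod_const]
        refine Finset.prod_le_prod (fun _ _ => hθ0.le) fun j _ => (hbe j y).1 ?_
        rw [hy _ (mem_lev.2 (hecard j).le)]
        have : ∃ i : J, (univ.erase j : Finset J) = univ.erase i := ⟨j, rfl⟩
        simp only [hβ, this, if_true]
      · rw [ind_false hy, mul_zero]
        exact Finset.prod_nonneg fun j _ => (hg j y).1
    have h3 := ex_mono h2
    rw [ex_mul_left] at h3
    have h4 : ε₁ ≤ 1 / 2 := min_le_left _ _
    have h5 : δ / 2 ≤ 𝔼 y, ind (Cel b β (lev (k - 1)) y) := by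
      set P := ∏ t ∈ lev (k - 1), p t
      have : ε₁ * P ≤ 1 / 2 * P := mul_le_mul_of_nonneg_right h4 (hδ.le.trans hpδ)
      linarith
    have h6 : 0 < θ ^ k * δ := by positivity
    have h7 := mul_le_mul_of_nonneg_left h5 (by positivity : 0 ≤ θ ^ k)
    linarith
  · intro j
    have h1 : ∀ x, g j x * ind (¬ ∀ t ⊆ univ.erase j,
        Good t (Function.update (fun u => b u x) (univ.erase j) 1))
        ≤ θ + ∑ t : Finset J, ind (¬ Good t (fun u => b u x)) := by
      intro x
      have hs : 0 ≤ ∑ t : Finset J, ind (¬ Good t (fun u => b u x)) :=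
        Finset.sum_nonneg fun _ _ => ind_nonneg _
      by_cases hx : θ ≤ g j x
      · have hup : Function.update (fun u => b u x) (univ.erase j) 1 = fun u => b u x := by
          conv_lhs => rw [← (hbe j x).2 hx]
          exact Function.update_eq_self (univ.erase j) (fun u => b u x)
        rw [hup]
        have h2 : ind (¬ ∀ t ⊆ univ.erase j, Good t (fun u => b u x))
            ≤ ∑ t : Finset J, ind (¬ Good t (fun u => b u x)) := by
          refine le_trans (ind_mono fun h => ?_) (ind_exists_le univ _)
          push Not at h
          obtain ⟨t, _, ht⟩ := h
          exact ⟨t, Finset.mem_univ t, ht⟩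
        have h3 := mul_le_of_le_one_left (ind_nonneg (¬ ∀ t ⊆ univ.erase j,
          Good t (fun u => b u x))) (hg j x).2
        linarith
      · have h3 := mul_le_of_le_one_right (hg j x).1 (ind_le_one (¬ ∀ t ⊆ univ.erase j,
          Good t (Function.update (fun u => b u x) (univ.erase j) 1)))
        linarith [not_le.1 hx]
    refine (ex_mono h1).trans ?_
    rw [ex_add, ex_sum]
    have h2 := Finset.sum_le_sum fun (t : Finset J) (_ : t ∈ univ) => hgood t
    simp only [Finset.sum_const, Finset.card_univ, Fintype.card_finset, nsmul_eq_mul] at h2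
    push_cast at h2
    rw [← hk, ← hn0] at h2
    rw [Fintype.expect_const]
    linarith

end dense

end RAR

namespace RAR

open scoped BigOperators

/-! ### The dense model theorem -/

section model

variable {J : Type} [Fintype J] [DecidableEq J] {α : Type} [Fintype α]

lemma Cut.nonneg {D : Finset J} {u : (J → α) → ℝ} {τ : ℝ} (hu : Cut D u τ) : 0 ≤ τ :=
  (abs_nonneg _).trans (hu (fun _ _ => True) (fun _ _ _ _ _ => rfl))

lemma Cut.mono {D : Finset J} {u : (J → α) → ℝ} {τ τ' : ℝ} (hu : Cut D u τ) (h : τ ≤ τ') :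
    Cut D u τ' := fun B hB => (hu B hB).trans h

/-- Correlation with an event that is determined by the colours of index sets that do not
contain `D`. -/
lemma Cut.pattern [Nonempty α] {D : Finset J} (hD : D.Nonempty) {u : (J → α) → ℝ} {τ : ℝ}
    (hu : Cut D u τ) (hd : Dep u D) {b : Finset J → (J → α) → ℕ} {M : ℕ} (hb : IsCol b M)
    (Q : (Finset J → ℕ) → Prop) (T : Finset (Finset J)) (hT : ∀ t ∈ T, ¬ D ⊆ t)
    (hQ : ∀ β β', (∀ t ∈ T, β t = β' t) → (Q β ↔ Q β')) :
    |𝔼 x, u x * ind (Q (fun t => b t x))| ≤ (M : ℝ) ^ (2 ^ Fintype.card J) * τ := by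
  classical
  obtain ⟨x₀⟩ : Nonempty (J → α) := inferInstance
  have hM : 0 < M := (Nat.zero_le _).trans_lt (hb.lt ∅ x₀)
  set m : (J → α) → Finset J → ℕ := fun x t => if t ∈ T then b t x else 0 with hm
  set Γ : Finset (Finset J → ℕ) := Fintype.piFinset (fun _ => Finset.range M) with hΓ
  have hmΓ : ∀ x, m x ∈ Γ := fun x => by
    rw [hΓ, Fintype.mem_piFinset]
    intro t
    simp only [hm, Finset.mem_range]
    split_ifs
    · exact hb.lt t x
    · exact hM
  have e : ∀ x, u x * ind (Q (fun t => b t x))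
      = ∑ γ ∈ Γ, ind (Q γ) * (u x * ind (∀ t ∈ univ, m x t = γ t)) := by
    intro x
    rw [Finset.sum_eq_single_of_mem (m x) (hmΓ x)]
    · rw [ind_true (p := ∀ t ∈ univ, m x t = m x t) (fun _ _ => rfl),
        ind_congr (hQ (fun t => b t x) (m x) fun t ht => by simp [hm, ht])]
      ring
    · intro γ _ hne
      rw [ind_false (p := ∀ t ∈ univ, m x t = γ t), mul_zero, mul_zero]
      exact fun h => hne (funext fun t => (h t (Finset.mem_univ t)).symm)
  rw [ex_congr e, ex_sum]
  have hcard : (Γ.card : ℝ) = (M : ℝ) ^ (2 ^ Fintype.card J) := by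
    rw [hΓ, Fintype.card_piFinset]
    simp [Fintype.card_finset]
  rw [← hcard, ← nsmul_eq_mul]
  refine (Finset.abs_sum_le_sum_abs _ _).trans (Finset.sum_le_card_nsmul _ _ _ fun γ _ => ?_)
  rw [ex_mul_left, abs_mul, abs_of_nonneg (ind_nonneg _)]
  refine (mul_le_of_le_one_left (abs_nonneg _) (ind_le_one _)).trans ?_
  refine hu.family hd univ (fun t x => m x t = γ t) fun t _ => ?_
  by_cases ht : t ∈ T
  · obtain ⟨i, hi, hit⟩ := Finset.not_subset.1 (hT t ht)
    refine ⟨i, hi, fun x v => ?_⟩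
    simp only [hm, ht, if_true, (hb.dep t).indep hit x v]
  · obtain ⟨i, hi⟩ := hD
    exact ⟨i, hi, fun x v => by simp only [hm, ht, if_false]⟩

lemma Cut.fc [Nonempty α] {D : Finset J} (hD : D.Nonempty) {u : (J → α) → ℝ} {τ : ℝ}
    (hu : Cut D u τ) (hd : Dep u D) {b : Finset J → (J → α) → ℕ} {M : ℕ} (hb : IsCol b M)
    (S : (J → α) → Prop) (hS : ∀ x y, fc b D x = fc b D y → S x = S y) :
    |𝔼 x, u x * ind (S x)| ≤ (M : ℝ) ^ (2 ^ Fintype.card J) * τ := by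
  have h := hu.pattern hD hd hb
    (fun β => ∃ y, S y ∧ ∀ i ∈ D, b (D.erase i) y = β (D.erase i))
    (D.image fun i => D.erase i) (by
      intro t ht
      obtain ⟨i, hi, rfl⟩ := Finset.mem_image.1 ht
      exact fun h => absurd (h hi) (by simp)) (by
      intro β β' hββ'
      refine exists_congr fun y => and_congr_right fun _ => forall₂_congr fun i hi => ?_
      rw [hββ' _ (Finset.mem_image_of_mem _ hi)])
  have e : ∀ x, ind (∃ y, S y ∧ ∀ i ∈ D, b (D.erase i) y = b (D.erase i) x) = ind (S x) := by
    refine fun x => ind_congr ⟨?_, fun h => ⟨x, h, fun _ _ => rfl⟩⟩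
    rintro ⟨y, hy, hxy⟩
    rwa [← hS y x (fc_eq.2 hxy)]
  simpa only [e] using h

/-- Where the conditional expectation of a function majorised by a pseudorandom `ν` exceeds `1`, it
does so only slightly. -/
lemma excess_le [Nonempty α] {D : Finset J} (hD : D.Nonempty) {ν g : (J → α) → ℝ} {η : ℝ}
    (hν : Cut D (fun x => ν x - 1) η) (hνd : Dep ν D) (hg : ∀ x, g x ≤ ν x)
    {b : Finset J → (J → α) → ℕ} {M : ℕ} (hb : IsCol b M) :
    𝔼 x, max (ce (fc b D) g x - 1) 0 ≤ (M : ℝ) ^ (2 ^ Fintype.card J) * η := by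
  set u := ce (fc b D) g with hu
  have hcell : ∀ x y, fc b D x = fc b D y → (1 < u x) = (1 < u y) := fun x y h => by
    rw [hu, ce_congr (fc b D) g h]
  have e1 : ∀ x, max (u x - 1) 0 = u x * ind (1 < u x) - ind (1 < u x) := by
    intro x
    by_cases h : 1 < u x
    · rw [ind_true h, max_eq_left (by linarith)]; ring
    · rw [ind_false h, max_eq_right (by linarith)]; ring
  rw [ex_congr e1, ex_sub, ce_mul (fc b D) g (fun x => ind (1 < u x))
    (fun x y h => by rw [hcell x y h]), ← ex_sub]
  refine le_trans ?_ ((le_abs_self _).trans (hν.fc hD (fun x y hxy => by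
    simp only [hνd x y hxy]) hb (fun x => 1 < u x) hcell))
  refine ex_mono fun x => ?_
  have := mul_le_mul_of_nonneg_right (hg x) (ind_nonneg (1 < u x))
  linarith

/-- The Huber function, quadratic on `[0, 2]` and linear beyond. -/
noncomputable def hub (y : ℝ) : ℝ := if y ≤ 2 then y ^ 2 else 4 * y - 4

lemma hub_le {y : ℝ} (hy : 0 ≤ y) : hub y ≤ 4 * y := by
  unfold hub; split_ifs <;> nlinarith

lemma hub_nonneg {y : ℝ} (_hy : 0 ≤ y) : 0 ≤ hub y := by
  unfold hub; split_ifs <;> nlinarith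

/-- The Bregman divergence of the Huber function controls the squared distance where both arguments
are at most `2`. -/
lemma hub_bregman (y z : ℝ) :
    ((z - y) * ind (y ≤ 2 ∧ z ≤ 2)) ^ 2 ≤ hub z - hub y - min (2 * y) 4 * (z - y) := by
  unfold hub
  by_cases hy : y ≤ 2 <;> by_cases hz : z ≤ 2
  · rw [ind_true ⟨hy, hz⟩, if_pos hy, if_pos hz, min_eq_left (by linarith)]; nlinarith
  · rw [ind_false (fun h => hz h.2), if_pos hy, if_neg hz, min_eq_left (by linarith)]; nlinarith
  · rw [ind_false (fun h => hy h.1), if_neg hy, if_pos hz, min_eq_right (by linarith)]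
    nlinarith [sq_nonneg (z - 2)]
  · rw [ind_false (fun h => hy h.1), if_neg hy, if_neg hz, min_eq_right (by linarith)]; nlinarith

lemma abs_sub_le_excess {y z : ℝ} (hy : 0 ≤ y) (hz : 0 ≤ z) :
    |z - y| ≤ |(z - y) * ind (y ≤ 2 ∧ z ≤ 2)| + 2 * max (y - 1) 0 + 2 * max (z - 1) 0 := by
  have h1 := le_max_left (y - 1) 0
  have h2 := le_max_right (y - 1) 0
  have h3 := le_max_left (z - 1) 0
  have h4 := le_max_right (z - 1) 0
  by_cases h : y ≤ 2 ∧ z ≤ 2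
  · rw [ind_true h, mul_one]; linarith
  · rw [ind_false h, mul_zero, abs_zero]
    rw [not_and_or, not_le, not_le] at h
    rw [abs_le]
    rcases h with h | h <;> constructor <;> linarith

/-- The energy increment step of the dense model theorem. -/
lemma model_incr [Nonempty α] {D : Finset J} (hD : D.Nonempty) {ν g : (J → α) → ℝ} {η τ : ℝ}
    (hτ : 0 < τ) (hν : Cut D (fun x => ν x - 1) η) (hνd : Dep ν D)
    (hg : ∀ x, 0 ≤ g x ∧ g x ≤ ν x) {b : Finset J → (J → α) → ℕ} {M : ℕ} (hb : IsCol b M)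
    (hη : 16 * (((M * 2 : ℕ) : ℝ) ^ (2 ^ Fintype.card J) * η) ≤ τ)
    (hc : ¬ Cut D (fun x => g x - min (ce (fc b D) g x) 1) τ) :
    ∃ b', IsCol b' (M * 2) ∧
      𝔼 x, hub (ce (fc b D) g x) + τ ^ 2 / 16 ≤ 𝔼 x, hub (ce (fc b' D) g x) := by
  unfold Cut at hc
  push Not at hc
  obtain ⟨B, hB, hlt⟩ := hc
  have href := refine_refines b D B
  have hb' := refine_col hb hB
  refine ⟨refine b D B, hb', ?_⟩
  set b' := refine b D B
  set u := ce (fc b D) g with hu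
  set u' := ce (fc b' D) g with hu'
  have hu0 : ∀ x, 0 ≤ u x := ce_nonneg _ fun x => (hg x).1
  have hu'0 : ∀ x, 0 ≤ u' x := ce_nonneg _ fun x => (hg x).1
  have x1 := excess_le hD hν hνd (fun x => (hg x).2) hb
  have x2 := excess_le hD hν hνd (fun x => (hg x).2) hb'
  have hη0 := hν.nonneg
  have hMM : (M : ℝ) ^ (2 ^ Fintype.card J) * η
      ≤ ((M * 2 : ℕ) : ℝ) ^ (2 ^ Fintype.card J) * η := by
    gcongr
    omega
  rw [← hu] at x1
  rw [← hu'] at x2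
  set X := ((M * 2 : ℕ) : ℝ) ^ (2 ^ Fintype.card J) * η
  -- the refined conditional expectation correlates with the sets `B`
  have y1 : 𝔼 x, (g x - min (u x) 1) * ind (∀ i ∈ D, B i x)
      = 𝔼 x, (u' x - u x) * ind (∀ i ∈ D, B i x)
        + 𝔼 x, max (u x - 1) 0 * ind (∀ i ∈ D, B i x) := by
    have h1 := ce_mul (fc b' D) g (fun x => ind (∀ i ∈ D, B i x))
      (fun x y h => ind_congr (refine_sets b D B x y h))
    rw [← hu'] at h1
    have h2 : ∀ x, (g x - min (u x) 1) * ind (∀ i ∈ D, B i x)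
        = g x * ind (∀ i ∈ D, B i x) - u x * ind (∀ i ∈ D, B i x)
          + max (u x - 1) 0 * ind (∀ i ∈ D, B i x) := by
      intro x
      rcases le_total (u x) 1 with h | h
      · rw [min_eq_left h, max_eq_right (by linarith)]; ring
      · rw [min_eq_right h, max_eq_left (by linarith)]; ring
    have h3 : ∀ x, (u' x - u x) * ind (∀ i ∈ D, B i x)
        = u' x * ind (∀ i ∈ D, B i x) - u x * ind (∀ i ∈ D, B i x) := fun x => by ring
    rw [ex_congr h2, ex_congr h3, ex_add, ex_sub, ex_sub, h1]
  have y2 : 𝔼 x, max (u x - 1) 0 * ind (∀ i ∈ D, B i x) ≤ 𝔼 x, max (u x - 1) 0 :=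
    ex_mono fun x => mul_le_of_le_one_right (le_max_right _ _) (ind_le_one _)
  have y2' : 0 ≤ 𝔼 x, max (u x - 1) 0 * ind (∀ i ∈ D, B i x) :=
    ex_nonneg fun x => mul_nonneg (le_max_right _ _) (ind_nonneg _)
  have y3 : |𝔼 x, (u' x - u x) * ind (∀ i ∈ D, B i x)| ≤ 𝔼 x, |u' x - u x| := by
    refine (ex_abs _).trans (ex_mono fun x => ?_)
    rw [abs_mul, abs_of_nonneg (ind_nonneg _)]
    exact mul_le_of_le_one_right (abs_nonneg _) (ind_le_one _)
  have y4 : 𝔼 x, |u' x - u x| ≤ 𝔼 x, |(u' x - u x) * ind (u x ≤ 2 ∧ u' x ≤ 2)|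
      + 2 * 𝔼 x, max (u x - 1) 0 + 2 * 𝔼 x, max (u' x - 1) 0 := by
    rw [← ex_mul_left, ← ex_mul_left, ← ex_add, ← ex_add]
    exact ex_mono fun x => abs_sub_le_excess (hu0 x) (hu'0 x)
  rw [y1] at hlt
  have y5 : τ / 4 ≤ 𝔼 x, |(u' x - u x) * ind (u x ≤ 2 ∧ u' x ≤ 2)| := by
    have h1 := abs_add_le (𝔼 x, (u' x - u x) * ind (∀ i ∈ D, B i x))
      (𝔼 x, max (u x - 1) 0 * ind (∀ i ∈ D, B i x))
    rw [abs_of_nonneg y2'] at h1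
    linarith
  have y6 := ex_abs_sq_le (fun x => (u' x - u x) * ind (u x ≤ 2 ∧ u' x ≤ 2))
  have y7 : τ ^ 2 / 16 ≤ 𝔼 x, ((u' x - u x) * ind (u x ≤ 2 ∧ u' x ≤ 2)) ^ 2 := by
    refine le_trans ?_ y6
    have := pow_le_pow_left₀ (by positivity) y5 2
    linarith
  -- the first order term of the energy difference vanishes
  have y8 : 𝔼 x, min (2 * u x) 4 * (u' x - u x) = 0 := by
    have h1 := ce_mul (fc b' D) g (fun x => min (2 * u x) 4)
      (fun x y h => by simp only [hu, ce_congr (fc b D) g (href.fc D x y h)])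
    have h2 := ce_mul (fc b D) g (fun x => min (2 * u x) 4)
      (fun x y h => by simp only [hu, ce_congr (fc b D) g h])
    have h3 : ∀ x, min (2 * u x) 4 * (u' x - u x)
        = u' x * min (2 * u x) 4 - u x * min (2 * u x) 4 := fun x => by ring
    rw [ex_congr h3, ex_sub, hu', h1, hu, h2, sub_self]
  have y9 := ex_mono fun x => hub_bregman (u x) (u' x)
  rw [ex_sub, ex_sub, y8] at y9
  linarith

lemma model_iter [Nonempty α] {D : Finset J} (hD : D.Nonempty) {ν g : (J → α) → ℝ} {η τ : ℝ}
    (hτ : 0 < τ) (hη1 : η ≤ 1) (hν : Cut D (fun x => ν x - 1) η) (hνd : Dep ν D)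
    (hg : ∀ x, 0 ≤ g x ∧ g x ≤ ν x) (n : ℕ) :
    ∀ (b : Finset J → (J → α) → ℕ) (M : ℕ), IsCol b M →
      16 * (((M * 2 ^ (n + 1) : ℕ) : ℝ) ^ (2 ^ Fintype.card J) * η) ≤ τ →
      8 - n * (τ ^ 2 / 16) ≤ 𝔼 x, hub (ce (fc b D) g x) →
      ∃ b' M', IsCol b' M' ∧ Cut D (fun x => g x - min (ce (fc b' D) g x) 1) τ := by
  have hbound : ∀ b : Finset J → (J → α) → ℕ, 𝔼 x, hub (ce (fc b D) g x) ≤ 8 := by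
    intro b
    have h1 := ex_mono fun x => hub_le (ce_nonneg (fc b D) (fun x => (hg x).1) x)
    rw [ex_mul_left, ce_ex] at h1
    have h2 := ex_mono fun x => (hg x).2
    have h3 := (abs_le.1 (hν (fun _ _ => True) (fun _ _ _ _ _ => rfl))).2
    have h4 : ind (∀ i ∈ D, True) = 1 := ind_true fun _ _ => trivial
    simp only [h4, mul_one] at h3
    rw [ex_sub, Fintype.expect_const] at h3
    linarith
  induction n with
  | zero =>
    intro b M hb hη he
    refine ⟨b, M, hb, ?_⟩
    by_contra hc
    obtain ⟨b', -, h⟩ := model_incr hD hτ hν hνd hg hb (by simpa using hη) hc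
    have := hbound b'
    have : 0 < τ ^ 2 := by positivity
    simp at he
    linarith
  | succ n ih =>
    intro b M hb hη he
    by_cases hc : Cut D (fun x => g x - min (ce (fc b D) g x) 1) τ
    · exact ⟨b, M, hb, hc⟩
    · obtain ⟨b', hb', h⟩ := model_incr hD hτ hν hνd hg hb (le_trans (by
        have := hν.nonneg
        gcongr
        exact Nat.le_self_pow (by omega) 2) hη) hc
      refine ih b' _ hb' (by rwa [pow_succ', ← mul_assoc M] at hη) ?_
      push_cast at he
      linarith

/-- Dense model theorem: a function majorised by a pseudorandom weight is close in cut norm to a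
`[0, 1]`-valued function. -/
lemma dense_model {τ : ℝ} (hτ : 0 < τ) : ∃ η : ℝ, 0 < η ∧
    ∀ (α : Type) [Fintype α] [Nonempty α] (D : Finset J), D.Nonempty →
    ∀ ν g : (J → α) → ℝ, Dep ν D → (∀ x, 0 ≤ g x ∧ g x ≤ ν x) → Cut D (fun x => ν x - 1) η →
    ∃ g' : (J → α) → ℝ, (∀ x, 0 ≤ g' x ∧ g' x ≤ 1) ∧ Dep g' D ∧
      Cut D (fun x => g x - g' x) τ := by
  set n := ⌈8 / (τ ^ 2 / 16)⌉₊ with hn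
  set N : ℝ := ((1 * 2 ^ (n + 1) : ℕ) : ℝ) ^ (2 ^ Fintype.card J) with hN
  have hN0 : 0 < N := by positivity
  refine ⟨min 1 (τ / (16 * N)), lt_min one_pos (by positivity), ?_⟩
  intro α _ _ D hD ν g hνd hg hν
  obtain ⟨b, M, hb, hc⟩ := model_iter hD hτ (min_le_left _ _) hν hνd hg n (fun _ _ => 0) 1
    ⟨fun _ _ _ _ => rfl, fun _ _ => one_pos⟩ (by
      have h1 : min 1 (τ / (16 * N)) ≤ τ / (16 * N) := min_le_right _ _
      rw [le_div_iff₀ (by positivity)] at h1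
      rw [← hN]
      linarith) (by
      have h1 := Nat.le_ceil (8 / (τ ^ 2 / 16))
      rw [← hn, div_le_iff₀ (by positivity)] at h1
      have h2 : 0 ≤ 𝔼 x, hub (ce (fc (fun _ _ => 0 : Finset J → (J → α) → ℕ) D) g x) :=
        ex_nonneg fun x => hub_nonneg (ce_nonneg _ (fun x => (hg x).1) x)
      linarith)
  refine ⟨fun x => min (ce (fc b D) g x) 1, fun x =>
    ⟨le_min (ce_nonneg _ (fun x => (hg x).1) x) zero_le_one, min_le_right _ _⟩, ?_, hc⟩
  intro x y hxy
  simp only [ce_fc_dep hb.dep D g x y hxy]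

end model

end RAR

namespace RAR

open scoped BigOperators

/-! ### The Gowers-Cauchy-Schwarz inequality -/

section gcs

variable {J : Type} [Fintype J] [DecidableEq J] {α : Type} [Fintype α]

/-- One application of Cauchy-Schwarz, doubling the coordinate `j`: the factor `P`, which
ignores coordinate `j`, is replaced by its majorant `W`. -/
lemma cs_step {Q : Type} [Fintype Q] (j : J) (P W R : Q → (J → α) → (J → α) → ℝ)
    (hPW : ∀ q x y, |P q x y| ≤ W q x y)
    (hPx : ∀ q x y s, P q (Function.update x j s) y = P q x y)
    (hWx : ∀ q x y s, W q (Function.update x j s) y = W q x y)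
    (hWy : ∀ q x y s, W q x (Function.update y j s) = W q x y)
    (hRy : ∀ q x y s, R q x (Function.update y j s) = R q x y) :
    (𝔼 q, 𝔼 x, 𝔼 y, P q x y * R q x y) ^ 2
      ≤ (𝔼 q, 𝔼 x, 𝔼 y, W q x y) *
        𝔼 q, 𝔼 x, 𝔼 y, W q x y * (R q x y * R q (Function.update x j (y j)) y) := by
  have e1 : 𝔼 q, 𝔼 x, 𝔼 y, P q x y * R q x y
      = 𝔼 q, 𝔼 x, 𝔼 y, P q x y * 𝔼 s, R q (Function.update x j s) y := by
    refine ex_congr fun q => ?_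
    rw [ex_comm, ex_comm (fun x y => P q x y * _)]
    refine ex_congr fun y => ?_
    rw [ex_update j]
    refine ex_congr fun x => ?_
    rw [← ex_mul_left]
    exact ex_congr fun s => by rw [hPx]
  have e2 : 𝔼 q, 𝔼 x, 𝔼 y, W q x y * (R q x y * R q (Function.update x j (y j)) y)
      = 𝔼 q, 𝔼 x, 𝔼 y, W q x y * (𝔼 s, R q (Function.update x j s) y) ^ 2 := by
    refine ex_congr fun q => ?_
    rw [ex_update j]
    refine ex_congr fun x => ?_
    rw [ex_comm]
    rw [ex_update j]
    conv_lhs =>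
      enter [2, y]
      rw [ex_comm]
    refine ex_congr fun y => ?_
    rw [sq, Fintype.expect_mul_expect, ← ex_mul_left]
    refine ex_congr fun s => ?_
    rw [← ex_mul_left]
    refine ex_congr fun t => ?_
    simp only [hWx, hWy, hRy, Function.update_self, Function.update_idem]
  have e3 := ex_cs_weight (fun z : Q × (J → α) × (J → α) => W z.1 z.2.1 z.2.2)
    (fun z => |𝔼 s, R z.1 (Function.update z.2.1 j s) z.2.2|)
    (fun z => (abs_nonneg _).trans (hPW _ _ _))
  simp only [ex_prod, sq_abs] at e3
  rw [e1, e2]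
  refine le_trans ?_ e3
  rw [← sq_abs]
  refine pow_le_pow_left₀ (abs_nonneg _) ?_ 2
  refine (ex_abs _).trans (ex_mono fun q => ?_)
  refine (ex_abs _).trans (ex_mono fun x => ?_)
  refine (ex_abs _).trans (ex_mono fun y => ?_)
  rw [abs_mul]
  exact mul_le_mul_of_nonneg_right (hPW _ _ _) (abs_nonneg _)

lemma piecewise_insert_update (j : J) (A : Finset J) (x y : J → α) :
    A.piecewise y (Function.update x j (y j)) = (insert j A).piecewise y x := by
  ext i
  by_cases hA : i ∈ A
  · simp [hA, Finset.mem_insert]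
  · by_cases hi : i = j
    · subst hi; simp [hA]
    · simp [hA, hi]

lemma piecewise_update_right {j : J} {A : Finset J} (hj : j ∉ A) (x y : J → α) (s : α) :
    A.piecewise y (Function.update x j s) = Function.update (A.piecewise y x) j s := by
  ext i
  by_cases hi : i = j
  · subst hi; simp [hj]
  · by_cases hA : i ∈ A <;> simp [hA, hi]

lemma piecewise_update_left {j : J} {A : Finset J} (hj : j ∉ A) (x y : J → α) (s : α) :
    A.piecewise (Function.update y j s) x = A.piecewise y x := by
  ext i
  by_cases hA : i ∈ A
  · have : i ≠ j := by rintro rfl; exact hj hA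
    simp [hA, this]
  · simp [hA]

/-- The integrand after the coordinates in `S` have been doubled by Cauchy-Schwarz. -/
noncomputable def gcsInt {Q : Type} (u : Q → (J → α) → ℝ) (G W : J → Q → (J → α) → ℝ)
    (e S : Finset J) (q : Q) (x y : J → α) : ℝ :=
  (∏ A ∈ S.powerset, (u q (A.piecewise y x) * ∏ i ∈ e \ S, G i q (A.piecewise y x))) *
    ∏ i ∈ S, ∏ A ∈ (S.erase i).powerset, W i q (A.piecewise y x)

/-- Gowers-Cauchy-Schwarz: the factors `G i`, each of which ignores the coordinate `i`, are
replaced by majorants `W i` at the cost of doubling all coordinates. -/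
lemma gcs {Q : Type} [Fintype Q] (u : Q → (J → α) → ℝ) (G W : J → Q → (J → α) → ℝ)
    (e : Finset J) (hGW : ∀ i ∈ e, ∀ q x, 0 ≤ G i q x ∧ G i q x ≤ W i q x)
    (hG : ∀ i ∈ e, ∀ q, Indep i (G i q)) (hW : ∀ i ∈ e, ∀ q, Indep i (W i q))
    (hE : ∀ j ∈ e, ∀ S, S ⊆ e.erase j →
      𝔼 q, 𝔼 x, 𝔼 y, ∏ A ∈ S.powerset, W j q (A.piecewise y x) ≤ 2) (S : Finset J) :
    S ⊆ e → (|𝔼 q, 𝔼 x, 𝔼 y, gcsInt u G W e ∅ q x y| / 2) ^ 2 ^ S.card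
      ≤ |𝔼 q, 𝔼 x, 𝔼 y, gcsInt u G W e S q x y| / 2 := by
  induction S using Finset.induction_on with
  | empty => intro _; simp
  | insert j S hj ih =>
    intro hS
    have hje : j ∈ e := hS (Finset.mem_insert_self _ _)
    have hSe : S ⊆ e := (Finset.subset_insert _ _).trans hS
    have ih := ih hSe
    have hjA : ∀ A ∈ S.powerset, j ∉ A := fun A hA h => hj (Finset.mem_powerset.1 hA h)
    have hjA' : ∀ i, ∀ A ∈ (S.erase i).powerset, j ∉ A := fun i A hA h =>
      hj (Finset.mem_of_mem_erase (Finset.mem_powerset.1 hA h))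
    set R : Q → (J → α) → (J → α) → ℝ := fun q x y =>
      (∏ A ∈ S.powerset,
        (u q (A.piecewise y x) * ∏ i ∈ e \ insert j S, G i q (A.piecewise y x))) *
      ∏ i ∈ S, ∏ A ∈ (S.erase i).powerset, W i q (A.piecewise y x) with hR
    have hes : e \ S = insert j (e \ insert j S) := by
      ext i
      simp only [Finset.mem_sdiff, Finset.mem_insert]
      by_cases hi : i = j
      · subst hi; simp [hje, hj]
      · simp [hi]
    have h1 : ∀ q x y, gcsInt u G W e S q x y
        = (∏ A ∈ S.powerset, G j q (A.piecewise y x)) * R q x y := by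
      intro q x y
      rw [hR, gcsInt, ← mul_assoc, ← Finset.prod_mul_distrib, hes]
      congr 1
      refine Finset.prod_congr rfl fun A _ => ?_
      rw [Finset.prod_insert (by simp)]; ring
    have h2 : ∀ q x y, gcsInt u G W e (insert j S) q x y
        = (∏ A ∈ S.powerset, W j q (A.piecewise y x)) *
          (R q x y * R q (Function.update x j (y j)) y) := by
      intro q x y
      have e1 : ∀ i ∈ S, ∏ A ∈ ((insert j S).erase i).powerset, W i q (A.piecewise y x)
          = (∏ A ∈ (S.erase i).powerset, W i q (A.piecewise y x)) *
            ∏ A ∈ (S.erase i).powerset, W i q ((insert j A).piecewise y x) := by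
        intro i hi
        have hij : i ≠ j := by rintro rfl; exact hj hi
        rw [Finset.erase_insert_of_ne hij.symm, Finset.prod_powerset_insert]
        exact fun h => hj (Finset.mem_of_mem_erase h)
      rw [gcsInt, Finset.prod_insert hj, Finset.erase_insert hj, Finset.prod_powerset_insert hj,
        Finset.prod_congr rfl e1, Finset.prod_mul_distrib (s := S)]
      simp only [hR, piecewise_insert_update]
      ring
    have hcs := cs_step j (fun q x y => ∏ A ∈ S.powerset, G j q (A.piecewise y x))
      (fun q x y => ∏ A ∈ S.powerset, W j q (A.piecewise y x)) R
      (fun q x y => by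
        rw [abs_of_nonneg (Finset.prod_nonneg fun A _ => (hGW j hje _ _).1)]
        exact Finset.prod_le_prod (fun A _ => (hGW j hje _ _).1) fun A _ => (hGW j hje _ _).2)
      (fun q x y s => Finset.prod_congr rfl fun A hA => by
        rw [piecewise_update_right (hjA A hA), hG j hje])
      (fun q x y s => Finset.prod_congr rfl fun A hA => by
        rw [piecewise_update_right (hjA A hA), hW j hje])
      (fun q x y s => Finset.prod_congr rfl fun A hA => by
        rw [piecewise_update_left (hjA A hA)])
      (fun q x y s => by
        simp only [hR]
        congr 1
        · exact Finset.prod_congr rfl fun A hA => by rw [piecewise_update_left (hjA A hA)]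
        · exact Finset.prod_congr rfl fun i _ => Finset.prod_congr rfl fun A hA => by
            rw [piecewise_update_left (hjA' i A hA)])
    simp only [← h1, ← h2] at hcs
    have hE' := hE j hje S (fun i hi => Finset.mem_erase.2
      ⟨fun h => hj (h ▸ hi), hSe hi⟩)
    have hE0 : 0 ≤ 𝔼 q, 𝔼 x, 𝔼 y, ∏ A ∈ S.powerset, W j q (A.piecewise y x) :=
      ex_nonneg fun q => ex_nonneg fun x => ex_nonneg fun y => Finset.prod_nonneg fun A _ =>
        (hGW j hje _ _).1.trans (hGW j hje _ _).2
    rw [Finset.card_insert_of_notMem hj, pow_succ, pow_mul]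
    have h3 := pow_le_pow_left₀ (by positivity) ih 2
    have h4 := le_abs_self (𝔼 q, 𝔼 x, 𝔼 y, gcsInt u G W e (insert j S) q x y)
    have h5 := abs_nonneg (𝔼 q, 𝔼 x, 𝔼 y, gcsInt u G W e (insert j S) q x y)
    refine h3.trans ?_
    rw [div_pow, sq_abs]
    nlinarith

end gcs

end RAR

namespace RAR

open scoped BigOperators

/-! ### Consequences of the linear forms condition -/

section lin

variable {J : Type} [Fintype J] [DecidableEq J] {α : Type} [Fintype α]

/-- The linear forms condition for weights `ν j` on the edges `univ.erase j`, regarded as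
functions of all coordinates.  The vertex `ω` of the cube is encoded by the set `A` of coordinates
taken from `y`. -/
def Lin (ν : J → (J → α) → ℝ) (η : ℝ) : Prop :=
  ∀ n : J → Finset J → Bool,
    |𝔼 x, 𝔼 y, (∏ j, ∏ A ∈ (univ.erase j).powerset,
      if n j A then ν j (A.piecewise y x) else 1) - 1| ≤ η

/-- The linear forms condition with the role of the edge opposite to `a` singled out and the
second copy of the coordinate `a` made a separate variable. -/
lemma Lin.split {ν : J → (J → α) → ℝ} {η : ℝ} (hν : Lin ν η) (a : J) (B : Finset J → Bool)
    (c0 c1 : J → Finset J → Bool) :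
    |𝔼 v : α, 𝔼 x, 𝔼 y,
      (∏ A ∈ (univ.erase a).powerset, if B A then ν a (A.piecewise y x) else 1) *
      (∏ i ∈ univ.erase a, ∏ A ∈ ((univ.erase a).erase i).powerset,
        (if c0 i A then ν i (A.piecewise y x) else 1) *
        (if c1 i A then ν i (Function.update (A.piecewise y x) a v) else 1)) - 1| ≤ η := by
  have h := hν (fun i A => if i = a then B A else if a ∈ A then c1 i (A.erase a) else c0 i A)
  convert h using 3
  rw [ex_comm]
  refine ex_congr fun x => ?_
  rw [ex_update a (fun y => ∏ j, _), ex_comm]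
  refine ex_congr fun y => ex_congr fun v => ?_
  rw [← Finset.mul_prod_erase univ _ (Finset.mem_univ a)]
  congr 1
  · refine Finset.prod_congr rfl fun A hA => ?_
    have haA : a ∉ A := fun h => by simpa using Finset.mem_powerset.1 hA h
    rw [if_pos rfl, piecewise_update_left haA]
  · refine Finset.prod_congr rfl fun i hi => ?_
    have hia : i ≠ a := by simpa using hi
    have e1 : univ.erase i = insert a ((univ.erase a).erase i) := by
      ext l
      simp only [Finset.mem_erase, Finset.mem_univ, and_true, Finset.mem_insert]
      by_cases hl : l = a
      · subst hl; simp [hia.symm]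
      · simp [hl]
    rw [e1, Finset.prod_powerset_insert (by simp), ← Finset.prod_mul_distrib]
    refine Finset.prod_congr rfl fun A hA => ?_
    have haA : a ∉ A := fun h => by simpa using Finset.mem_powerset.1 hA h
    have e2 : (insert a A).piecewise (Function.update y a v) x
        = Function.update (A.piecewise y x) a v := by
      have := piecewise_insert_update a A x (Function.update y a v)
      rw [← this, Function.update_self, piecewise_update_right haA, piecewise_update_left haA]
    simp only [if_neg hia, if_neg haA, if_pos (Finset.mem_insert_self a A),
      Finset.erase_insert haA, e2, piecewise_update_left haA]

/-- Expanding the product of the factors `ν a - 1` over the cube. -/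
lemma Lin.box {ν : J → (J → α) → ℝ} {η : ℝ} (hν : Lin ν η) (a : J)
    (c0 c1 : J → Bool) :
    |𝔼 v : α, 𝔼 x, 𝔼 y,
      (∏ A ∈ (univ.erase a).powerset, (ν a (A.piecewise y x) - 1)) *
      (∏ i ∈ univ.erase a, ∏ A ∈ ((univ.erase a).erase i).powerset,
        (if c0 i then ν i (A.piecewise y x) else 1) *
        (if c1 i then ν i (Function.update (A.piecewise y x) a v) else 1))|
      ≤ 2 ^ 2 ^ (univ.erase a).card * η := by
  set P := (univ.erase a).powerset with hP
  set K : α → (J → α) → (J → α) → ℝ := fun v x y =>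
    ∏ i ∈ univ.erase a, ∏ A ∈ ((univ.erase a).erase i).powerset,
        (if c0 i then ν i (A.piecewise y x) else 1) *
        (if c1 i then ν i (Function.update (A.piecewise y x) a v) else 1) with hK
  have h1 : ∀ t ∈ P.powerset, |(𝔼 v : α, 𝔼 x, 𝔼 y,
      (∏ A ∈ t, ν a (A.piecewise y x)) * K v x y) - 1| ≤ η := by
    intro t ht
    have := hν.split a (fun A => decide (A ∈ t)) (fun i _ => c0 i) (fun i _ => c1 i)
    simp only [decide_eq_true_eq, Finset.prod_ite_mem] at this
    rwa [Finset.inter_eq_right.2 (Finset.mem_powerset.1 ht)] at this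
  have h2 : ∀ v x y, (∏ A ∈ P, (ν a (A.piecewise y x) - 1)) * K v x y
      = ∑ t ∈ P.powerset, (∏ A ∈ P \ t, (-1 : ℝ)) *
        ((∏ A ∈ t, ν a (A.piecewise y x)) * K v x y) := by
    intro v x y
    simp only [sub_eq_add_neg]
    rw [Finset.prod_add, Finset.sum_mul]
    exact Finset.sum_congr rfl fun t _ => by ring
  have h3 : ∑ t ∈ P.powerset, (∏ A ∈ P \ t, (-1 : ℝ)) = 0 := by
    have := Finset.prod_add (fun _ => (1 : ℝ)) (fun _ => -1) P
    simp only [Finset.prod_const_one, one_mul] at this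
    rw [← this]
    exact Finset.prod_eq_zero (Finset.empty_mem_powerset _) (by norm_num)
  have h4 : 𝔼 v : α, 𝔼 x, 𝔼 y, (∏ A ∈ P, (ν a (A.piecewise y x) - 1)) * K v x y
      = ∑ t ∈ P.powerset, (∏ A ∈ P \ t, (-1 : ℝ)) *
        ((𝔼 v : α, 𝔼 x, 𝔼 y, (∏ A ∈ t, ν a (A.piecewise y x)) * K v x y) - 1) := by
    simp only [mul_sub, Finset.sum_sub_distrib, mul_one, h3, sub_zero, h2, ex_sum, ex_mul_left]
  rw [h4]
  refine (Finset.abs_sum_le_sum_abs _ _).trans ?_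
  refine (Finset.sum_le_card_nsmul _ _ η fun t ht => ?_).trans (le_of_eq ?_)
  · rw [abs_mul, Finset.prod_const, abs_pow, abs_neg, abs_one, one_pow, one_mul]
    exact h1 t ht
  · rw [Finset.card_powerset, Finset.card_powerset, nsmul_eq_mul]; push_cast; rfl

lemma Lin.mono {ν : J → (J → α) → ℝ} {η η' : ℝ} (hν : Lin ν η) (h : η ≤ η') : Lin ν η' :=
  fun n => (hν n).trans h

lemma Lin.nonneg {ν : J → (J → α) → ℝ} {η : ℝ} (hν : Lin ν η) : 0 ≤ η :=
  (abs_nonneg _).trans (hν fun _ _ => false)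

/-- A weight that is either the function `f` or the constant `1`. -/
def wt (b : Bool) (f : (J → α) → ℝ) (x : J → α) : ℝ := if b then f x else 1

/-- The function `ν a - 1` is nearly orthogonal to products of functions that ignore one of the
other coordinates and are majorised by `1` or by the corresponding weights, even when two copies
of the coordinate `a` occur. -/
lemma lin_corr {τ : ℝ} (hτ : 0 < τ) : ∃ η : ℝ, 0 < η ∧
    ∀ (α : Type) [Fintype α] (ν : J → (J → α) → ℝ), (∀ j x, 0 ≤ ν j x) →
    (∀ j, Indep j (ν j)) → Lin ν η → ∀ (a : J) (c0 c1 : J → Bool) (g0 g1 : J → (J → α) → ℝ),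
    (∀ i ∈ univ.erase a, ∀ x, 0 ≤ g0 i x ∧ g0 i x ≤ wt (c0 i) (ν i) x) →
    (∀ i ∈ univ.erase a, ∀ x, 0 ≤ g1 i x ∧ g1 i x ≤ wt (c1 i) (ν i) x) →
    (∀ i ∈ univ.erase a, Indep i (g0 i)) → (∀ i ∈ univ.erase a, Indep i (g1 i)) →
    |𝔼 v, 𝔼 x, (ν a x - 1) * ∏ i ∈ univ.erase a, g0 i x * g1 i (Function.update x a v)| ≤ τ := by
  set N := 2 ^ (Fintype.card J - 1) with hN
  refine ⟨min 1 ((τ / 2) ^ N / 2 ^ N), by positivity, ?_⟩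
  intro α _ ν hν0 hνI hν a c0 c1 g0 g1 h0 h1 hI0 hI1
  have hη := hν.nonneg
  have hcard : (univ.erase a).card = Fintype.card J - 1 := by
    rw [Finset.card_erase_of_mem (Finset.mem_univ _), Finset.card_univ]
  have hw0 : ∀ c i x, 0 ≤ wt c (ν i) x := fun c i x => by
    unfold wt; split_ifs
    · exact hν0 i x
    · exact zero_le_one
  have hwI : ∀ c i, Indep i (wt c (ν i)) := fun c i x v => by
    unfold wt; rw [hνI i]
  have hupd : ∀ i ∈ univ.erase a, ∀ (f : (J → α) → ℝ) (v : α), Indep i f →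
      Indep i (fun x => f (Function.update x a v)) := fun i hi f v hf x s => by
    have hia : i ≠ a := by simpa using hi
    simp only [Function.update_comm hia]
    exact hf _ _
  have key := gcs (Q := α) (fun _ x => ν a x - 1)
    (fun i v x => g0 i x * g1 i (Function.update x a v))
    (fun i v x => wt (c0 i) (ν i) x * wt (c1 i) (ν i) (Function.update x a v)) (univ.erase a)
    (fun i hi v x => ⟨mul_nonneg (h0 i hi _).1 (h1 i hi _).1,
      mul_le_mul (h0 i hi _).2 (h1 i hi _).2 (h1 i hi _).1 (hw0 _ _ _)⟩)
    (fun i hi v x s => by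
      have := hupd i hi _ v (hI1 i hi) x s
      simp only at this
      simp only [this, hI0 i hi x s])
    (fun i hi v x s => by
      have := hupd i hi _ v (hwI (c1 i) i) x s
      simp only at this
      simp only [this, hwI (c0 i) i x s])
    (fun j hj S hS => by
      have h := hν.split a (fun _ => false) (fun i A => decide (i = j ∧ A ⊆ S) && c0 i)
        (fun i A => decide (i = j ∧ A ⊆ S) && c1 i)
      have h2 := (abs_le.1 (h.trans (min_le_left _ _))).2
      refine le_of_eq_of_le ?_ (sub_le_iff_le_add.1 h2 |>.trans_eq (by norm_num))
      refine ex_congr fun v => ex_congr fun x => ex_congr fun y => ?_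
      rw [Finset.prod_eq_single_of_mem j hj]
      · simp only [Bool.false_eq_true, if_false, Finset.prod_const_one, one_mul]
        rw [← Finset.prod_subset (Finset.powerset_mono.2 hS)]
        · refine Finset.prod_congr rfl fun A hA => ?_
          simp [Finset.mem_powerset.1 hA, wt]
        · intro A _ hA
          have : ¬ A ⊆ S := fun h => hA (Finset.mem_powerset.2 h)
          simp [this]
      · intro i _ hij
        simp [hij])
    (univ.erase a) subset_rfl
  have e1 : 𝔼 v, 𝔼 x, 𝔼 y, gcsInt (fun _ x => ν a x - 1)
      (fun i v x => g0 i x * g1 i (Function.update x a v))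
      (fun i v x => wt (c0 i) (ν i) x * wt (c1 i) (ν i) (Function.update x a v)) (univ.erase a)
      ∅ v x y
      = 𝔼 v, 𝔼 x, (ν a x - 1) * ∏ i ∈ univ.erase a, g0 i x * g1 i (Function.update x a v) := by
    refine ex_congr fun v => ex_congr fun x => ?_
    have : Nonempty (J → α) := ⟨x⟩
    simp [gcsInt]
  have e2 := hν.box a c0 c1
  simp only [gcsInt, Finset.sdiff_self, Finset.prod_empty, mul_one] at key e1
  rw [e1] at key
  set T := 𝔼 v, 𝔼 x, (ν a x - 1) * ∏ i ∈ univ.erase a, g0 i x * g1 i (Function.update x a v)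
  have key2 := key.trans (div_le_div_of_nonneg_right e2 (by norm_num))
  rw [hcard, ← hN] at key2
  by_contra hc
  push Not at hc
  have h5 : (τ / 2) ^ N < (|T| / 2) ^ N :=
    pow_lt_pow_left₀ (by linarith) (by positivity) (by positivity)
  have h6 : (2 : ℝ) ^ N * min 1 ((τ / 2) ^ N / 2 ^ N) ≤ (τ / 2) ^ N := by
    calc (2 : ℝ) ^ N * min 1 ((τ / 2) ^ N / 2 ^ N) ≤ 2 ^ N * ((τ / 2) ^ N / 2 ^ N) := by
          gcongr; exact min_le_right _ _
      _ = (τ / 2) ^ N := by field_simp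
  have h7 : 0 < (τ / 2) ^ N := by positivity
  linarith

end lin

end RAR

namespace RAR

open scoped BigOperators

/-! ### Relative counting -/

section count

variable {J : Type} [Fintype J] [DecidableEq J] {α : Type} [Fintype α]

/-- The average of `f` over the coordinate `a`. -/
noncomputable def fib (a : J) (f : (J → α) → ℝ) (x : J → α) : ℝ :=
  𝔼 v, f (Function.update x a v)

/-- The average over the coordinate `a` of the product of all factors but that of index `a`. -/
noncomputable def pr (a : J) (f : J → (J → α) → ℝ) : (J → α) → ℝ :=
  fib a fun x => ∏ i ∈ univ.erase a, f i x

lemma fib_indep (a : J) (f : (J → α) → ℝ) : Indep a (fib a f) := fun x v => by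
  simp only [fib, Function.update_idem]

lemma fib_mul {a : J} {h : (J → α) → ℝ} (hh : Indep a h) (f : (J → α) → ℝ) :
    𝔼 x, h x * f x = 𝔼 x, h x * fib a f x := by
  rw [ex_update a]
  refine ex_congr fun x => ?_
  rw [fib, ← ex_mul_left]
  exact ex_congr fun v => by rw [hh]

lemma ex_prod_eq {a : J} {f : J → (J → α) → ℝ} (hf : Indep a (f a)) :
    𝔼 x, ∏ j, f j x = 𝔼 x, f a x * pr a f x := by
  rw [pr, ← fib_mul hf]
  exact ex_congr fun x => (Finset.mul_prod_erase univ _ (Finset.mem_univ a)).symm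

lemma pr_nonneg {a : J} {f : J → (J → α) → ℝ} (hf : ∀ j x, 0 ≤ f j x) (x : J → α) :
    0 ≤ pr a f x := ex_nonneg fun _ => Finset.prod_nonneg fun _ _ => hf _ _

lemma pr_mono {a : J} {f g : J → (J → α) → ℝ} (hf : ∀ j x, 0 ≤ f j x)
    (hfg : ∀ i ∈ univ.erase a, ∀ x, f i x ≤ g i x) (x : J → α) : pr a f x ≤ pr a g x :=
  ex_mono fun _ => Finset.prod_le_prod (fun _ _ => hf _ _) fun i hi => hfg i hi _

lemma pr_one [Nonempty α] (a : J) (x : J → α) : pr a (fun _ _ => (1 : ℝ)) x = 1 := by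
  simp [pr, fib]

lemma ex_two {a : J} {h : (J → α) → ℝ} (hh : Indep a h) (g0 g1 : J → (J → α) → ℝ) :
    𝔼 v, 𝔼 x, h x * ∏ i ∈ univ.erase a, g0 i x * g1 i (Function.update x a v)
      = 𝔼 x, h x * (pr a g0 x * pr a g1 x) := by
  have h1 : ∀ x, 𝔼 v, h x * ∏ i ∈ univ.erase a, g0 i x * g1 i (Function.update x a v)
      = (h x * pr a g1 x) * ∏ i ∈ univ.erase a, g0 i x := fun x => by
    simp only [Finset.prod_mul_distrib, ← mul_assoc, ex_mul_left]
    rw [pr, fib]; ring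
  rw [ex_comm, ex_congr h1, fib_mul (a := a)]
  · exact ex_congr fun x => by simp only [pr]; ring
  · intro x v
    simp only [hh x v, pr, fib_indep a _ x v]

/-- The sets in the definition of the cut norm may be replaced by `[0, 1]`-valued functions. -/
lemma Cut.funs [Nonempty α] {D : Finset J} {u : (J → α) → ℝ} {τ : ℝ} (hu : Cut D u τ)
    (hd : Dep u D) (w : J → (J → α) → ℝ) (hw : ∀ i ∈ D, ∀ x, 0 ≤ w i x ∧ w i x ≤ 1)
    (hI : ∀ i ∈ D, Indep i (w i)) : |𝔼 x, u x * ∏ i ∈ D, w i x| ≤ τ := by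
  have key : ∀ S ⊆ D, ∀ B : J → (J → α) → Prop, (∀ i ∈ D, Indep i (B i)) →
      |𝔼 x, (u x * ∏ i ∈ S, w i x) * ind (∀ i ∈ D \ S, B i x)| ≤ τ := by
    intro S
    induction S using Finset.induction_on with
    | empty =>
      intro _ B hB
      simpa using hu.indep hd B hB
    | insert j S hj ih =>
      intro hS B hB
      have hjD : j ∈ D := hS (Finset.mem_insert_self _ _)
      have ih := ih ((Finset.subset_insert _ _).trans hS)
      set K : (J → α) → ℝ := fun x =>
        (u x * ∏ i ∈ S, w i x) * ind (∀ i ∈ D \ insert j S, B i x) with hK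
      have e1 : 𝔼 x, (u x * ∏ i ∈ insert j S, w i x) * ind (∀ i ∈ D \ insert j S, B i x)
          = 𝔼 x, w j x * fib j K x := by
        rw [← fib_mul (hI j hjD)]
        exact ex_congr fun x => by rw [Finset.prod_insert hj, hK]; ring
      have e2 : ∀ p : (J → α) → Prop, Indep j p → |𝔼 x, ind (p x) * fib j K x| ≤ τ := by
        intro p hp
        rw [← fib_mul (hp.comp ind)]
        have := ih (fun i x => if i = j then p x else B i x) (fun i hi => by
          by_cases hij : i = j
          · subst hij; simpa using hp
          · simpa [hij] using hB i hi)
        refine le_of_eq_of_le (congrArg _ (ex_congr fun x => ?_)) this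
        have : D \ S = insert j (D \ insert j S) := by
          ext i
          simp only [Finset.mem_sdiff, Finset.mem_insert]
          by_cases hi : i = j
          · subst hi; simp [hjD, hj]
          · simp [hi]
        have e3 : ind (∀ i ∈ D \ S, if i = j then p x else B i x)
            = ind (p x) * ind (∀ i ∈ D \ insert j S, B i x) := by
          rw [← ind_and]
          refine ind_congr ?_
          rw [this, Finset.forall_mem_insert, if_pos rfl]
          refine and_congr_right fun _ => forall₂_congr fun i hi => ?_
          have : i ≠ j := by rintro rfl; simp at hi
          rw [if_neg this]
        rw [e3, hK]; ring
      rw [e1]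
      have hF := fib_indep j K
      have p1 := (abs_le.1 (e2 (fun x => 0 < fib j K x) (hF.comp fun r => 0 < r))).2
      have p2 := (abs_le.1 (e2 (fun x => fib j K x < 0) (hF.comp fun r => r < 0))).1
      refine abs_le.2 ⟨p2.trans (ex_mono fun x => ?_), (ex_mono fun x => ?_).trans p1⟩
      · obtain ⟨w0, w1⟩ := hw j hjD x
        by_cases h : fib j K x < 0
        · rw [ind_true h]; nlinarith
        · rw [ind_false h]; nlinarith
      · obtain ⟨w0, w1⟩ := hw j hjD x
        by_cases h : 0 < fib j K x
        · rw [ind_true h]; nlinarith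
        · rw [ind_false h]; nlinarith
  have := key D subset_rfl (fun _ _ => True) (fun _ _ _ _ => rfl)
  simpa [ind_true] using this

/-- Counting for bounded functions. -/
lemma dense_count [Nonempty α] {g g' : J → (J → α) → ℝ} {τ : ℝ}
    (hg : ∀ j x, 0 ≤ g j x ∧ g j x ≤ 1) (hg' : ∀ j x, 0 ≤ g' j x ∧ g' j x ≤ 1)
    (hI : ∀ j, Indep j (g j)) (hI' : ∀ j, Indep j (g' j))
    (hc : ∀ j, Cut (univ.erase j) (fun x => g j x - g' j x) τ) :
    |𝔼 x, ∏ j, g j x - 𝔼 x, ∏ j, g' j x| ≤ Fintype.card J * τ := by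
  have key : ∀ S : Finset J,
      |𝔼 x, ∏ j, (if j ∈ S then g j x else g' j x) - 𝔼 x, ∏ j, g' j x| ≤ S.card * τ := by
    intro S
    induction S using Finset.induction_on with
    | empty => simp
    | insert a S ha ih =>
      have h1 := (hc a).funs (fun x y hxy => by
          simp only [(hI a).dep x y hxy, (hI' a).dep x y hxy])
        (fun j x => if j ∈ S then g j x else g' j x)
        (fun i _ x => by split_ifs; exacts [hg i x, hg' i x])
        (fun i _ x v => by simp only [hI i x v, hI' i x v])
      have h2 : 𝔼 x, ∏ j, (if j ∈ insert a S then g j x else g' j x)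
          - 𝔼 x, ∏ j, (if j ∈ S then g j x else g' j x)
          = 𝔼 x, (g a x - g' a x) * ∏ i ∈ univ.erase a, (if i ∈ S then g i x else g' i x) := by
        rw [← ex_sub]
        refine ex_congr fun x => ?_
        rw [← Finset.mul_prod_erase univ _ (Finset.mem_univ a),
          ← Finset.mul_prod_erase univ (fun j => if j ∈ S then g j x else g' j x)
            (Finset.mem_univ a), if_pos (Finset.mem_insert_self _ _), if_neg ha, sub_mul]
        congr 2
        refine Finset.prod_congr rfl fun i hi => ?_
        have : i ≠ a := by simpa using hi
        simp [this]
      rw [← h2] at h1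
      rw [Finset.card_insert_of_notMem ha]
      push_cast
      have h3 := abs_add_le (𝔼 x, ∏ j, (if j ∈ insert a S then g j x else g' j x)
          - 𝔼 x, ∏ j, (if j ∈ S then g j x else g' j x))
        (𝔼 x, ∏ j, (if j ∈ S then g j x else g' j x) - 𝔼 x, ∏ j, g' j x)
      rw [sub_add_sub_cancel] at h3
      linarith
  simpa using key univ

/-- The linear forms condition says that the average of the product of the weights over one
coordinate has mean and second moment close to `1`. -/
lemma Lin.mean [Nonempty α] {ν : J → (J → α) → ℝ} {η : ℝ} (hν : Lin ν η) (a : J)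
    (c0 c1 : J → Bool) :
    |𝔼 x, pr a (fun i => wt (c0 i) (ν i)) x * pr a (fun i => wt (c1 i) (ν i)) x - 1| ≤ η := by
  have h := hν.split a (fun _ => false) (fun i A => decide (A = ∅) && c0 i)
    (fun i A => decide (A = ∅) && c1 i)
  have h2 := ex_two (a := a) (h := fun _ : J → α => (1 : ℝ)) (fun _ _ => rfl)
    (fun i => wt (c0 i) (ν i)) (fun i => wt (c1 i) (ν i))
  simp only [one_mul] at h2
  rw [← h2]
  convert h using 3
  refine ex_congr fun v => ex_congr fun x => ?_
  have : ∀ y : J → α, (∏ i ∈ univ.erase a, ∏ A ∈ ((univ.erase a).erase i).powerset,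
        (if (decide (A = ∅) && c0 i) = true then ν i (A.piecewise y x) else 1) *
        (if (decide (A = ∅) && c1 i) = true then ν i (Function.update (A.piecewise y x) a v)
          else 1)) = ∏ i ∈ univ.erase a, wt (c0 i) (ν i) x *
            wt (c1 i) (ν i) (Function.update x a v) := by
    intro y
    refine Finset.prod_congr rfl fun i _ => ?_
    rw [Finset.prod_eq_single_of_mem ∅ (Finset.empty_mem_powerset _)]
    · simp [wt]
    · intro A _ hA
      simp [hA]
  simp only [this, Bool.false_eq_true, if_false, Finset.prod_const_one, one_mul]
  rw [Fintype.expect_const]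

end count

end RAR

namespace RAR

open scoped BigOperators

section relcount

variable {J : Type} [Fintype J] [DecidableEq J] {α : Type} [Fintype α]

lemma wt_nonneg {ν : J → (J → α) → ℝ} (hν0 : ∀ j x, 0 ≤ ν j x) (c : Bool) (i : J) (x : J → α) :
    0 ≤ wt c (ν i) x := by
  unfold wt; split_ifs
  · exact hν0 i x
  · exact zero_le_one

lemma lin_corr' {τ : ℝ} (hτ : 0 < τ) : ∃ η : ℝ, 0 < η ∧
    ∀ (α : Type) [Fintype α] [Nonempty α] (ν : J → (J → α) → ℝ), (∀ j x, 0 ≤ ν j x) →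
    (∀ j, Indep j (ν j)) → Lin ν η → ∀ (a : J) (c0 c1 : J → Bool) (g0 g1 : J → (J → α) → ℝ),
    (∀ i ∈ univ.erase a, ∀ x, 0 ≤ g0 i x ∧ g0 i x ≤ wt (c0 i) (ν i) x) →
    (∀ i ∈ univ.erase a, ∀ x, 0 ≤ g1 i x ∧ g1 i x ≤ wt (c1 i) (ν i) x) →
    (∀ i ∈ univ.erase a, Indep i (g0 i)) → (∀ i ∈ univ.erase a, Indep i (g1 i)) →
    |𝔼 x, (ν a x - 1) * (pr a g0 x * pr a g1 x)| ≤ τ := by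
  obtain ⟨η, hη, h⟩ := lin_corr (J := J) hτ
  refine ⟨η, hη, ?_⟩
  intro α _ _ ν hν0 hνI hν a c0 c1 g0 g1 h0 h1 hI0 hI1
  have := h α ν hν0 hνI hν a c0 c1 g0 g1 h0 h1 hI0 hI1
  rwa [ex_two (h := fun x => ν a x - 1) ((hνI a).comp fun r => r - 1)] at this

/-- The linear forms condition makes every `ν a - 1` small in cut norm. -/
lemma lin_cut {τ : ℝ} (hτ : 0 < τ) : ∃ η : ℝ, 0 < η ∧
    ∀ (α : Type) [Fintype α] [Nonempty α] (ν : J → (J → α) → ℝ), (∀ j x, 0 ≤ ν j x) →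
    (∀ j, Indep j (ν j)) → Lin ν η → ∀ a, Cut (univ.erase a) (fun x => ν a x - 1) τ := by
  obtain ⟨η, hη, h⟩ := lin_corr (J := J) hτ
  refine ⟨η, hη, ?_⟩
  intro α _ _ ν hν0 hνI hν a B hB
  have := h α ν hν0 hνI hν a (fun _ => false) (fun _ => false) (fun i x => ind (B i x))
    (fun _ _ => 1) (fun i _ x => ⟨ind_nonneg _, by simpa [wt] using ind_le_one _⟩)
    (fun i _ x => ⟨zero_le_one, by simp [wt]⟩)
    (fun i hi => ((hB i hi).indep (by simp)).comp ind) (fun i _ x v => rfl)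
  simpa only [mul_one, Fintype.expect_const, prod_ind] using this

/-- Relative counting: under the linear forms condition, the normalised count of simplices in
functions majorised by the weights `ν j`, `j ∈ U`, or by `1`, `j ∉ U`, hardly changes when the
functions are replaced by bounded ones that are close in cut norm. -/
lemma rel_count (U : Finset J) : ∀ ε : ℝ, 0 < ε → ∃ η : ℝ, 0 < η ∧ ∃ τ : ℝ, 0 < τ ∧
    ∀ (α : Type) [Fintype α] [Nonempty α] (ν : J → (J → α) → ℝ), (∀ j x, 0 ≤ ν j x) →
    (∀ j, Indep j (ν j)) → Lin ν η → ∀ g g' : J → (J → α) → ℝ,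
    (∀ j x, 0 ≤ g j x ∧ g j x ≤ wt (decide (j ∈ U)) (ν j) x) →
    (∀ j x, 0 ≤ g' j x ∧ g' j x ≤ 1) → (∀ j, Indep j (g j)) → (∀ j, Indep j (g' j)) →
    (∀ j, Cut (univ.erase j) (fun x => g j x - g' j x) τ) →
    |𝔼 x, ∏ j, g j x - 𝔼 x, ∏ j, g' j x| ≤ ε := by
  induction U using Finset.induction_on with
  | empty =>
    intro ε hε
    refine ⟨1, one_pos, ε / (Fintype.card J + 1), by positivity, ?_⟩
    intro α _ _ ν _ _ _ g g' hg hg' hI hI' hc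
    refine (dense_count (fun j x => by simpa [wt] using hg j x) hg' hI hI' hc).trans ?_
    rw [mul_div_assoc', div_le_iff₀ (by positivity)]
    nlinarith
  | insert a U ha ih =>
    intro ε hε
    set κ : ℝ := min 1 (ε ^ 2 / 64) with hκd
    have hκ : 0 < κ := by positivity
    obtain ⟨η₁, hη₁, τ₁, hτ₁, ih⟩ := ih κ hκ
    obtain ⟨η₂, hη₂, hcorr⟩ := lin_corr' (J := J) hκ
    refine ⟨min (min η₁ η₂) (κ ^ 2 / 3), by positivity, min τ₁ (ε / 2), by positivity, ?_⟩
    intro α _ _ ν hν0 hνI hν g g' hg hg' hI hI' hc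
    have ih := ih α ν hν0 hνI (hν.mono ((min_le_left _ _).trans (min_le_left _ _)))
    have hcorr := hcorr α ν hν0 hνI (hν.mono ((min_le_left _ _).trans (min_le_right _ _))) a
    have hη3 : min (min η₁ η₂) (κ ^ 2 / 3) ≤ κ ^ 2 / 3 := min_le_right _ _
    have hg0 : ∀ j x, 0 ≤ g j x := fun j x => (hg j x).1
    have hg0' : ∀ j x, 0 ≤ g' j x := fun j x => (hg' j x).1
    set c : J → Bool := fun j => decide (j ∈ U) with hcd
    have hgU : ∀ i ∈ univ.erase a, ∀ x, 0 ≤ g i x ∧ g i x ≤ wt (c i) (ν i) x := fun i hi x => by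
      have hia : i ≠ a := by simpa using hi
      simpa [hia, c] using hg i x
    have hg1 : ∀ i ∈ univ.erase a, ∀ x, 0 ≤ g' i x ∧ g' i x ≤ wt false (ν i) x :=
      fun i _ x => by simpa [wt] using hg' i x
    have hga : ∀ x, g a x ≤ ν a x := fun x => by simpa [wt] using (hg a x).2
    set G := pr a g with hG
    set G' := pr a g' with hG'
    set Gν := pr a (fun i => wt (c i) (ν i)) with hGν
    set Gm : (J → α) → ℝ := fun x => min (G x) 1 with hGm
    have hG0 : ∀ x, 0 ≤ G x := pr_nonneg hg0
    have hG0' : ∀ x, 0 ≤ G' x := pr_nonneg hg0'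
    have hG1' : ∀ x, G' x ≤ 1 := fun x =>
      (pr_mono hg0' (fun i _ y => (hg' i y).2) x).trans_eq (pr_one a x)
    have hGGν : ∀ x, G x ≤ Gν x := fun x => pr_mono hg0 (fun i hi y => (hgU i hi y).2) x
    have hGI : Indep a G := fib_indep _ _
    have hGI' : Indep a G' := fib_indep _ _
    have hGmI : Indep a Gm := hGI.comp fun r => min r 1
    -- replacing the factor of index `a` by a bounded function reduces to the smaller set `U`
    have hred : ∀ h : (J → α) → ℝ, (∀ x, 0 ≤ h x ∧ h x ≤ 1) → Indep a h →
        |𝔼 x, h x * G x - 𝔼 x, h x * G' x| ≤ κ := by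
      intro h hh hhI
      have h1 := ih (Function.update g a h) (Function.update g' a h)
        (fun j x => by
          by_cases hj : j = a
          · subst hj; simpa [ha, wt] using hh x
          · simpa [hj] using hgU j (by simp [hj]) x)
        (fun j x => by
          by_cases hj : j = a
          · subst hj; simpa using hh x
          · simpa [hj] using hg' j x)
        (fun j => by
          by_cases hj : j = a
          · subst hj; simpa using hhI
          · simpa [hj] using hI j)
        (fun j => by
          by_cases hj : j = a
          · subst hj; simpa using hhI
          · simpa [hj] using hI' j)
        (fun j => by
          by_cases hj : j = a
          · subst hj
            intro B _
            simpa using hτ₁.le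
          · simpa [hj] using (hc j).mono (min_le_left _ _))
      have e : ∀ f : J → (J → α) → ℝ, pr a (Function.update f a h) = pr a f := fun f => by
        funext x
        refine ex_congr fun v => Finset.prod_congr rfl fun i hi => ?_
        have hia : i ≠ a := by simpa using hi
        rw [Function.update_of_ne hia]
      rw [ex_prod_eq (a := a) (by simpa using hhI), ex_prod_eq (a := a) (by simpa using hhI),
        e, e] at h1
      simpa using h1
    have r1 := abs_le.1 (hred Gm (fun x => ⟨le_min (hG0 x) zero_le_one, min_le_right _ _⟩) hGmI)
    have r2 := abs_le.1 (hred G' (fun x => ⟨hG0' x, hG1' x⟩) hGI')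
    -- the part of `G` above `1` is controlled by the second moment of `Gν - 1`
    have m1 := abs_le.1 (hν.mean a c c)
    have m2 := abs_le.1 (hν.mean a c (fun _ => false))
    have m3 : ∀ x, pr a (fun i => wt false (ν i)) x = 1 := pr_one a
    simp only [m3, mul_one] at m2
    have m4 : 𝔼 x, (Gν x - 1) ^ 2 ≤ κ ^ 2 := by
      have : ∀ x, (Gν x - 1) ^ 2 = Gν x * Gν x - 2 * Gν x + 1 := fun x => by ring
      rw [ex_congr this, ex_add, ex_sub, ex_mul_left, Fintype.expect_const]
      linarith [m1.2, m2.1]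
    have m5 : 𝔼 x, |Gν x - 1| ≤ κ :=
      le_of_sq_le_sq ((ex_abs_sq_le _).trans m4) hκ.le
    have m6 : 𝔼 x, (G x - G' x) ^ 2 ≤ 4 * κ := by
      have p1 : ∀ x, (G x - G' x) ^ 2 ≤ (Gm x * G x - Gm x * G' x) - (G' x * G x - G' x * G' x)
          + (Gν x - 1) ^ 2 + |Gν x - 1| := by
        intro x
        have q1 := hGGν x
        have q2 := hG0 x
        have q3 := hG0' x
        have q4 := le_abs_self (Gν x - 1)
        rcases le_total (G x) 1 with h | h
        · simp only [hGm, min_eq_left h]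
          nlinarith [abs_nonneg (Gν x - 1), sq_nonneg (Gν x - 1)]
        · simp only [hGm, min_eq_right h]
          nlinarith
      have p2 := ex_mono p1
      rw [ex_add, ex_add, ex_sub, ex_sub, ex_sub] at p2
      have : κ ^ 2 ≤ κ := by nlinarith [min_le_left 1 (ε ^ 2 / 64)]
      linarith [r1.2, r2.1]
    -- passing from the uniform measure to the measure with density `ν a`
    have s1 := abs_le.1 (hcorr c c g g hgU hgU (fun i _ => hI i) (fun i _ => hI i))
    have s2 := abs_le.1 (hcorr c (fun _ => false) g g' hgU hg1 (fun i _ => hI i)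
      (fun i _ => hI' i))
    have s3 := abs_le.1 (hcorr (fun _ => false) (fun _ => false) g' g' hg1 hg1 (fun i _ => hI' i)
      (fun i _ => hI' i))
    have s4 := abs_le.1 (hcorr (fun _ => false) (fun _ => false) (fun _ _ => 1) (fun _ _ => 1)
      (fun i _ x => ⟨zero_le_one, by simp [wt]⟩) (fun i _ x => ⟨zero_le_one, by simp [wt]⟩)
      (fun i _ x v => rfl) (fun i _ x v => rfl))
    simp only [pr_one, mul_one] at s4
    rw [ex_sub, Fintype.expect_const] at s4
    have s5 : 𝔼 x, ν a x * (G x - G' x) ^ 2 ≤ 8 * κ := by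
      have : ∀ x, ν a x * (G x - G' x) ^ 2 = (ν a x - 1) * (G x * G x)
          - 2 * ((ν a x - 1) * (G x * G' x)) + (ν a x - 1) * (G' x * G' x) + (G x - G' x) ^ 2 :=
        fun x => by ring
      rw [ex_congr this, ex_add, ex_add, ex_sub, ex_mul_left]
      linarith [s1.2, s2.1, s3.2]
    have s6 : 𝔼 x, ν a x ≤ 2 := by
      have : κ ≤ 1 := min_le_left _ _
      linarith [s4.2]
    have s7 : |𝔼 x, g a x * (G x - G' x)| ≤ ε / 2 := by
      have t1 : |𝔼 x, g a x * (G x - G' x)| ≤ 𝔼 x, ν a x * |G x - G' x| := by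
        refine (ex_abs _).trans (ex_mono fun x => ?_)
        rw [abs_mul, abs_of_nonneg (hg0 a x)]
        exact mul_le_mul_of_nonneg_right (hga x) (abs_nonneg _)
      refine t1.trans (le_of_sq_le_sq ?_ (by positivity))
      refine (ex_cs_weight _ _ (hν0 a)).trans ?_
      simp only [sq_abs]
      have t2 : 0 ≤ 𝔼 x, ν a x * (G x - G' x) ^ 2 :=
        ex_nonneg fun x => mul_nonneg (hν0 a x) (sq_nonneg _)
      have t3 : κ ≤ ε ^ 2 / 64 := min_le_right _ _
      nlinarith
    have s8 : |𝔼 x, (g a x - g' a x) * G' x| ≤ ε / 2 := by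
      have := ((hc a).mono (min_le_right _ _)).funs (fun x y hxy => by
          simp only [(hI a).dep x y hxy, (hI' a).dep x y hxy]) g' (fun i _ x => hg' i x)
        (fun i _ => hI' i)
      rwa [fib_mul (a := a) (h := fun x => g a x - g' a x)] at this
      intro x v
      simp only [hI a x v, hI' a x v]
    rw [ex_prod_eq (hI a), ex_prod_eq (hI' a)]
    have s9 : 𝔼 x, g a x * G x - 𝔼 x, g' a x * G' x
        = 𝔼 x, g a x * (G x - G' x) + 𝔼 x, (g a x - g' a x) * G' x := by
      rw [← ex_sub, ← ex_add]
      exact ex_congr fun x => by ring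
    rw [s9]
    exact (abs_add_le _ _).trans (by linarith)

end relcount

end RAR

namespace RAR

open scoped BigOperators

/-! ### Relative removal -/

section relremoval

variable {J : Type} [Fintype J] [DecidableEq J]

/-- Relative simplex removal, for functions majorised by weights satisfying the linear forms
condition: `E j` is the set of edges opposite to `j` that are kept. -/
lemma rel_removal (hJ : 2 ≤ Fintype.card J) {ε : ℝ} (hε : 0 < ε) :
    ∃ c : ℝ, 0 < c ∧ ∃ η : ℝ, 0 < η ∧
    ∀ (α : Type) [Fintype α] [Nonempty α] (ν : J → (J → α) → ℝ), (∀ j x, 0 ≤ ν j x) →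
    (∀ j, Indep j (ν j)) → Lin ν η → ∀ g : J → (J → α) → ℝ,
    (∀ j x, 0 ≤ g j x ∧ g j x ≤ ν j x) → (∀ j, Indep j (g j)) → 𝔼 x, ∏ j, g j x ≤ c →
    ∃ E : J → (J → α) → Prop, (∀ j, Indep j (E j)) ∧ (∀ x, ∃ j, ¬ E j x) ∧
      ∀ j, 𝔼 x, g j x * ind (¬ E j x) ≤ ε := by
  obtain ⟨c, M, hc, hrem⟩ := dense_removal (J := J) (by omega) (half_pos hε)
  obtain ⟨η₁, hη₁, τ₁, hτ₁, hcount⟩ := rel_count (J := J) univ (c / 2) (half_pos hc)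
  set N : ℝ := (M : ℝ) ^ (2 ^ Fintype.card J) with hN
  have hN0 : 0 ≤ N := by positivity
  have hτ : 0 < min τ₁ (ε / (2 * (N + 1))) := by positivity
  obtain ⟨η₂, hη₂, hmodel⟩ := dense_model (J := J) hτ
  obtain ⟨η₃, hη₃, hcut⟩ := lin_cut (J := J) hη₂
  refine ⟨c / 2, half_pos hc, min η₁ η₃, lt_min hη₁ hη₃, ?_⟩
  intro α _ _ ν hν0 hνI hν g hg hI hgc
  have hne : ∀ j : J, (univ.erase j).Nonempty := fun j => by
    rw [← Finset.card_pos, Finset.card_erase_of_mem (Finset.mem_univ _), Finset.card_univ]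
    omega
  have hcut := hcut α ν hν0 hνI (hν.mono (min_le_right _ _))
  choose g' hg' hd' hcut' using fun j =>
    hmodel α (univ.erase j) (hne j) (ν j) (g j) (hνI j).dep (hg j) (hcut j)
  have hI' : ∀ j, Indep j (g' j) := fun j => (hd' j).indep (by simp)
  have h1 := hcount α ν hν0 hνI (hν.mono (min_le_left _ _)) g g'
    (fun j x => by simpa [wt] using hg j x) hg' hI hI' (fun j => (hcut' j).mono (min_le_left _ _))
  obtain ⟨b, hb, Ev, hEv, hx, hEε⟩ := hrem α g' hg' hI' (by linarith [(abs_le.1 h1).1])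
  refine ⟨fun j x => Ev j (fun u => b u x), fun j x v => ?_, hx, fun j => ?_⟩
  · refine propext (hEv j _ _ fun u hu => ?_)
    exact (hb.dep u).indep (fun h => by simpa using hu.1 h) x v
  · have h2 := (hcut' j).pattern (hne j) (fun x y hxy => by
        simp only [(hI j).dep x y hxy, hd' j x y hxy]) hb (fun β => ¬ Ev j β)
      ((univ.erase j).ssubsets) (fun t ht => (Finset.mem_ssubsets.1 ht).2)
      (fun β β' h => not_congr (hEv j β β' fun u hu => h u (Finset.mem_ssubsets.2 hu)))
    have h3 := (abs_le.1 h2).2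
    simp only [sub_mul] at h3
    rw [ex_sub] at h3
    have h4 : N * min τ₁ (ε / (2 * (N + 1))) ≤ ε / 2 := by
      calc N * min τ₁ (ε / (2 * (N + 1))) ≤ (N + 1) * (ε / (2 * (N + 1))) := by
            refine mul_le_mul (by linarith) (min_le_right _ _) hτ.le (by linarith)
        _ = ε / 2 := by field_simp
    have := hEε j
    linarith

end relremoval

/-! ### From groups to hypergraphs -/

section arith

variable {J : Type} [Fintype J] [DecidableEq J] {Z Z' : Type} [AddCommGroup Z] [AddCommGroup Z']

/-- The set of coordinates at which a vertex `ω` of the cube takes the value `true`. -/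
def supp (e : Finset J) (ω : ↥e → Bool) : Finset J :=
  univ.filter fun i => ∃ h : i ∈ e, ω ⟨i, h⟩ = true

lemma prod_cube (e : Finset J) (F : Finset J → ℝ) :
    ∏ ω : ↥e → Bool, F (supp e ω) = ∏ A ∈ e.powerset, F A := by
  refine Finset.prod_bij' (fun ω _ => supp e ω) (fun A _ i => decide (i.1 ∈ A)) ?_ ?_ ?_ ?_ ?_
  · intro ω _
    refine Finset.mem_powerset.2 fun i hi => ?_
    obtain ⟨h, -⟩ := (Finset.mem_filter.1 hi).2
    exact h
  · intro A _; exact Finset.mem_univ _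
  · intro ω _
    funext i
    simp [supp]
  · intro A hA
    ext i
    have : i ∈ A → i ∈ e := fun h => Finset.mem_powerset.1 hA h
    simpa [supp] using this
  · intro ω _; rfl

lemma prod_edges (F : Finset J → ℝ) (hJ : 1 ≤ Fintype.card J) :
    ∏ e ∈ univ.powersetCard (Fintype.card J - 1), F e = ∏ j, F (univ.erase j) := by
  symm
  refine Finset.prod_bij (fun j _ => univ.erase j) ?_ ?_ ?_ ?_
  · intro j _
    rw [Finset.mem_powersetCard_univ, Finset.card_erase_of_mem (Finset.mem_univ _),
      Finset.card_univ]
  · intro i _ j _ h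
    exact erase_inj (Finset.mem_univ i) h
  · intro e he
    rw [Finset.mem_powersetCard_univ] at he
    have h1 : eᶜ.card = 1 := by rw [Finset.card_compl]; omega
    obtain ⟨j, hj⟩ := Finset.card_eq_one.1 h1
    refine ⟨j, Finset.mem_univ _, ?_⟩
    rw [← compl_compl e, hj]
    ext i; simp
  · intro j _; rfl

/-- The linear form attached to the edge opposite to `j`. -/
def form (φ : J → Z →+ Z') (j : J) (x : J → Z) : Z' := ∑ i, (φ i (x i) - φ j (x i))

lemma form_indep (φ : J → Z →+ Z') (j : J) : Indep j (form φ j) := fun x v => by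
  refine Finset.sum_congr rfl fun i _ => ?_
  by_cases hi : i = j
  · subst hi; simp
  · rw [Function.update_of_ne hi]

lemma inducedNu_erase (φ : J → Z →+ Z') (ν : Z' → ℝ) (j : J) (x : J → Z) :
    inducedNu φ ν (univ.erase j) (fun i => x i.1) = ν (form φ j x) := by
  have h1 : (univ : Finset J) \ univ.erase j = {j} := by ext i; simp
  rw [inducedNu, h1, Finset.sum_singleton, form, ← Finset.add_sum_erase univ _ (Finset.mem_univ j),
    sub_self, zero_add, map_sum, ← Finset.sum_sub_distrib,
    Finset.sum_coe_sort (univ.erase j) (fun i => φ i (x i) - φ j (x i))]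

lemma lin_of_HLinearForms [Fintype Z] (hJ : 1 ≤ Fintype.card J) {φ : J → Z →+ Z'} {ν : Z' → ℝ}
    {η : ℝ} (h : HLinearForms (V := fun _ : J => Z)
        (Finset.univ.powersetCard (Fintype.card J - 1)) (inducedNu φ ν) η) :
    Lin (fun j x => ν (form φ j x)) η := by
  classical
  intro n
  have h1 := h (fun e ω => decide (∃ j, e = univ.erase j ∧ n j (supp e ω)))
  rw [avg_eq, ex_prod] at h1
  convert h1 using 3
  refine ex_congr fun x => ex_congr fun y => ?_
  rw [prod_edges _ hJ]
  refine Finset.prod_congr rfl fun j _ => ?_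
  rw [← prod_cube]
  refine Finset.prod_congr rfl fun ω _ => ?_
  have e1 : (decide (∃ l, univ.erase j = univ.erase l ∧ n l (supp (univ.erase j) ω)) = true)
      ↔ n j (supp (univ.erase j) ω) = true := by
    rw [decide_eq_true_eq]
    constructor
    · rintro ⟨l, hl, h⟩
      obtain rfl := erase_inj (Finset.mem_univ j) hl
      exact h
    · intro h; exact ⟨j, rfl, h⟩
  simp only [e1]
  congr 1
  rw [← inducedNu_erase φ ν j]
  congr 1
  funext i
  by_cases hi : ω i = true
  · have : i.1 ∈ supp (univ.erase j) ω := Finset.mem_filter.2 ⟨Finset.mem_univ _, i.2, hi⟩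
    rw [if_pos hi, Finset.piecewise_eq_of_mem _ _ _ this]
  · have : i.1 ∉ supp (univ.erase j) ω := by simp [supp, hi]
    rw [if_neg hi, Finset.piecewise_eq_of_notMem _ _ _ this]

/-- The homomorphism sending `x` to the pair `(a, d)` with `form φ j x = a + φ j d`
for all `j`. -/
def par (φ : J → Z →+ Z') : (J → Z) →+ Z' × Z where
  toFun x := (∑ i, φ i (x i), -∑ i, x i)
  map_zero' := by simp
  map_add' x y := by
    ext
    · simp [Finset.sum_add_distrib]
    · simp [Finset.sum_add_distrib, add_comm]

lemma form_eq (φ : J → Z →+ Z') (j : J) (x : J → Z) :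
    form φ j x = (par φ x).1 + φ j (par φ x).2 := by
  simp [form, par, sub_eq_add_neg, Finset.sum_add_distrib]

lemma par_single (φ : J → Z →+ Z') (j : J) (t : Z) :
    par φ (Pi.single j t) = (φ j t, -t) := by
  have h : ∀ i, φ i ((Pi.single j t : J → Z) i) = if i = j then φ j t else 0 := fun i => by
    by_cases hi : i = j
    · subst hi; simp
    · simp [hi]
  simp [par, h]

/-- The generation hypothesis makes the parametrisation of pairs `(a, d)` surjective. -/
lemma par_surjective [Nonempty J] (φ : J → Z →+ Z')
    (h : AddSubgroup.closure {z : Z' | ∃ i j : J, ∃ d : Z, z = φ i d - φ j d} = ⊤) :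
    Function.Surjective (par φ) := by
  have h1 : ∀ z : Z', (z, (0 : Z)) ∈ (par φ).range := by
    have : AddSubgroup.closure {z : Z' | ∃ i j : J, ∃ d : Z, z = φ i d - φ j d}
        ≤ (par φ).range.comap (AddMonoidHom.inl Z' Z) := by
      rw [AddSubgroup.closure_le]
      rintro z ⟨i, j, d, rfl⟩
      refine ⟨Pi.single i d - Pi.single j d, ?_⟩
      rw [map_sub, par_single, par_single]
      simp
    rw [h] at this
    exact fun z => this (AddSubgroup.mem_top z)
  rintro ⟨a, d⟩
  obtain ⟨j⟩ := ‹Nonempty J›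
  obtain ⟨x, hx⟩ := h1 (a + φ j d)
  refine ⟨x + Pi.single j (-d), ?_⟩
  rw [map_add, hx, par_single]
  simp

lemma ex_surj {A B : Type*} [AddCommGroup A] [AddCommGroup B] [Fintype A] [Fintype B]
    (f : A →+ B) (hf : Function.Surjective f) (F : B → ℝ) : 𝔼 x, F (f x) = 𝔼 y, F y := by
  have h1 : ∀ y : B, 𝔼 x, F (f x + y) = 𝔼 x, F (f x) := by
    intro y
    obtain ⟨x₀, rfl⟩ := hf y
    exact Fintype.expect_equiv (Equiv.addRight x₀) _ _ fun x => by simp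
  have h2 : ∀ x : A, 𝔼 y, F (f x + y) = 𝔼 y, F y := fun x =>
    Fintype.expect_equiv (Equiv.addLeft (f x)) _ _ fun y => by simp
  have h3 : 𝔼 y : B, 𝔼 x, F (f x + y) = 𝔼 x, F (f x) := by
    rw [ex_congr h1, Fintype.expect_const]
  rw [← h3, ex_comm, ex_congr h2, Fintype.expect_const]

/-- Edge sets `E j` without common simplices yield subsets `A j` of the group without
configurations: `A j` consists of the values of the `j`-th form for which the conditional
probability of the complement of `E j` is less than `1 / |J|`. -/
lemma exists_sets [Fintype Z] [Fintype Z'] (hJ : 1 ≤ Fintype.card J) (φ : J → Z →+ Z')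
    (h : AddSubgroup.closure {z : Z' | ∃ i j : J, ∃ d : Z, z = φ i d - φ j d} = ⊤)
    (f : J → Z' → ℝ) (hf : ∀ j y, 0 ≤ f j y) (E : J → (J → Z) → Prop)
    (hEI : ∀ j, Indep j (E j)) (hE : ∀ x, ∃ j, ¬ E j x) {ε : ℝ}
    (hε : ∀ j, 𝔼 x, f j (form φ j x) * ind (¬ E j x) ≤ ε) :
    ∃ A : J → Set Z', (∀ a d, ∃ j, a + φ j d ∉ A j) ∧
      ∀ j, 𝔼 y, f j y * ind (y ∉ A j) ≤ Fintype.card J * ε := by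
  classical
  have : Nonempty J := Fintype.card_pos_iff.1 hJ
  set k : ℝ := (Fintype.card J : ℝ) with hk
  have hk0 : 0 < k := by rw [hk]; exact_mod_cast hJ
  have hsurj := par_surjective φ h
  let K := (par φ).ker
  set q : J → (J → Z) → ℝ := fun j x => 𝔼 w : K, ind (¬ E j (x + w)) with hq
  -- the conditional probability depends on the value of the form only, because moving the
  -- coordinate `j` changes neither the form nor `E j`
  have hqc : ∀ j x x', form φ j x = form φ j x' → q j x = q j x' := by
    intro j x x' hxx
    set t := (par φ x).2 - (par φ x').2 with ht
    have hw : x' - x - Pi.single j t ∈ K := by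
      rw [AddMonoidHom.mem_ker, map_sub, map_sub, par_single]
      rw [form_eq, form_eq] at hxx
      ext
      · simp only [Prod.fst_sub, ht, map_sub, Prod.fst_zero]
        rw [← sub_eq_zero] at hxx
        rw [← neg_eq_zero, ← hxx]; abel
      · simp [ht]
    refine (Fintype.expect_equiv (Equiv.addRight (⟨_, hw⟩ : K)) _ _ fun w => ?_).symm
    have : x' + (w : J → Z) = Function.update (x + ((w + ⟨_, hw⟩ : K) : J → Z)) j
        (x' j + w.1 j) := by
      ext i
      by_cases hi : i = j
      · subst hi; simp
      · simp [hi]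
        abel
    rw [this, hEI j]
    rfl
  refine ⟨fun j => {y | ∃ x, form φ j x = y ∧ q j x < 1 / k}, fun a d => ?_, fun j => ?_⟩
  · obtain ⟨x, hx⟩ := hsurj (a, d)
    by_contra hc
    push Not at hc
    have h1 : ∀ j, q j x < 1 / k := fun j => by
      obtain ⟨x', hx', hlt⟩ := hc j
      rwa [hqc j x x' (by rw [hx', form_eq, hx])]
    have h2 : (1 : ℝ) ≤ ∑ j, q j x := by
      rw [hq, ← ex_sum]
      have : ∀ w : K, (1 : ℝ) ≤ ∑ j, ind (¬ E j (x + w)) := fun w => by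
        obtain ⟨j, hj⟩ := hE (x + w)
        rw [← ind_true hj]
        exact Finset.single_le_sum (f := fun j => ind (¬ E j (x + w)))
          (fun _ _ => ind_nonneg _) (Finset.mem_univ j)
      simpa [Fintype.expect_const] using ex_mono this
    have h3 : ∑ j, q j x < ∑ _j : J, 1 / k :=
      Finset.sum_lt_sum_of_nonempty Finset.univ_nonempty fun j _ => h1 j
    rw [Finset.sum_const, Finset.card_univ, nsmul_eq_mul, ← hk, mul_one_div_cancel hk0.ne'] at h3
    linarith
  · have e1 : 𝔼 y, f j y * ind (y ∉ {y | ∃ x, form φ j x = y ∧ q j x < 1 / k})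
        = 𝔼 x, f j (form φ j x) * ind (form φ j x ∉ {y | ∃ x, form φ j x = y ∧ q j x < 1 / k}) := by
      have hs : Function.Surjective ((AddMonoidHom.fst Z' Z
          + (φ j).comp (AddMonoidHom.snd Z' Z)).comp (par φ)) := by
        intro y
        obtain ⟨x, hx⟩ := hsurj (y, 0)
        exact ⟨x, by simp [hx]⟩
      rw [← ex_surj _ hs]
      refine ex_congr fun x => ?_
      simp only [form_eq]
      rfl
    have e2 : 𝔼 x, f j (form φ j x) * q j x = 𝔼 x, f j (form φ j x) * ind (¬ E j x) := by
      simp only [hq, ← ex_mul_left]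
      rw [ex_comm]
      have : ∀ w : K, 𝔼 x, f j (form φ j x) * ind (¬ E j (x + w))
          = 𝔼 x, f j (form φ j x) * ind (¬ E j x) := fun w => by
        refine Fintype.expect_equiv (Equiv.addRight (w : J → Z)) _ _ fun x => ?_
        have hw : par φ (w : J → Z) = 0 := w.2
        simp [form_eq, hw]
      rw [ex_congr this, Fintype.expect_const]
    rw [e1]
    calc _ ≤ 𝔼 x, k * (f j (form φ j x) * q j x) := by
          refine ex_mono fun x => ?_
          have hq0 : 0 ≤ q j x := ex_nonneg fun _ => ind_nonneg _
          by_cases hx : form φ j x ∉ {y | ∃ x, form φ j x = y ∧ q j x < 1 / k}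
          · have : 1 / k ≤ q j x := by
              by_contra hlt
              exact hx ⟨x, rfl, not_le.1 hlt⟩
            rw [ind_true hx]
            rw [div_le_iff₀ hk0] at this
            nlinarith [hf j (form φ j x)]
          · rw [ind_false hx, mul_zero]
            exact mul_nonneg hk0.le (mul_nonneg (hf _ _) hq0)
      _ = k * 𝔼 x, f j (form φ j x) * ind (¬ E j x) := by rw [ex_mul_left, e2]
      _ ≤ k * ε := mul_le_mul_of_nonneg_left (hε j) hk0.le

end arith

end RAR

/-- **Relative arithmetic removal lemma.** For every finite `J` with `|J| ≥ 2` and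
every `ε > 0` there exist `c > 0` and `η > 0` such that: for all finite abelian groups
`Z, Z'`, homomorphisms `φ_j : Z →+ Z'` whose differences `φ_i(d) - φ_j(d)` generate
`Z'`, and `ν : Z' → ℝ≥0` whose induced weighted hypergraph satisfies the `H`-linear
forms condition within `η`: if `0 ≤ f_j ≤ ν` for all `j ∈ J` and
`E[∏_{j ∈ J} f_j(a + φ_j(d)) | a ∈ Z', d ∈ Z] ≤ c`, then there are sets `A_j ⊆ Z'`
with `∏_{j ∈ J} 1_{A_j}(a + φ_j(d)) = 0` for all `a ∈ Z'`, `d ∈ Z`, and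
`E[f_j · 1_{Z' ∖ A_j}] ≤ ε` for all `j ∈ J`. -/
theorem relative_arithmetic_removal (J : Type) [Fintype J] [DecidableEq J]
    (hJ : 2 ≤ Fintype.card J) (ε : ℝ) (hε : 0 < ε) :
    ∃ c : ℝ, 0 < c ∧ ∃ η : ℝ, 0 < η ∧
    ∀ (Z Z' : Type) [AddCommGroup Z] [Fintype Z] [DecidableEq Z]
      [AddCommGroup Z'] [Fintype Z'] [DecidableEq Z'],
    ∀ φ : J → Z →+ Z',
      AddSubgroup.closure {z : Z' | ∃ i j : J, ∃ d : Z, z = φ i d - φ j d} = ⊤ →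
    ∀ ν : Z' → ℝ, (∀ y, 0 ≤ ν y) →
      HLinearForms (V := fun _ : J => Z)
        (Finset.univ.powersetCard (Fintype.card J - 1)) (inducedNu φ ν) η →
    ∀ f : J → Z' → ℝ, (∀ j x, 0 ≤ f j x ∧ f j x ≤ ν x) →
    avg (fun p : Z' × Z => ∏ j : J, f j (p.1 + φ j p.2)) ≤ c →
    ∃ A : J → Set Z',
      (∀ (a : Z') (d : Z),
        ∏ j : J, Set.indicator (A j) (fun _ => (1 : ℝ)) (a + φ j d) = 0) ∧
      (∀ j : J,
        avg (fun x : Z' => f j x * Set.indicator (A j)ᶜ (fun _ => (1 : ℝ)) x) ≤ ε) := by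
  have hk : (0 : ℝ) < Fintype.card J := by exact_mod_cast (by omega : 0 < Fintype.card J)
  have : Nonempty J := Fintype.card_pos_iff.1 (by omega)
  -- Passing from edge sets of the hypergraph to subsets of `Z'` costs a factor `|J|`.
  obtain ⟨c, hc, η, hη, H⟩ := RAR.rel_removal (J := J) hJ (div_pos hε hk)
  refine ⟨c, hc, η, hη, ?_⟩
  intro Z Z' _ _ _ _ _ _ φ hgen ν hν hlin f hf hfc
  have : Nonempty Z := ⟨0⟩
  have hcount : Finset.expect Finset.univ
      (fun x : J → Z => ∏ j, f j (RAR.form φ j x)) ≤ c := by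
    rw [RAR.avg_eq, ← RAR.ex_surj (RAR.par φ) (RAR.par_surjective φ hgen)] at hfc
    simpa only [RAR.form_eq] using hfc
  obtain ⟨E, hEI, hE, hEε⟩ := H Z (fun j x => ν (RAR.form φ j x)) (fun j x => hν _)
    (fun j => (RAR.form_indep φ j).comp ν) (RAR.lin_of_HLinearForms (by omega) hlin)
    (fun j x => f j (RAR.form φ j x)) (fun j x => hf j _)
    (fun j => (RAR.form_indep φ j).comp (f j)) hcount
  obtain ⟨A, hA, hAε⟩ := RAR.exists_sets (by omega) φ hgen f (fun j y => (hf j y).1) E hEI hE hEε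
  refine ⟨A, fun a d => ?_, fun j => ?_⟩
  · obtain ⟨j, hj⟩ := hA a d
    exact Finset.prod_eq_zero (Finset.mem_univ j) (Set.indicator_of_notMem hj _)
  · have hj := hAε j
    rw [mul_div_cancel₀ _ hk.ne'] at hj
    rw [RAR.avg_eq]
    refine le_of_eq_of_le (Finset.expect_congr rfl fun y _ => ?_) hj
    by_cases hy : y ∈ A j
    · simp [RAR.ind, hy]
    · simp [RAR.ind, hy]
end

section
/- Let V = (J, (V_j)_{j∈J}, r, H) be a hypergraph system, let e₁ ∈ H, and let g, g̃ be weighted hypergraphs on V such that 0 ≤ g̃_e ≤ 1 pointwise for all e ∈ H, 0 ≤ g_e ≤ 1 pointwise for all e ∈ H ∖ {e₁}, and (g_e, g̃_e) is an ε-discrepancy pair for each e ∈ H. Then |E[∏_{e∈H} g_e(x_e) | x ∈ V_J] − E[∏_{e∈H} g̃_e(x_e) | x ∈ V_J]| ≤ |H|·ε. -/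
/-!
The edges are replaced one at a time, `g_e` by `g'_e`, starting with `e₁`, so that at every
step all the edges not being replaced carry weights in `[0,1]`. It remains to bound one step,
`|E[(g_e - g'_e)(x_e) ∏_{e' ≠ e} h_{e'}(x_{e'})]| ≤ ε` with `0 ≤ h_{e'} ≤ 1`
(`abs_avg_mul_prod_le`).

Fix the coordinates of `x` outside `e`. Since all edges have the same size, every `e' ≠ e`
misses some `j ∈ e`, so that `h_{e'}(x_{e'})` becomes a `[0,1]`-valued function of the face
coordinates `x_{e \ {j}}`. Grouping the edges `e'` by such a `j`, the product becomes
`∏_{j ∈ e} u_j(x_{e \ {j}})` with `0 ≤ u_j ≤ 1`. The average is affine in each `u_j`, so the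
`u_j` may be replaced in turn by indicator functions without decreasing the absolute value
(`exists_set_abs_sum_le`), and the discrepancy hypothesis applies
(`EdgeDiscrepancy.abs_sum_mul_prod_le`).
-/

open Finset

variable {J : Type} [Fintype J] [DecidableEq J] {V : J → Type}

/-- A linear functional on `[0,1]`-valued functions has its largest and smallest values at
indicator functions. -/
lemma exists_set_abs_sum_le {X Y : Type*} [Fintype X] [Fintype Y] (φ : X → Y)
    (D : X → ℝ) (w : Y → ℝ) (hw : ∀ y, 0 ≤ w y ∧ w y ≤ 1) :
    ∃ B : Set Y, |∑ x, D x * w (φ x)| ≤ |∑ x, D x * B.indicator (fun _ => (1 : ℝ)) (φ x)| := by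
  classical
  -- `c y` is the coefficient of `w y` in the functional.
  let c : Y → ℝ := fun y => ∑ x with φ x = y, D x
  have key : ∀ v : Y → ℝ, ∑ x, D x * v (φ x) = ∑ y, c y * v y := by
    intro v
    rw [← Finset.sum_fiberwise Finset.univ φ]
    refine Finset.sum_congr rfl fun y _ => ?_
    rw [Finset.sum_mul]
    refine Finset.sum_congr rfl fun x hx => ?_
    rw [(Finset.mem_filter.1 hx).2]
  simp only [key]
  rcases le_total 0 (∑ y, c y * w y) with h | h
  · refine ⟨{y | 0 ≤ c y}, ?_⟩
    rw [abs_of_nonneg h]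
    refine le_trans (Finset.sum_le_sum fun y _ => ?_) (le_abs_self _)
    by_cases hy : 0 ≤ c y
    · simp only [Set.indicator, Set.mem_ofPred_eq, hy, if_true]
      nlinarith [hw y]
    · simp only [Set.indicator, Set.mem_ofPred_eq, hy, if_false]
      nlinarith [hw y]
  · refine ⟨{y | c y ≤ 0}, ?_⟩
    rw [abs_of_nonpos h]
    refine le_trans (neg_le_neg (Finset.sum_le_sum fun y _ => ?_)) (neg_le_abs _)
    by_cases hy : c y ≤ 0
    · simp only [Set.indicator, Set.mem_ofPred_eq, hy, if_true]
      nlinarith [hw y]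
    · simp only [Set.indicator, Set.mem_ofPred_eq, hy, if_false]
      nlinarith [hw y]

/-- The discrepancy inequality, cleared of its denominator, with the indicators of the sets
`B_f` relaxed to arbitrary `[0,1]`-valued functions of the faces. -/
lemma EdgeDiscrepancy.abs_sum_mul_prod_le [∀ j, Fintype (V j)] [∀ j, Nonempty (V j)]
    {e : Finset J} {g g' : ((i : ↥e) → V i) → ℝ} {ε : ℝ} (h : EdgeDiscrepancy e g g' ε)
    (u : (j : J) → ((i : ↥(e.erase j)) → V i) → ℝ) (hu : ∀ j y, 0 ≤ u j y ∧ u j y ≤ 1) :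
    |∑ x, (g x - g' x) * ∏ j ∈ e, u j (faceProj j x)| ≤
      Fintype.card ((i : ↥e) → V i) * ε := by
  classical
  -- Only the functions indexed by `S` are not yet indicators.
  have main : ∀ S : Finset J, S ⊆ e → ∀ B : (j : J) → Set ((i : ↥(e.erase j)) → V i),
      |∑ x, (g x - g' x) * ∏ j ∈ e, (if j ∈ S then u j (faceProj j x)
        else (B j).indicator (fun _ => (1 : ℝ)) (faceProj j x))| ≤
      Fintype.card ((i : ↥e) → V i) * ε := by
    intro S
    induction S using Finset.induction_on with
    | empty =>
      intro _ B
      have hB := h B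
      have hc : (0 : ℝ) < Fintype.card ((i : ↥e) → V i) := by
        exact_mod_cast Fintype.card_pos
      rw [avg, abs_div, abs_of_pos hc, div_le_iff₀ hc, mul_comm ε] at hB
      simpa [faceInd] using hB
    | insert k S hk ih =>
      intro hS B
      have hke : k ∈ e := hS (Finset.mem_insert_self _ _)
      obtain ⟨C, hC⟩ := exists_set_abs_sum_le (faceProj (e := e) (V := V) k)
        (fun x => (g x - g' x) * ∏ j ∈ e.erase k, (if j ∈ S then u j (faceProj j x)
          else (B j).indicator (fun _ => (1 : ℝ)) (faceProj j x))) (u k) (hu k)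
      have ih' := ih ((Finset.subset_insert _ _).trans hS) (Function.update B k C)
      refine le_trans (le_of_eq ?_) (hC.trans (le_trans (le_of_eq ?_) ih'))
      · congr 1
        refine Finset.sum_congr rfl fun x _ => ?_
        rw [← Finset.mul_prod_erase e _ hke, if_pos (Finset.mem_insert_self _ _), mul_assoc,
          mul_comm (u k _)]
        congr 2
        refine Finset.prod_congr rfl fun j hj => ?_
        simp [Finset.mem_insert, (Finset.mem_erase.1 hj).1]
      · congr 1
        refine Finset.sum_congr rfl fun x _ => ?_
        rw [← Finset.mul_prod_erase e _ hke, if_neg hk, mul_assoc, Function.update_self,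
          mul_comm (C.indicator _ _)]
        congr 2
        refine Finset.prod_congr rfl fun j hj => ?_
        rw [Function.update_of_ne (Finset.mem_erase.1 hj).1]
  have := main e subset_rfl (fun _ => ∅)
  rwa [Finset.sum_congr rfl fun x _ => by
    rw [Finset.prod_congr rfl fun j hj => if_pos hj]] at this

/-- The full tuple that agrees with `y` on `f` and with `z` elsewhere. -/
def glue (z : (j : J) → V j) (f : Finset J) (y : (i : ↥f) → V i) : (j : J) → V j :=
  fun j => if h : j ∈ f then y ⟨j, h⟩ else z j

lemma restr_glue_faceProj (z : (j : J) → V j) {e e' : Finset J} {j : J} (hj : j ∉ e')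
    (y : (i : ↥e) → V i) :
    restr e' (glue z (e.erase j) (faceProj j y)) = restr e' (glue z e y) := by
  funext i
  have hij : i.1 ≠ j := fun h => hj (h ▸ i.2)
  by_cases hi : i.1 ∈ e <;> simp [restr, glue, faceProj, hij, hi]

/-- The discrepancy inequality against a product of `[0,1]`-weights on edges `e'` that do not
contain `e`, with the coordinates outside `e` frozen to those of `z`. -/
lemma EdgeDiscrepancy.abs_sum_mul_prod_glue_le [∀ j, Fintype (V j)] [∀ j, Nonempty (V j)]
    {e : Finset J} {g g' : ((i : ↥e) → V i) → ℝ} {ε : ℝ} (hd : EdgeDiscrepancy e g g' ε)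
    (K : Finset (Finset J)) (hK : ∀ e' ∈ K, ¬ e ⊆ e')
    (h : (e : Finset J) → ((i : ↥e) → V i) → ℝ)
    (hh : ∀ e' ∈ K, ∀ x, 0 ≤ h e' x ∧ h e' x ≤ 1) (z : (j : J) → V j) :
    |∑ y, (g y - g' y) * ∏ e' ∈ K, h e' (restr e' (glue z e y))| ≤
      Fintype.card ((i : ↥e) → V i) * ε := by
  classical
  -- The choice of a missed vertex below needs a default in `J`, available once `K` is nonempty.
  rcases K.eq_empty_or_nonempty with rfl | ⟨e₀, he₀⟩
  · simpa using hd.abs_sum_mul_prod_le (fun _ _ => 1) (by simp)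
  obtain ⟨j₀, -⟩ := Finset.not_subset.1 (hK e₀ he₀)
  have hc : ∀ e' : Finset J, ∃ j : J, e' ∈ K → j ∈ e ∧ j ∉ e' := by
    intro e'
    by_cases he' : e' ∈ K
    · obtain ⟨j, hj⟩ := Finset.not_subset.1 (hK e' he')
      exact ⟨j, fun _ => hj⟩
    · exact ⟨j₀, fun h => absurd h he'⟩
  choose c hc using hc
  let u : (j : J) → ((i : ↥(e.erase j)) → V i) → ℝ := fun j y =>
    ∏ e' ∈ K with c e' = j, h e' (restr e' (glue z (e.erase j) y))
  have hu : ∀ j y, 0 ≤ u j y ∧ u j y ≤ 1 := fun j y =>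
    ⟨Finset.prod_nonneg fun e' he' => (hh e' (Finset.mem_filter.1 he').1 _).1,
      Finset.prod_le_one (fun e' he' => (hh e' (Finset.mem_filter.1 he').1 _).1)
        fun e' he' => (hh e' (Finset.mem_filter.1 he').1 _).2⟩
  refine le_trans (le_of_eq ?_) (hd.abs_sum_mul_prod_le u hu)
  congr 1
  refine Finset.sum_congr rfl fun y _ => ?_
  rw [← Finset.prod_fiberwise_of_maps_to (g := c) (t := e) fun e' he' => (hc e' he').1]
  congr 1
  refine Finset.prod_congr rfl fun j _ => Finset.prod_congr rfl fun e' he' => ?_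
  obtain ⟨heK, rfl⟩ := Finset.mem_filter.1 he'
  rw [restr_glue_faceProj z (hc e' heK).2]

/-- A single replacement step: averaging the frozen-coordinate estimate over the coordinates
outside `e`. -/
lemma abs_avg_mul_prod_le [∀ j, Fintype (V j)] [∀ j, Nonempty (V j)]
    {e : Finset J} {g g' : ((i : ↥e) → V i) → ℝ} {ε : ℝ} (hd : EdgeDiscrepancy e g g' ε)
    (K : Finset (Finset J)) (hK : ∀ e' ∈ K, ¬ e ⊆ e')
    (h : (e : Finset J) → ((i : ↥e) → V i) → ℝ)
    (hh : ∀ e' ∈ K, ∀ x, 0 ≤ h e' x ∧ h e' x ≤ 1) :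
    |avg (fun x : (j : J) → V j =>
      (g (restr e x) - g' (restr e x)) * ∏ e' ∈ K, h e' (restr e' x))| ≤ ε := by
  classical
  have hpos : (0 : ℝ) < Fintype.card ((j : J) → V j) := by exact_mod_cast Fintype.card_pos
  rw [avg, abs_div, abs_of_pos hpos, div_le_iff₀ hpos]
  let E := Equiv.piEquivPiSubtypeProd (fun j => j ∈ e) V
  rw [← E.symm.sum_comp, Fintype.sum_prod_type_right, Fintype.card_congr E, Fintype.card_prod]
  refine (Finset.abs_sum_le_sum_abs _ _).trans ?_
  have hq : ∀ q : (i : {j // ¬ j ∈ e}) → V i,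
      |∑ y : (i : {j // j ∈ e}) → V i, (g (restr e (E.symm (y, q))) -
        g' (restr e (E.symm (y, q)))) * ∏ e' ∈ K, h e' (restr e' (E.symm (y, q)))| ≤
      Fintype.card ((i : ↥e) → V i) * ε := by
    intro q
    let z : (j : J) → V j := E.symm (fun _ => Classical.arbitrary _, q)
    refine le_trans (le_of_eq ?_) (hd.abs_sum_mul_prod_glue_le K hK h hh z)
    congr 1
    refine Finset.sum_congr rfl fun y _ => ?_
    have h1 : E.symm (y, q) = glue z e y := by
      funext j
      by_cases hj : j ∈ e <;> simp [E, z, glue, hj, Equiv.piEquivPiSubtypeProd]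
    have h2 : restr e (glue z e y) = y := by
      funext i
      simp [restr, glue]
    rw [h1, h2]
  refine (Finset.sum_le_sum fun q _ => hq q).trans (le_of_eq ?_)
  rw [Finset.sum_const, Finset.card_univ, nsmul_eq_mul]
  push_cast
  ring

/-- **Telescoping discrepancy argument for dense hypergraphs.** If `g, g'` are weighted
hypergraphs on a hypergraph system with `0 ≤ g' ≤ 1` everywhere, `0 ≤ g_e ≤ 1` for all
`e ≠ e₁`, `0 ≤ g_{e₁}`, and `(g_e, g'_e)` is an `ε`-discrepancy pair for each `e ∈ H`,
then `|E[∏_{e ∈ H} g_e(x_e)] - E[∏_{e ∈ H} g'_e(x_e)]| ≤ |H| ε`. -/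
theorem telescoping_discrepancy
    (J : Type) [Fintype J] [DecidableEq J]
    (V : J → Type) [∀ j, Fintype (V j)] [∀ j, Nonempty (V j)]
    (r : ℕ) (hr : 1 ≤ r) (H : Finset (Finset J)) (hH : ∀ e ∈ H, e.card = r)
    (e₁ : Finset J) (he₁ : e₁ ∈ H)
    (g g' : (e : Finset J) → ((i : ↥e) → V i) → ℝ) (ε : ℝ)
    (hg'01 : ∀ e ∈ H, ∀ x, 0 ≤ g' e x ∧ g' e x ≤ 1)
    (hg01 : ∀ e ∈ H, e ≠ e₁ → ∀ x, 0 ≤ g e x ∧ g e x ≤ 1)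
    (hge₁ : ∀ x, 0 ≤ g e₁ x)
    (hdisc : ∀ e ∈ H, EdgeDiscrepancy e (g e) (g' e) ε) :
    |avg (fun x : (j : J) → V j => ∏ e ∈ H, g e (restr e x)) -
      avg (fun x : (j : J) → V j => ∏ e ∈ H, g' e (restr e x))| ≤ H.card * ε := by
  classical
  -- `P S` is the average in which exactly the edges of `S` have been replaced.
  let m : Finset (Finset J) → (e : Finset J) → ((i : ↥e) → V i) → ℝ := fun S e x =>
    if e ∈ S then g' e x else g e x
  let P : Finset (Finset J) → ℝ := fun S =>
    avg (fun x : (j : J) → V j => ∏ e ∈ H, m S e (restr e x))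
  have step : ∀ S : Finset (Finset J), ∀ e ∈ H, e ∉ S → (e ≠ e₁ → e₁ ∈ S) →
      |P S - P (insert e S)| ≤ ε := by
    intro S e he heS h1
    have hK : ∀ e' ∈ H.erase e, ¬ e ⊆ e' := by
      intro e' he' hsub
      obtain ⟨hne, he'⟩ := Finset.mem_erase.1 he'
      exact hne (Finset.eq_of_subset_of_card_le hsub (by rw [hH e he, hH e' he'])).symm
    have hh : ∀ e' ∈ H.erase e, ∀ x, 0 ≤ m S e' x ∧ m S e' x ≤ 1 := by
      intro e' he' x
      obtain ⟨hne, he'⟩ := Finset.mem_erase.1 he'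
      by_cases hS : e' ∈ S
      · simpa only [m, hS, if_true] using hg'01 e' he' x
      · simp only [m, hS, if_false]
        refine hg01 e' he' ?_ x
        rintro rfl
        exact hS (h1 hne.symm)
    refine le_trans (le_of_eq ?_) (abs_avg_mul_prod_le (hdisc e he) (H.erase e) hK (m S) hh)
    congr 1
    simp only [P, avg]
    rw [← sub_div, ← Finset.sum_sub_distrib]
    congr 1
    refine Finset.sum_congr rfl fun x _ => ?_
    have hrest : ∏ e' ∈ H.erase e, m (insert e S) e' (restr e' x) =
        ∏ e' ∈ H.erase e, m S e' (restr e' x) := by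
      refine Finset.prod_congr rfl fun e' he' => ?_
      simp only [m, Finset.mem_insert, (Finset.mem_erase.1 he').1, false_or]
    rw [← Finset.mul_prod_erase H _ he, ← Finset.mul_prod_erase H (fun e' => m (insert e S) e' _) he,
      hrest, ← sub_mul]
    simp [m, heS]
  have tele : ∀ S : Finset (Finset J), S ⊆ H.erase e₁ →
      |P ∅ - P (insert e₁ S)| ≤ (S.card + 1) * ε := by
    intro S
    induction S using Finset.induction_on with
    | empty =>
      intro _
      simpa using step ∅ e₁ he₁ (by simp) (by simp)
    | insert k S hk ih =>
      intro hS
      obtain ⟨hk1, hkH⟩ := Finset.mem_erase.1 (hS (Finset.mem_insert_self _ _))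
      have h1 := ih ((Finset.subset_insert _ _).trans hS)
      have h2 := step (insert e₁ S) k hkH (by simp [hk1, hk]) (by simp)
      rw [Finset.insert_comm, Finset.card_insert_of_notMem hk]
      push_cast
      linarith [abs_sub_le (P ∅) (P (insert e₁ S)) (P (insert k (insert e₁ S)))]
  have h := tele (H.erase e₁) subset_rfl
  have hcard : ((H.erase e₁).card : ℝ) + 1 = H.card := by
    exact_mod_cast Finset.card_erase_add_one he₁
  rw [Finset.insert_erase he₁, hcard] at h
  have hP0 : P ∅ = avg (fun x : (j : J) → V j => ∏ e ∈ H, g e (restr e x)) := by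
    simp [P, m]
  have hP1 : P H = avg (fun x : (j : J) → V j => ∏ e ∈ H, g' e (restr e x)) := by
    simp only [P]
    congr 1
    funext x
    exact Finset.prod_congr rfl fun e he => by simp [m, he]
  rwa [hP0, hP1] at h
end

section
/- Let e be a finite nonempty set, let V_j be a finite nonempty set for each j ∈ e, and let V_e := ∏_{j∈e} V_j. Then for any function ν : V_e → ℝ and any collection of subsets B_f ⊆ V_f for f ∈ ∂e, the quantity E[∏_{ω∈{0,1}^e} (ν(x_e^{(ω)}) − 1) | x_e^{(0)}, x_e^{(1)} ∈ V_e] is nonnegative and |E[(ν(x_e) − 1)·∏_{f∈∂e} 1_{B_f}(x_f) | x_e ∈ V_e]| ≤ E[∏_{ω∈{0,1}^e} (ν(x_e^{(ω)}) − 1) | x_e^{(0)}, x_e^{(1)} ∈ V_e]^{1/2^{|e|}}. -/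
/-!
Iterated Cauchy–Schwarz, one coordinate at a time. Write `F = ν - 1` and let `b j` be the
indicator of `B j`, a function bounded by one which does not depend on the `j`-th coordinate.
For `S ⊆ ι` let `Q S = boxAvg F b S` be the average over `x, y` of
`∏_{T ⊆ S} (F · ∏_{j ∉ S} b j)(x_T)`, where `x_T` agrees with `y` on `T` and with `x` off `T`.
Then `Q ∅` is the average to be bounded and `Q univ` is the box-norm quantity.

If `i ∉ S`, then in `Q S` the factors `b i (x_T)` do not involve `x i`, so Cauchy–Schwarz in all
the other variables removes them and duplicates the variable `x i`; this gives
`(Q S) ^ 2 ≤ Q (insert i S)` (`boxAvg_sq_le`). In particular `Q S ≥ 0` for nonempty `S`, and by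
induction `|Q ∅| ^ (2 ^ |S|) ≤ |Q S|`; the theorem is the case `S = univ`.
-/

open Finset

/-! ### Averages -/

lemma avg_mono {α : Type*} [Fintype α] {f g : α → ℝ} (h : ∀ x, f x ≤ g x) : avg f ≤ avg g := by
  unfold avg
  gcongr
  exact h _

lemma avg_mul_left {α : Type*} [Fintype α] (c : ℝ) (f : α → ℝ) :
    avg (fun x => c * f x) = c * avg f := by
  unfold avg
  rw [← Finset.mul_sum, mul_div_assoc]

lemma avg_mul_right {α : Type*} [Fintype α] (c : ℝ) (f : α → ℝ) :
    avg (fun x => f x * c) = avg f * c := by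
  unfold avg
  rw [← Finset.sum_mul, div_mul_eq_mul_div]

lemma avg_const {α : Type*} [Fintype α] [Nonempty α] (c : ℝ) : avg (fun _ : α => c) = c := by
  unfold avg
  simp

lemma avg_prod {α β : Type*} [Fintype α] [Fintype β] (f : α × β → ℝ) :
    avg f = avg fun x => avg fun y => f (x, y) := by
  unfold avg
  rw [Fintype.sum_prod_type, ← Finset.sum_div, Fintype.card_prod, div_div, Nat.cast_mul,
    mul_comm (Fintype.card α : ℝ)]

lemma avg_comm {α β : Type*} [Fintype α] [Fintype β] (f : α → β → ℝ) :
    (avg fun x => avg fun y => f x y) = avg fun y => avg fun x => f x y := by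
  unfold avg
  rw [← Finset.sum_div, ← Finset.sum_div, Finset.sum_comm, div_right_comm]

lemma avg_sq_le {α : Type*} [Fintype α] [Nonempty α] (f : α → ℝ) :
    (avg f) ^ 2 ≤ avg fun x => f x ^ 2 := by
  unfold avg
  have hc : (0 : ℝ) < Fintype.card α := by exact_mod_cast Fintype.card_pos
  have h := sq_sum_le_card_mul_sum_sq (s := (Finset.univ : Finset α)) (f := f)
  rw [Finset.card_univ] at h
  rw [div_pow, div_le_div_iff₀ (by positivity) hc]
  nlinarith

section Box

variable {ι : Type} [Fintype ι] [DecidableEq ι] {V : ι → Type} [∀ j, Fintype (V j)]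

/-- Resampling one coordinate does not change an average over a product: the map
`(x, t) ↦ (update x i t, x i)` is an involution. -/
lemma avg_update [∀ j, Nonempty (V j)] (i : ι) (H : ((j : ι) → V j) → ℝ) :
    avg H = avg fun x => avg fun t : V i => H (Function.update x i t) := by
  have inv : Function.Involutive
      (fun p : ((j : ι) → V j) × V i => (Function.update p.1 i p.2, p.1 i)) := by
    rintro ⟨x, t⟩
    simp
  have h : (avg fun p : ((j : ι) → V j) × V i => H (Function.update p.1 i p.2)) =
      avg fun p : ((j : ι) → V j) × V i => H p.1 := by
    unfold avg
    congr 1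
    exact Equiv.sum_comp inv.toPerm (fun p => H p.1)
  rw [avg_prod, avg_prod] at h
  simp only [avg_const] at h
  exact h.symm

/-! ### The intermediate box averages -/

/-- The average over `x, y` of `∏_{T ⊆ S} (F · ∏_{j ∉ S} b j)(x_T)`, where `x_T` is `y` on `T`
and `x` off `T`: the form that appears once Cauchy–Schwarz has been applied in the coordinates
of `S`. -/
noncomputable def boxAvg (F : ((j : ι) → V j) → ℝ) (b : ι → ((j : ι) → V j) → ℝ)
    (S : Finset ι) : ℝ :=
  avg fun p : ((j : ι) → V j) × ((j : ι) → V j) =>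
    ∏ T ∈ S.powerset, (F (T.piecewise p.2 p.1) * ∏ j ∈ Sᶜ, b j (T.piecewise p.2 p.1))

/-- One application of Cauchy–Schwarz, in the coordinate `i`. -/
lemma boxAvg_sq_le [∀ j, Nonempty (V j)] (F : ((j : ι) → V j) → ℝ)
    (b : ι → ((j : ι) → V j) → ℝ) (hb : ∀ j x, |b j x| ≤ 1)
    (hu : ∀ j x t, b j (Function.update x j t) = b j x)
    (S : Finset ι) (i : ι) (hi : i ∉ S) :
    (boxAvg F b S) ^ 2 ≤ boxAvg F b (insert i S) := by
  set G : ((j : ι) → V j) → ℝ := fun x => F x * ∏ j ∈ (insert i S)ᶜ, b j x with hG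
  set K : ((j : ι) → V j) → ((j : ι) → V j) → ℝ :=
    fun x y => ∏ T ∈ S.powerset, G (T.piecewise y x) with hK
  set β : ((j : ι) → V j) → ((j : ι) → V j) → ℝ :=
    fun x y => ∏ T ∈ S.powerset, b i (T.piecewise y x) with hβ
  have hnot : ∀ T ∈ S.powerset, i ∉ T := fun T hT h => hi (Finset.mem_powerset.1 hT h)
  have hux : ∀ T ∈ S.powerset, ∀ (x y : (j : ι) → V j) (t : V i),
      T.piecewise y (Function.update x i t) = Function.update (T.piecewise y x) i t := by
    intro T hT x y t
    exact (Finset.update_piecewise_of_notMem _ _ _ (hnot T hT) _).symm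
  have hβu : ∀ x y (t : V i), β (Function.update x i t) y = β x y := by
    intro x y t
    refine Finset.prod_congr rfl fun T hT => ?_
    rw [hux T hT, hu]
  have hKy : ∀ x y (t : V i), K x (Function.update y i t) = K x y := by
    intro x y t
    refine Finset.prod_congr rfl fun T hT => ?_
    congr 1
    refine Finset.piecewise_congr _ (fun j hj => ?_) (fun _ _ => rfl)
    have hne : j ≠ i := by
      rintro rfl
      exact hnot T hT hj
    exact Function.update_of_ne hne _ _
  have hβ1 : ∀ x y, β x y ^ 2 ≤ 1 := by
    intro x y
    rw [sq_le_one_iff_abs_le_one, hβ, Finset.abs_prod]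
    exact Finset.prod_le_one (fun _ _ => abs_nonneg _) fun _ _ => hb _ _
  have hcompl : Sᶜ = insert i (insert i S)ᶜ := by
    ext j
    by_cases h : j = i <;> simp [h, hi]
  have hQ : boxAvg F b S = avg fun y => avg fun x => β x y * K x y := by
    rw [boxAvg, avg_prod, avg_comm]
    congr! 5 with y x
    rw [hβ, hK, ← Finset.prod_mul_distrib]
    refine Finset.prod_congr rfl fun T hT => ?_
    rw [hcompl, Finset.prod_insert (by simp)]
    simp only [hG]
    ring
  have hQ' : boxAvg F b (insert i S) =
      avg fun y => avg fun x => K x y * K (Function.update x i (y i)) y := by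
    rw [boxAvg, avg_prod, avg_comm]
    congr! 5 with y x
    rw [Finset.prod_powerset_insert hi]
    congr 1
    refine Finset.prod_congr rfl fun T hT => ?_
    rw [hux T hT, Finset.piecewise_insert]
  set M : ((j : ι) → V j) → ((j : ι) → V j) → ℝ :=
    fun x y => avg fun t : V i => K (Function.update x i t) y with hM
  have h1 : boxAvg F b S = avg fun y => avg fun x => β x y * M x y := by
    rw [hQ]
    congr! 2 with y
    rw [avg_update i]
    simp only [hβu, avg_mul_left, hM]
  have h2 : boxAvg F b (insert i S) = avg fun y => avg fun x => M x y ^ 2 := by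
    rw [hQ', avg_update i]
    -- after resampling `y i` and `x i`, the two factors depend on independent copies
    have h3 : ∀ y : (j : ι) → V j, (avg fun t : V i => avg fun x =>
        K x (Function.update y i t) * K (Function.update x i (Function.update y i t i))
          (Function.update y i t)) = avg fun x => M x y ^ 2 := by
      intro y
      simp only [hKy, Function.update_self]
      rw [avg_comm]
      simp only [avg_mul_left]
      rw [avg_update i]
      simp only [Function.update_idem, avg_mul_right, hM, sq]
    simp only [h3]
  rw [h1, h2]
  refine (avg_sq_le _).trans (avg_mono fun y => (avg_sq_le _).trans (avg_mono fun x => ?_))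
  rw [mul_pow]
  exact mul_le_of_le_one_left (sq_nonneg _) (hβ1 x y)

lemma abs_boxAvg_empty_pow_le [∀ j, Nonempty (V j)] (F : ((j : ι) → V j) → ℝ)
    (b : ι → ((j : ι) → V j) → ℝ) (hb : ∀ j x, |b j x| ≤ 1)
    (hu : ∀ j x t, b j (Function.update x j t) = b j x) (S : Finset ι) :
    |boxAvg F b ∅| ^ (2 ^ S.card) ≤ |boxAvg F b S| := by
  induction S using Finset.induction_on with
  | empty => simp
  | insert i S hi ih =>
    rw [Finset.card_insert_of_notMem hi, pow_succ, pow_mul]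
    calc (|boxAvg F b ∅| ^ 2 ^ S.card) ^ 2 ≤ |boxAvg F b S| ^ 2 := by gcongr
      _ = boxAvg F b S ^ 2 := sq_abs _
      _ ≤ boxAvg F b (insert i S) := boxAvg_sq_le F b hb hu S i hi
      _ ≤ _ := le_abs_self _

lemma boxAvg_univ_nonneg [Nonempty ι] [∀ j, Nonempty (V j)] (F : ((j : ι) → V j) → ℝ)
    (b : ι → ((j : ι) → V j) → ℝ) (hb : ∀ j x, |b j x| ≤ 1)
    (hu : ∀ j x t, b j (Function.update x j t) = b j x) :
    0 ≤ boxAvg F b Finset.univ := by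
  obtain ⟨i⟩ := ‹Nonempty ι›
  have h := boxAvg_sq_le F b hb hu (Finset.univ.erase i) i (Finset.notMem_erase _ _)
  rw [Finset.insert_erase (Finset.mem_univ i)] at h
  exact (sq_nonneg _).trans h

lemma boxAvg_empty [∀ j, Nonempty (V j)] (F : ((j : ι) → V j) → ℝ)
    (b : ι → ((j : ι) → V j) → ℝ) :
    boxAvg F b ∅ = avg fun x => F x * ∏ j, b j x := by
  rw [boxAvg, avg_prod]
  simp [avg_const]

lemma boxAvg_univ (F : ((j : ι) → V j) → ℝ) (b : ι → ((j : ι) → V j) → ℝ) :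
    boxAvg F b Finset.univ = avg fun p : ((j : ι) → V j) × ((j : ι) → V j) =>
      ∏ ω : ι → Bool, F (fun j => if ω j then p.2 j else p.1 j) := by
  rw [boxAvg]
  congr! 2 with p
  simp only [Finset.compl_univ, Finset.prod_empty, mul_one]
  -- subsets of `ι` correspond to their Boolean indicator functions
  refine Finset.prod_bij' (fun T _ j => decide (j ∈ T))
    (fun ω _ => Finset.univ.filter fun j => ω j = true) ?_ ?_ ?_ ?_ ?_
  · simp
  · simp
  · intro T _
    simp
  · intro ω _
    simp
  · intro T _
    congr 1
    funext j
    simp [Finset.piecewise]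

end Box

/-- **Gowers–Cauchy–Schwarz for the box norm.** Let `e` be a finite nonempty set (here a
finite nonempty type `ι`) and `V_j` finite nonempty sets for `j ∈ e`. For any
`ν : V_e → ℝ` and any sets `B_f ⊆ V_f` indexed by the faces `f = e ∖ {j}` of `e`, the
box-norm quantity `E[∏_{ω ∈ {0,1}^e} (ν(x_e^{(ω)}) - 1)]` is nonnegative and
`|E[(ν(x_e) - 1) ∏_{f ∈ ∂e} 1_{B_f}(x_f)]|
  ≤ E[∏_{ω ∈ {0,1}^e} (ν(x_e^{(ω)}) - 1)]^{1/2^{|e|}}`. -/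
theorem gowers_cauchy_schwarz (ι : Type) [Fintype ι] [DecidableEq ι] [Nonempty ι]
    (V : ι → Type) [∀ j, Fintype (V j)] [∀ j, Nonempty (V j)]
    (ν : ((j : ι) → V j) → ℝ)
    (B : (j : ι) → Set ((i : {i : ι // i ≠ j}) → V i.1)) :
    0 ≤ avg (fun x : ((j : ι) → V j) × ((j : ι) → V j) =>
        ∏ ω : ι → Bool, (ν (fun j => if ω j then x.2 j else x.1 j) - 1)) ∧
    |avg (fun x : (j : ι) → V j =>
        (ν x - 1) * ∏ j : ι,
          Set.indicator (B j) (fun _ => (1 : ℝ)) (fun i : {i : ι // i ≠ j} => x i.1))| ≤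
      (avg (fun x : ((j : ι) → V j) × ((j : ι) → V j) =>
        ∏ ω : ι → Bool, (ν (fun j => if ω j then x.2 j else x.1 j) - 1))) ^
          ((1 : ℝ) / 2 ^ Fintype.card ι) := by
  classical
  set b : ι → ((j : ι) → V j) → ℝ := fun j x =>
    Set.indicator (B j) (fun _ => (1 : ℝ)) (fun i : {i : ι // i ≠ j} => x i.1) with hbdef
  have hb : ∀ j x, |b j x| ≤ 1 := by
    intro j x
    simp only [hbdef, Set.indicator]
    split_ifs <;> simp
  have hu : ∀ j x t, b j (Function.update x j t) = b j x := by
    intro j x t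
    simp only [hbdef]
    congr 1
    funext i
    exact Function.update_of_ne i.2 _ _
  have h0 := boxAvg_univ_nonneg (fun x => ν x - 1) b hb hu
  have h1 := abs_boxAvg_empty_pow_le (fun x => ν x - 1) b hb hu Finset.univ
  rw [abs_of_nonneg h0, boxAvg_empty, boxAvg_univ, Finset.card_univ] at h1
  rw [boxAvg_univ] at h0
  refine ⟨h0, ?_⟩
  have h2 := Real.rpow_le_rpow (by positivity) h1
    (by positivity : (0 : ℝ) ≤ ((2 ^ Fintype.card ι : ℕ) : ℝ)⁻¹)
  rw [Real.pow_rpow_inv_natCast (abs_nonneg _) (by positivity)] at h2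
  rw [one_div]
  exact_mod_cast h2
end
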